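/- For every d ≥ 2 there exists a set of vectors α = (α₁,…,α_d) ∈ ℝ^d of full Hausdorff dimension d such that liminf_{q→∞} q·(log q)^{d−1}·(log log q)·‖qα₁‖⋯‖qα_d‖ > 0, where ‖x‖ is the distance from x to the nearest integer. -/

import Mathlib

/-!
Write `d = D + 1` and `α = (θ, α')` with `θ` real and `α' ∈ ℝ ^ D`, and put `phi t = (t + 2) ^ D log₂ (t + 2)`,
so that `phi (log₂ q)` is comparable with `(log q) ^ D log log q`. The dimension is trivially at most `d`. For the
lower bound one constructs a Cantor set of `θ`, over each such `θ` a Cantor set of `α'`, and adds the dimensions.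

*The first coordinate.* An interval of length `2⁻ᶠ` is divided into `2 ^ r` separated subintervals. Fractions `P / Q`
with `Q ^ 2` of order `2 ^ f` are far apart, so at most one subinterval contains a point very close to one of them,
and half of the subintervals may be kept (`normal_step`). On rare occasions one zooms instead into a short
interval next to a fraction `P / Q`, on which `phi (log₂ Q) Q ‖Q θ‖` is comparable with `1` (`special_step`). The
limit points (`theta_main`) satisfy `q ‖q θ‖ ≥ η / phi (log₂ q)`, and the `q` with `q ‖q θ‖` very small are, in each
window `[2 ^ e, 2 ^ (2 e))`, multiples of one denominator (`GoodTheta`). The special steps are needed because of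
the meaning of `liminf` for real sequences: when the sequence tends to infinity, which is not excluded otherwise,
the real `liminf` is `0` by convention. They ensure that it is bounded along a subsequence (`Tight`).

*The fibre.* For fixed `θ`, cubes of side `2⁻ᵉ` are subdivided along a sequence of levels `e` with increments of
order `log e`. A subcube of level `e''` is discarded if it contains a point at which the product
`q ‖q θ‖ ∏ ‖q α' i‖`, with each factor `‖q α' i‖` truncated below at `q 2⁻ᵉ''`, is less than
`c / (e'' ^ D log e'')` for some `q < 2 ^ e''`. The discarded subcubes of a cube are counted over two generations
`e < e' < e''` (`step`). For `q < 2 ^ e` one counts lattice points in a box in dimension `D + 2` (`box_count`): the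
number is comparable with the volume, because shrinking the box slightly leaves no nonzero lattice point, by the
lower bound already established at level `e` (`noncorner_empty`). The dyadic sizes of `q` and of the factors
contribute `D + 1` logarithms; one of them is absorbed by a geometric series, and since `q` is new for level `e''` one
coordinate has to be truncated already at level `e'`, which confines its size to `O(e'' - e') = O(log e)` values and
turns a further logarithm into an iterated one. This accounts for `e ^ D log e`. The denominators `q ≥ 2 ^ e` have
few dyadic types and are treated one by one, the good approximations to `θ` separately (`corner_count`,
`exc_count`). By averaging over two generations, half of the children can be retained at each level (`good_kids`), so
the fibre has dimension at least `s2` for each `s2 < D` (`fibre`).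

*Slicing.* The inverses of the parametrisations of both Cantor sets are Hölder with exponents `s1 < 1` and `s2 < D`,
whence the `(s1 + s2)`-dimensional Hausdorff measure is positive (`slicing`), and `s1 + s2` can be taken arbitrarily
close to `d`.
-/

/-- Distance from a real number to the nearest integer. -/
noncomputable def distInt (x : ℝ) : ℝ := |x - round x|

/-! ### Lattice points in a box -/

/-- Let `S` be a set of lattice points whose images under `y` lie in the unit cube and span. A crude
bound for the number of lattice points in a large multiple of the cube, in the form `m ^ n * V`, gives the
sharp bound `#S ≤ V`: choose a basis of the space among the images of `S` and, for each residue `r` mod `m`,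
a lattice point `w r` congruent to `r` of size at most `m * n`; the points `m * x + w r` with `x ∈ S` are
all distinct. -/
theorem count_span {ι : Type*} [Fintype ι] [DecidableEq ι] (y : (ι → ℤ) →+ (ι → ℝ))
    (S : Finset (ι → ℤ)) (hS : ∀ z ∈ S, ∀ i, |y z i| ≤ 1)
    (hspan : Submodule.span ℝ (y '' (S : Set (ι → ℤ))) = ⊤) (m : ℕ) (hm : 0 < m) (V : ℝ)
    (hV : ∀ T : Finset (ι → ℤ), (∀ z ∈ T, ∀ i, |y z i| ≤ m * (Fintype.card ι + 1)) →
      (T.card : ℝ) ≤ m ^ Fintype.card ι * V) :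
    (S.card : ℝ) ≤ V := by
  classical
  have hm' : (0 : ℝ) < m := by exact_mod_cast hm
  let b := Module.Basis.ofSpan (K := ℝ) (s := y '' (S : Set (ι → ℤ))) hspan.ge
  have hb : ∀ k, b k ∈ y '' (S : Set (ι → ℤ)) := fun k =>
    Module.Basis.ofSpan_subset hspan.ge ⟨k, rfl⟩
  let _ : Fintype _ := FiniteDimensional.fintypeBasisIndex b
  have hcard := Module.finrank_eq_card_basis b
  rw [Module.finrank_fintype_fun_eq_card] at hcard
  choose zs hzS hzb using hb
  let zr : (ι → Fin m) → (ι → ℤ) := fun r i => ((r i : ℕ) : ℤ)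
  -- a representative of the residue `r`, reduced modulo `m` times the lattice spanned by the chosen basis
  let w : (ι → Fin m) → (ι → ℤ) := fun r =>
    zr r - (m : ℤ) • ∑ k, ⌊b.repr (y (zr r)) k / m⌋ • zs k
  have hw : ∀ r i, |y (w r) i| ≤ m * Fintype.card ι := by
    intro r i
    have h1 : y (w r) = ∑ k, (b.repr (y (zr r)) k - m * ⌊b.repr (y (zr r)) k / m⌋) • b k := by
      simp only [w, map_sub, map_zsmul, map_sum, sub_smul, Finset.sum_sub_distrib, b.sum_repr, hzb]
      congr 1
      rw [Finset.smul_sum]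
      refine Finset.sum_congr rfl fun k _ => ?_
      rw [mul_smul, ← Int.cast_smul_eq_zsmul ℝ, ← Int.cast_smul_eq_zsmul ℝ]
      simp
    rw [h1, Finset.sum_apply, hcard, mul_comm, ← nsmul_eq_mul, ← Finset.card_univ]
    refine (Finset.abs_sum_le_sum_abs _ _).trans (Finset.sum_le_card_nsmul _ _ _ fun k _ => ?_)
    set c := b.repr (y (zr r)) k
    have h2 : |b k i| ≤ 1 := by rw [← hzb k]; exact hS _ (hzS k) i
    have h3 : 0 ≤ c - m * ⌊c / m⌋ := by
      have := Int.floor_le (c / m)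
      rw [le_div_iff₀ hm'] at this; linarith
    have h4 : c - m * ⌊c / m⌋ ≤ m := by
      have := Int.lt_floor_add_one (c / m)
      rw [div_lt_iff₀ hm'] at this; linarith
    simp only [Pi.smul_apply, smul_eq_mul, abs_mul, abs_of_nonneg h3]
    nlinarith [abs_nonneg (b k i)]
  let F : (ι → ℤ) × (ι → Fin m) → (ι → ℤ) := fun x => (m : ℤ) • x.1 + w x.2
  have hF : Function.Injective F := by
    rintro ⟨x, r⟩ ⟨x', r'⟩ h
    have hr : r = r' := by
      funext i
      have := congrFun h i
      simp only [F, w, zr, Pi.add_apply, Pi.sub_apply, Pi.smul_apply, smul_eq_mul] at this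
      apply Fin.ext
      have h1 := (r i).2
      have h2 := (r' i).2
      have h3 : (((r i : ℕ) : ℤ)) % m = (((r' i : ℕ) : ℤ)) % m := by
        apply Int.ModEq.eq
        apply (Int.modEq_iff_dvd).2
        refine ⟨(x i - (∑ k, ⌊b.repr (y (zr r)) k / m⌋ • zs k) i) -
            (x' i - (∑ k, ⌊b.repr (y (zr r')) k / m⌋ • zs k) i), ?_⟩
        simp only [zr]
        linear_combination -this
      rw [Int.emod_eq_of_lt (by positivity) (by exact_mod_cast h1),
        Int.emod_eq_of_lt (by positivity) (by exact_mod_cast h2)] at h3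
      exact_mod_cast h3
    subst hr
    have h1 : (m : ℤ) • x = (m : ℤ) • x' := add_right_cancel h
    have : x = x' := by
      funext i
      have := congrFun h1 i
      simp only [Pi.smul_apply, smul_eq_mul] at this
      exact mul_left_cancel₀ (by exact_mod_cast hm.ne') this
    rw [this]
  have hT := hV ((S ×ˢ (Finset.univ : Finset (ι → Fin m))).image F) (by
    intro z hz i
    obtain ⟨⟨x, r⟩, hx, rfl⟩ := Finset.mem_image.1 hz
    have hx' := (Finset.mem_product.1 hx).1
    have h1 : y (F (x, r)) i = m * y x i + y (w r) i := by
      simp only [F, map_add, map_zsmul, Pi.add_apply, Pi.smul_apply]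
      simp
    rw [h1]
    refine (abs_add_le _ _).trans ?_
    rw [abs_mul, abs_of_pos hm']
    have := hw r i
    have h2 := hS x hx' i
    nlinarith)
  rw [Finset.card_image_of_injective _ hF, Finset.card_product] at hT
  simp only [Finset.card_univ, Fintype.card_fun, Fintype.card_fin] at hT
  push_cast at hT
  rw [mul_comm] at hT
  exact le_of_mul_le_mul_left hT (by positivity)

/-- If the images of `S` lie in a hyperplane, then the coordinate with the largest coefficient in its
equation is controlled by the others, so the pigeonhole principle in the remaining `n - 1` coordinates yields
two points of `S` that are close in every coordinate. -/
theorem count_hyper {ι : Type*} [Fintype ι] [DecidableEq ι] (y : (ι → ℤ) →+ (ι → ℝ))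
    (S : Finset (ι → ℤ)) (hS : ∀ z ∈ S, ∀ i, |y z i| ≤ 1)
    (hspan : Submodule.span ℝ (y '' (S : Set (ι → ℤ))) ≠ ⊤) (h : ℕ) (hh : 0 < h)
    (hcard : (h + 1) ^ (Fintype.card ι - 1) < S.card) :
    ∃ z ∈ S, ∃ z' ∈ S, z ≠ z' ∧ ∀ i, |y (z - z') i| ≤ 2 * Fintype.card ι / h := by
  classical
  have hh' : (0 : ℝ) < h := by exact_mod_cast hh
  obtain ⟨f, hf0, hf⟩ := Submodule.exists_le_ker_of_lt_top _ (lt_top_iff_ne_top.2 hspan)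
  let a : ι → ℝ := fun i => f (Pi.single i 1)
  have hfa : ∀ v : ι → ℝ, f v = ∑ i, a i * v i := by
    intro v
    conv_lhs => rw [← Finset.univ_sum_single v]
    rw [map_sum]
    refine Finset.sum_congr rfl fun i _ => ?_
    have : (Pi.single i (v i) : ι → ℝ) = v i • Pi.single i 1 := by
      rw [← Pi.single_smul]; simp
    rw [this, map_smul, smul_eq_mul, mul_comm]
  have hne : Nonempty ι := by
    by_contra hcon
    rw [not_nonempty_iff] at hcon
    exact hf0 (LinearMap.ext fun v => by rw [hfa]; simp)
  obtain ⟨i0, -, hi0⟩ := Finset.exists_max_image (Finset.univ : Finset ι) (fun i => |a i|)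
    Finset.univ_nonempty
  have ha0 : 0 < |a i0| := by
    rw [abs_pos]
    intro h0
    apply hf0
    refine LinearMap.ext fun v => ?_
    rw [hfa]
    refine Finset.sum_eq_zero fun i hi => ?_
    have := hi0 i hi
    rw [h0, abs_zero] at this
    rw [abs_nonpos_iff.1 this, zero_mul]
  -- `i0` has the largest coefficient; pigeonhole on the other coordinates
  let cell : (ι → ℤ) → ({i // i ≠ i0} → ℕ) := fun z i => ⌊(y z i + 1) * h / 2⌋₊
  have hmaps : Set.MapsTo cell S (Fintype.piFinset fun _ : {i // i ≠ i0} => Finset.range (h + 1)) := by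
    intro z hz
    rw [Finset.mem_coe, Fintype.mem_piFinset]
    intro i
    rw [Finset.mem_range, Nat.lt_succ_iff]
    apply Nat.floor_le_of_le
    have := (abs_le.1 (hS z hz i)).2
    nlinarith
  have hc : (Fintype.piFinset fun _ : {i // i ≠ i0} => Finset.range (h + 1)).card < S.card := by
    rw [Fintype.card_piFinset]
    simpa [Fintype.card_subtype_compl] using hcard
  obtain ⟨z, hz, z', hz', hzz, heq⟩ := Finset.exists_ne_map_eq_of_card_lt_of_maps_to hc hmaps
  refine ⟨z, hz, z', hz', hzz, ?_⟩
  have hcard1 : (1 : ℝ) ≤ Fintype.card ι := by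
    exact_mod_cast Fintype.card_pos
  have hsmall : ∀ i, i ≠ i0 → |y (z - z') i| ≤ 2 / h := by
    intro i hi
    have h1 := congrFun heq ⟨i, hi⟩
    simp only [cell] at h1
    have hp : ∀ w ∈ S, 0 ≤ (y w i + 1) * h / 2 := by
      intro w hw
      have := (abs_le.1 (hS w hw i)).1
      have : 0 ≤ y w i + 1 := by linarith
      positivity
    have h2 := Nat.floor_le (hp z hz)
    have h3 := Nat.lt_floor_add_one ((y z i + 1) * h / 2)
    have h4 := Nat.floor_le (hp z' hz')
    have h5 := Nat.lt_floor_add_one ((y z' i + 1) * h / 2)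
    rw [h1] at h2 h3
    rw [map_sub, Pi.sub_apply, le_div_iff₀ hh']
    have e : |y z i - y z' i| * h = |(y z i - y z' i) * h| := by rw [abs_mul, abs_of_pos hh']
    rw [e, abs_le]
    constructor <;> nlinarith
  intro i
  by_cases hi : i = i0
  · subst hi
    have h0 : f (y (z - z')) = 0 := by
      have e1 : f (y z) = 0 := hf (Submodule.subset_span ⟨z, hz, rfl⟩)
      have e2 : f (y z') = 0 := hf (Submodule.subset_span ⟨z', hz', rfl⟩)
      rw [map_sub, map_sub, e1, e2, sub_zero]
    rw [hfa, ← Finset.add_sum_erase _ _ (Finset.mem_univ i)] at h0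
    have h1 : |a i| * |y (z - z') i| ≤ |a i| * (2 * Fintype.card ι / h) := by
      rw [← abs_mul, eq_neg_of_add_eq_zero_left h0, abs_neg]
      refine (Finset.abs_sum_le_sum_abs _ _).trans ?_
      have : ∀ k ∈ Finset.univ.erase i, |a k * y (z - z') k| ≤ |a i| * (2 / h) := by
        intro k hk
        rw [abs_mul]
        exact mul_le_mul (hi0 k (Finset.mem_univ k)) (hsmall k (Finset.ne_of_mem_erase hk))
          (abs_nonneg _) (abs_nonneg _)
      refine (Finset.sum_le_card_nsmul _ _ _ this).trans ?_
      rw [nsmul_eq_mul]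
      have h2 : (((Finset.univ.erase i).card : ℕ) : ℝ) ≤ Fintype.card ι := by
        exact_mod_cast Finset.card_le_univ _
      have : |a i| * (2 * Fintype.card ι / h) = Fintype.card ι * (|a i| * (2 / h)) := by ring
      rw [this]
      exact mul_le_mul_of_nonneg_right h2 (by positivity)
    exact le_of_mul_le_mul_left h1 ha0
  · refine (hsmall i hi).trans ?_
    rw [div_le_div_iff_of_pos_right hh']
    linarith

theorem int_count (A : Finset ℤ) (x r : ℝ) (h : ∀ p ∈ A, |x - p| ≤ r) (hr : 0 ≤ r) :
    (A.card : ℝ) ≤ 2 * r + 1 := by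
  have hsub : A ⊆ Finset.Icc ⌈x - r⌉ ⌊x + r⌋ := by
    intro p hp
    have := abs_le.1 (h p hp)
    rw [Finset.mem_Icc, Int.ceil_le, Int.le_floor]
    constructor <;> linarith
  have h1 := Finset.card_le_card hsub
  rw [Int.card_Icc] at h1
  have h2 : ((⌊x + r⌋ + 1 - ⌈x - r⌉).toNat : ℝ) ≤ 2 * r + 1 := by
    rcases le_total 0 (⌊x + r⌋ + 1 - ⌈x - r⌉) with h0 | h0
    · have : (((⌊x + r⌋ + 1 - ⌈x - r⌉).toNat : ℤ) : ℝ) = ((⌊x + r⌋ + 1 - ⌈x - r⌉ : ℤ) : ℝ) := by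
        rw [Int.toNat_of_nonneg h0]
      rw [Int.cast_natCast] at this
      rw [this]
      push_cast
      have := Int.floor_le (x + r)
      have := Int.le_ceil (x - r)
      linarith
    · rw [Int.toNat_of_nonpos h0]; push_cast; linarith
  exact le_trans (by exact_mod_cast h1) h2

theorem pi_count {ι : Type*} [Fintype ι] (T : Finset (ι → ℤ)) (R : ι → ℝ)
    (h : ∀ i, ∀ A : Finset ℤ, (∀ p ∈ A, ∃ z ∈ T, z i = p) → (A.card : ℝ) ≤ R i) :
    (T.card : ℝ) ≤ ∏ i, R i := by
  classical
  have hsub : T ⊆ Fintype.piFinset fun i => T.image (fun z => z i) := by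
    intro z hz
    rw [Fintype.mem_piFinset]
    exact fun i => Finset.mem_image_of_mem _ hz
  have h1 := Finset.card_le_card hsub
  rw [Fintype.card_piFinset] at h1
  refine (show (T.card : ℝ) ≤ ∏ i, ((T.image (fun z => z i)).card : ℝ) by exact_mod_cast h1).trans ?_
  refine Finset.prod_le_prod (fun _ _ => by positivity) fun i _ => h i _ ?_
  intro p hp
  exact Finset.mem_image.1 hp

theorem fiber_count {α β : Type*} [DecidableEq β] (T : Finset α) (f : α → β) (R : ℝ)
    (h : ∀ b ∈ T.image f, ((T.filter (fun a => f a = b)).card : ℝ) ≤ R) :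
    (T.card : ℝ) ≤ (T.image f).card * R := by
  rw [Finset.card_eq_sum_card_image f T]
  push_cast
  refine (Finset.sum_le_card_nsmul _ _ _ h).trans ?_
  rw [nsmul_eq_mul]

/-- Product bound for lattice points `(q, p)` with `|q| ≤ Q` and `|q β i - p i| ≤ B i`; it has the
order of the volume only when all side lengths are at least of order one. -/
theorem trivial_count {N : ℕ} (β : Fin N → ℝ) (Q : ℝ) (B : Fin N → ℝ) (hQ : 0 ≤ Q)
    (hB : ∀ i, 0 ≤ B i) (T : Finset (Option (Fin N) → ℤ)) (h0 : ∀ z ∈ T, |(z none : ℝ)| ≤ Q)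
    (h1 : ∀ z ∈ T, ∀ i, |(z none : ℝ) * β i - z (some i)| ≤ B i) :
    (T.card : ℝ) ≤ (2 * Q + 1) * ∏ i, (2 * B i + 1) := by
  classical
  have hp : 0 ≤ ∏ i, (2 * B i + 1) := Finset.prod_nonneg fun i _ => by linarith [hB i]
  refine (fiber_count T (fun z => z none) (∏ i, (2 * B i + 1)) ?_).trans ?_
  · intro q _
    let T' := (T.filter (fun z => z none = q)).image (fun z => fun i => z (some i))
    have : (T.filter (fun z => z none = q)).card = T'.card := by
      rw [Finset.card_image_of_injOn]
      intro z hz z' hz' h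
      simp only [Finset.coe_filter, Set.mem_ofPred_eq] at hz hz'
      funext o
      cases o with
      | none => rw [hz.2, hz'.2]
      | some i => exact congrFun h i
    rw [this]
    apply pi_count
    intro i A hA
    refine int_count A (q * β i) _ ?_ (hB i)
    intro p hp
    obtain ⟨z, hz, rfl⟩ := hA p hp
    obtain ⟨z', hz', rfl⟩ := Finset.mem_image.1 hz
    rw [Finset.mem_filter] at hz'
    rw [← hz'.2]
    exact h1 z' hz'.1 i
  · refine mul_le_mul_of_nonneg_right ?_ hp
    refine int_count _ 0 Q ?_ hQ
    intro p hp
    obtain ⟨z, hz, rfl⟩ := Finset.mem_image.1 hp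
    simpa using h0 z hz

/-- Trichotomy for a set `S` of lattice points `(q, p)` with `|q| ≤ Q` and `|q β i - p i| ≤ B i`:
its size is at most a constant times the volume of the box, or at most `(h + 1) ^ N`, or two of its points
differ by a vector in the box shrunk by the factor `2 (N + 1) / h`. The coordinate `none` holds `q`. -/
theorem box_count {N : ℕ} (β : Fin N → ℝ) (Q : ℝ) (B : Fin N → ℝ) (hQ : 0 < Q)
    (hB : ∀ i, 0 < B i) (h : ℕ) (hh : 0 < h)
    (S : Finset (Option (Fin N) → ℤ)) (h0 : ∀ z ∈ S, |(z none : ℝ)| ≤ Q)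
    (h1 : ∀ z ∈ S, ∀ i, |(z none : ℝ) * β i - z (some i)| ≤ B i) :
    (S.card : ℝ) ≤ (2 * N + 5) ^ (N + 1) * (Q * ∏ i, B i) ∨ S.card ≤ (h + 1) ^ N ∨
    ∃ z ∈ S, ∃ z' ∈ S, z ≠ z' ∧ |((z - z') none : ℝ)| ≤ (2 * (N + 1) / h) * Q ∧
      ∀ i, |((z - z') none : ℝ) * β i - (z - z') (some i)| ≤ (2 * (N + 1) / h) * B i := by
  classical
  let y : (Option (Fin N) → ℤ) →+ (Option (Fin N) → ℝ) :=
    { toFun := fun z o => match o with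
        | none => z none / Q
        | some i => (z none * β i - z (some i)) / B i
      map_zero' := by funext o; cases o <;> simp
      map_add' := by
        intro z z'; funext o; cases o
        · simp; ring
        · simp; ring }
  have y0 : ∀ z, y z none = z none / Q := fun z => rfl
  have y1 : ∀ z i, y z (some i) = (z none * β i - z (some i)) / B i := fun z i => rfl
  have hcard : Fintype.card (Option (Fin N)) = N + 1 := by simp
  have key0 : ∀ z (c : ℝ), |y z none| ≤ c ↔ |(z none : ℝ)| ≤ c * Q := by
    intro z c
    rw [y0, abs_div, abs_of_pos hQ, div_le_iff₀ hQ]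
  have key1 : ∀ z (c : ℝ) i, |y z (some i)| ≤ c ↔ |(z none : ℝ) * β i - z (some i)| ≤ c * B i := by
    intro z c i
    rw [y1, abs_div, abs_of_pos (hB i), div_le_iff₀ (hB i)]
  have hS : ∀ z ∈ S, ∀ o, |y z o| ≤ 1 := by
    intro z hz o
    cases o with
    | none => rw [key0, one_mul]; exact h0 z hz
    | some i => rw [key1, one_mul]; exact h1 z hz i
  by_cases hspan : Submodule.span ℝ (y '' (S : Set (Option (Fin N) → ℤ))) = ⊤
  · left
    -- the dilation `m` makes every side length at least one, where the product bound is of the order of the volume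
    obtain ⟨m, hm⟩ := exists_nat_ge (1 / Q + ∑ i, 1 / B i + 1)
    have hsum : 0 ≤ ∑ i, 1 / B i := Finset.sum_nonneg fun i _ => (one_div_pos.2 (hB i)).le
    have hQ' : 0 < 1 / Q := one_div_pos.2 hQ
    have hm0 : (0 : ℝ) < m := by linarith
    have hmQ : 1 ≤ m * Q := by
      rw [← div_le_iff₀ hQ]; linarith
    have hmB : ∀ i, 1 ≤ m * B i := by
      intro i
      rw [← div_le_iff₀ (hB i)]
      have := Finset.single_le_sum (f := fun i => 1 / B i) (fun i _ => (one_div_pos.2 (hB i)).le)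
        (Finset.mem_univ i)
      linarith
    refine count_span y S hS hspan m (by exact_mod_cast hm0) _ ?_
    intro T hT
    rw [hcard] at hT ⊢
    have := trivial_count β (m * (N + 2) * Q) (fun i => m * (N + 2) * B i) (by positivity)
      (fun i => by have := hB i; positivity) T
      (fun z hz => by
        have := (key0 z _).1 (hT z hz none); push_cast at this; convert this using 2; ring)
      (fun z hz i => by
        have := (key1 z _ i).1 (hT z hz (some i)); push_cast at this; convert this using 2; ring)
    refine this.trans ?_
    have e1 : 2 * (m * (N + 2) * Q) + 1 ≤ (2 * N + 5) * (m * Q) := by nlinarith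
    have e2 : ∏ i, (2 * (m * (N + 2) * B i) + 1) ≤ ∏ i, ((2 * N + 5) * (m * B i)) :=
      Finset.prod_le_prod (fun i _ => by have := hB i; positivity)
        fun i _ => by nlinarith [hmB i]
    refine (mul_le_mul e1 e2 (Finset.prod_nonneg fun i _ => by have := hB i; positivity)
      (by positivity)).trans (le_of_eq ?_)
    rw [Finset.prod_mul_distrib, Finset.prod_mul_distrib]
    simp only [Finset.prod_const, Finset.card_univ, Fintype.card_fin]
    ring
  · right
    by_cases hc : S.card ≤ (h + 1) ^ N
    · left; exact hc
    · right
      have := count_hyper y S hS hspan h hh (by rw [hcard]; simpa using hc)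
      obtain ⟨z, hz, z', hz', hne, hd⟩ := this
      refine ⟨z, hz, z', hz', hne, ?_, ?_⟩
      · have := (key0 _ _).1 (hd none)
        rw [hcard] at this; push_cast at this ⊢; exact this
      · intro i
        have := (key1 _ _ i).1 (hd (some i))
        rw [hcard] at this; push_cast at this ⊢; exact this

/-! ### Subcubes hit by rational points -/

/-- Inside the cube with corner `a` and side `L`, the subcube `ν` (corner `a + 2 l ν`, side `l`) contains
a point `x` with `|q x i - p i| ≤ b i` for all `i`. The field `wide` says that such a slab is at least as
thick as the subcube. -/
structure Hit {D : ℕ} (a : Fin D → ℝ) (L l : ℝ) (q : ℤ) (b : Fin D → ℝ) (p ν : Fin D → ℤ) : Prop where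
  nonneg : ∀ i, 0 ≤ ν i
  le : ∀ i, (2 * (ν i : ℝ) + 1) * l ≤ L
  wide : ∀ i, q * l ≤ b i
  hit : ∀ i, ∃ x : ℝ, a i + 2 * l * ν i ≤ x ∧ x ≤ a i + 2 * l * ν i + l ∧ |q * x - p i| ≤ b i

theorem Hit.box {D : ℕ} {a : Fin D → ℝ} {L l : ℝ} {q : ℤ} {b : Fin D → ℝ} {p ν : Fin D → ℤ}
    (h : Hit a L l q b p ν) (hl : 0 < l) (hq : 0 ≤ q) (i : Fin D) :
    |q * a i - p i| ≤ b i + q * L := by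
  obtain ⟨x, h1, h2, h3⟩ := h.hit i
  have h4 := h.le i
  have hν : (0 : ℝ) ≤ ν i := by exact_mod_cast h.nonneg i
  have hq' : (0 : ℝ) ≤ q := by exact_mod_cast hq
  have h5 : |(q : ℝ) * (x - a i)| ≤ q * L := by
    rw [abs_mul, abs_of_nonneg hq']
    refine mul_le_mul_of_nonneg_left ?_ hq'
    rw [abs_le]
    constructor <;> nlinarith [mul_nonneg hl.le hν]
  have : (q : ℝ) * a i - p i = (q * x - p i) - q * (x - a i) := by ring
  rw [this]
  exact (abs_sub _ _).trans (add_le_add h3 h5)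

/-- For a fixed rational point `p / q`, the number of subcubes that it hits: in each direction either
the width of the slab or the side of the ambient cube limits the choice. -/
theorem hit_count {D : ℕ} (a : Fin D → ℝ) (L l : ℝ) (q : ℤ) (b : Fin D → ℝ) (p : Fin D → ℤ)
    (K : ℝ) (hK : 0 < K) (hKq : K ≤ q) (hl : 0 < l) (hlL : l ≤ L) (hb0 : ∀ i, 0 ≤ b i)
    (T : Finset (Fin D → ℤ)) (hT : ∀ ν ∈ T, Hit a L l q b p ν) :
    (T.card : ℝ) ≤ ∏ i, (3 * min (b i / (K * l)) (L / l)) := by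
  apply pi_count
  intro i A hA
  have hL : 0 < L := by linarith
  have hq : (0 : ℝ) < q := by linarith
  have hbi := hb0 i
  rcases A.eq_empty_or_nonempty with rfl | ⟨ν0, hν0⟩
  · simp only [Finset.card_empty, Nat.cast_zero]
    positivity
  · have hb : q * l ≤ b i := by
      obtain ⟨ν, hν, -⟩ := hA ν0 hν0
      exact (hT ν hν).wide i
    rw [mul_min_of_nonneg _ _ (by norm_num)]
    refine le_min ?_ ?_
    · have h1 := int_count A ((p i / q - a i - l / 2) / (2 * l)) ((b i / q + l / 2) / (2 * l)) (by
        intro v hv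
        obtain ⟨ν, hν, rfl⟩ := hA v hv
        obtain ⟨x, h1, h2, h3⟩ := (hT ν hν).hit i
        have h4 : |x - p i / q| ≤ b i / q := by
          rw [le_div_iff₀ hq]
          have : |x - p i / q| * q = |q * x - p i| := by
            conv_lhs => rw [← abs_of_pos hq, ← abs_mul, abs_of_pos hq]
            congr 1; field_simp
          rw [this]; exact h3
        have h5 : (p i / q - a i - l / 2) / (2 * l) - (ν i : ℝ) =
            (p i / q - a i - l / 2 - 2 * l * ν i) / (2 * l) := by field_simp
        rw [h5, abs_div, abs_of_pos (show 0 < 2 * l by positivity)]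
        refine div_le_div_of_nonneg_right ?_ (by positivity)
        have h6 := abs_le.1 h4
        rw [abs_le]
        constructor <;> linarith) (by positivity)
      have e1 : 2 * ((b i / q + l / 2) / (2 * l)) + 1 = b i / (q * l) + 3 / 2 := by
        field_simp; ring
      have e2 : 1 ≤ b i / (q * l) := by rw [le_div_iff₀ (by positivity)]; linarith
      have e3 : b i / (q * l) ≤ b i / (K * l) := by gcongr
      linarith
    · have h1 := int_count A (L / (4 * l)) (L / (4 * l)) (by
        intro v hv
        obtain ⟨ν, hν, rfl⟩ := hA v hv
        have h2 := (hT ν hν).le i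
        have h3 : (0 : ℝ) ≤ ν i := by exact_mod_cast (hT ν hν).nonneg i
        have h4 : (ν i : ℝ) ≤ 2 * (L / (4 * l)) := by
          have : 2 * (L / (4 * l)) = L / (2 * l) := by field_simp; norm_num
          rw [this, le_div_iff₀ (by positivity)]
          nlinarith
        rw [abs_le]; constructor <;> linarith) (by positivity)
      have e1 : 2 * (L / (4 * l)) = (L / l) / 2 := by field_simp; norm_num
      have e2 : 1 ≤ L / l := by rw [le_div_iff₀ hl]; linarith
      linarith

/-- The number of subcubes hit is bounded by the number of rational points involved times the number
of subcubes that one of them can hit. -/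
theorem hit_points {D : ℕ} (a : Fin D → ℝ) (L l : ℝ) (b : Fin D → ℝ)
    (K : ℝ) (hK : 0 < K) (hl : 0 < l) (hlL : l ≤ L) (hb0 : ∀ i, 0 ≤ b i)
    (T : Finset (Fin D → ℤ)) (z : (Fin D → ℤ) → (Option (Fin (D + 1)) → ℤ))
    (hKz : ∀ ν ∈ T, K ≤ z ν none)
    (hT : ∀ ν ∈ T, Hit a L l (z ν none) b (fun i => z ν (some i.succ)) ν) :
    (T.card : ℝ) ≤ (T.image z).card * ∏ i, (3 * min (b i / (K * l)) (L / l)) := by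
  classical
  apply fiber_count
  intro w hw
  obtain ⟨ν0, hν0, rfl⟩ := Finset.mem_image.1 hw
  refine hit_count a L l (z ν0 none) b (fun i => z ν0 (some i.succ)) K hK (hKz ν0 hν0) hl hlL hb0 _ ?_
  intro ν hν
  rw [Finset.mem_filter] at hν
  have := hT ν hν.1
  rw [hν.2] at this
  exact this

/-- The number of subcubes hit by rational points with `q ≈ 2 ^ k` and `‖q θ‖ ≤ b0`, when the slabs
thickened by the ambient cube contain no nonzero lattice vector after shrinking by `2 (D + 2) / h`. The lattice
points are counted by `box_count` in dimension `D + 2`, and the subcubes by `hit_points`. -/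
theorem noncorner_type {D : ℕ} (θ : ℝ) (a : Fin D → ℝ) (L l b0 : ℝ) (b : Fin D → ℝ) (k : ℕ)
    (hl : 0 < l) (hlL : l ≤ L) (hb0 : 0 < b0) (hb : ∀ i, 0 < b i) (h : ℕ) (hh : 0 < h)
    (hhW : (h : ℝ) ^ (D + 1) ≤ 2 ^ (k + 1) * b0 * ∏ i, (b i + 2 ^ (k + 1) * L))
    (hempty : ∀ z : Option (Fin (D + 1)) → ℤ, |(z none : ℝ)| ≤ (2 * (D + 2) / h) * 2 ^ (k + 1) →
      |(z none : ℝ) * θ - z (some 0)| ≤ (2 * (D + 2) / h) * b0 →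
      (∀ i : Fin D, |(z none : ℝ) * a i - z (some i.succ)| ≤ (2 * (D + 2) / h) * (b i + 2 ^ (k + 1) * L)) →
      z = 0)
    (T : Finset (Fin D → ℤ)) (z : (Fin D → ℤ) → (Option (Fin (D + 1)) → ℤ))
    (hz1 : ∀ ν ∈ T, (2 : ℝ) ^ k ≤ z ν none) (hz2 : ∀ ν ∈ T, (z ν none : ℝ) ≤ 2 ^ (k + 1))
    (hz0 : ∀ ν ∈ T, |(z ν none : ℝ) * θ - z ν (some 0)| ≤ b0)
    (hT : ∀ ν ∈ T, Hit a L l (z ν none) b (fun i => z ν (some i.succ)) ν) :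
    (T.card : ℝ) ≤ (2 * D + 7) ^ (D + 2) * 2 * 9 ^ D * (2 ^ k * b0 * ∏ i, b i) * (L / l) ^ D := by
  classical
  have hL : 0 < L := by linarith
  set W : ℝ := 2 ^ (k + 1) * b0 * ∏ i, (b i + 2 ^ (k + 1) * L) with hW
  have hpos : ∀ ν ∈ T, 0 ≤ z ν none := by
    intro ν hν
    have h1 := hz1 ν hν
    have : (0 : ℝ) ≤ z ν none := le_trans (by positivity) h1
    exact_mod_cast this
  have hcnt : ((T.image z).card : ℝ) ≤ (2 * D + 7) ^ (D + 2) * W := by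
    have hWprod : W = 2 ^ (k + 1) * ∏ i, (Fin.cons b0 (fun i => b i + 2 ^ (k + 1) * L) : Fin (D + 1) → ℝ) i := by
      rw [Fin.prod_univ_succ]
      simp only [Fin.cons_zero, Fin.cons_succ]
      rw [hW]; ring
    have hh1 : (1 : ℝ) ≤ h := by exact_mod_cast hh
    rcases box_count (N := D + 1) (Fin.cons θ a) (2 ^ (k + 1)) (Fin.cons b0 (fun i => b i + 2 ^ (k + 1) * L))
      (by positivity) (by
        intro i; refine Fin.cases ?_ (fun i => ?_) i
        · simpa using hb0
        · simp only [Fin.cons_succ]; have := hb i; positivity) h hh (T.image z) (by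
        intro w hw
        obtain ⟨ν, hν, rfl⟩ := Finset.mem_image.1 hw
        have : (0 : ℝ) ≤ z ν none := by exact_mod_cast hpos ν hν
        rw [abs_of_nonneg this]
        exact hz2 ν hν) (by
        intro w hw i
        obtain ⟨ν, hν, rfl⟩ := Finset.mem_image.1 hw
        refine Fin.cases ?_ (fun i => ?_) i
        · simpa using hz0 ν hν
        · simp only [Fin.cons_succ]
          refine ((hT ν hν).box hl (hpos ν hν) i).trans ?_
          gcongr
          exact hz2 ν hν) with h1 | h1 | ⟨w, hw, w', hw', hne, h1, h2⟩
    · rw [← hWprod] at h1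
      refine h1.trans (le_of_eq ?_)
      push_cast; ring
    · have h2 : ((T.image z).card : ℝ) ≤ (h + 1) ^ (D + 1) := by exact_mod_cast h1
      have h3 : ((h : ℝ) + 1) ^ (D + 1) ≤ (2 * h) ^ (D + 1) := by gcongr; linarith
      rw [mul_pow] at h3
      have h4 : (2 : ℝ) ^ (D + 1) ≤ (2 * D + 7) ^ (D + 2) := by
        calc (2 : ℝ) ^ (D + 1) ≤ (2 * D + 7) ^ (D + 1) := by
              gcongr; have : (0 : ℝ) ≤ D := by positivity
              linarith
          _ ≤ _ := by
              apply pow_le_pow_right₀ _ (by omega)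
              have : (0 : ℝ) ≤ D := by positivity
              linarith
      calc _ ≤ _ := h2
        _ ≤ _ := h3
        _ ≤ _ := mul_le_mul h4 hhW (by positivity) (by positivity)
    · exfalso
      apply hne
      rw [← sub_eq_zero]
      push_cast at h1 h2
      have e : ((D : ℝ) + 1 + 1) = D + 2 := by ring
      rw [e] at h1 h2
      apply hempty
      · simpa using h1
      · simpa using h2 0
      · intro i; simpa using h2 i.succ
  refine (hit_points a L l b (2 ^ k) (by positivity) hl hlL (fun i => (hb i).le) T z hz1 hT).trans ?_
  refine (mul_le_mul_of_nonneg_right hcnt (Finset.prod_nonneg fun i _ => by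
    have := hb i; positivity)).trans ?_
  rw [hW]
  have hfac : ∀ i, (b i + 2 ^ (k + 1) * L) * (3 * min (b i / (2 ^ k * l)) (L / l)) ≤ 9 * b i * (L / l) := by
    intro i
    have hbi := hb i
    rcases le_total (b i) (2 ^ k * L) with hc | hc
    · calc _ ≤ (2 ^ k * L + 2 ^ (k + 1) * L) * (3 * (b i / (2 ^ k * l))) := by
            gcongr; exact min_le_left _ _
        _ = _ := by field_simp; ring
    · calc _ ≤ (b i + 2 * b i) * (3 * (L / l)) := by
            have e1 : b i + 2 ^ (k + 1) * L ≤ b i + 2 * b i := by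
              rw [pow_succ]; linarith
            have e2 := min_le_right (b i / (2 ^ k * l)) (L / l)
            have e3 : 0 ≤ min (b i / (2 ^ k * l)) (L / l) := by positivity
            exact mul_le_mul e1 (by linarith) (by positivity) (by positivity)
        _ = _ := by ring
  calc _ = (2 * D + 7) ^ (D + 2) * (2 ^ (k + 1) * b0) *
        ∏ i, ((b i + 2 ^ (k + 1) * L) * (3 * min (b i / (2 ^ k * l)) (L / l))) := by
          rw [Finset.prod_mul_distrib (f := fun i => b i + 2 ^ (k + 1) * L)]; ring
    _ ≤ (2 * D + 7) ^ (D + 2) * (2 ^ (k + 1) * b0) * ∏ i, (9 * b i * (L / l)) := by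
          refine mul_le_mul_of_nonneg_left (Finset.prod_le_prod (fun i _ => ?_) fun i _ => hfac i)
            (by positivity)
          have := hb i; positivity
    _ = _ := by
          rw [Finset.prod_mul_distrib, Finset.prod_mul_distrib]
          simp only [Finset.prod_const, Finset.card_univ, Fintype.card_fin]
          ring

/-- The number of subcubes hit by rational points of one fixed denominator `q ≈ 2 ^ k`, when `1 / q` is
at most of the order of the side of the ambient cube: the expected proportion `∏ b i`, up to a constant. -/
theorem fixed_type {D : ℕ} (a : Fin D → ℝ) (L l : ℝ) (b : Fin D → ℝ) (k : ℕ)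
    (hl : 0 < l) (hlL : l ≤ L) (hb : ∀ i, 0 < b i) (hb1 : ∀ i, b i ≤ 1) (hkL : 1 ≤ 2 ^ k * L)
    (q : ℤ) (hq1 : (2 : ℝ) ^ k ≤ q) (hq2 : (q : ℝ) ≤ 2 ^ (k + 1))
    (T : Finset (Fin D → ℤ)) (p : (Fin D → ℤ) → (Fin D → ℤ))
    (hT : ∀ ν ∈ T, Hit a L l q b (p ν) ν) :
    (T.card : ℝ) ≤ 21 ^ D * (∏ i, b i) * (L / l) ^ D := by
  classical
  have hL : 0 < L := by linarith
  have hq : 0 ≤ q := by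
    have : (0 : ℝ) ≤ q := le_trans (by positivity) hq1
    exact_mod_cast this
  have h1 := fiber_count T p (∏ i, (3 * min (b i / (2 ^ k * l)) (L / l))) (by
    intro w hw
    refine hit_count a L l q b w (2 ^ k) (by positivity) hq1 hl hlL (fun i => (hb i).le) _ ?_
    intro ν hν
    rw [Finset.mem_filter] at hν
    rw [← hν.2]; exact hT ν hν.1)
  have h2 : ((T.image p).card : ℝ) ≤ ∏ i : Fin D, (7 * (2 ^ k * L)) := by
    apply pi_count
    intro i A hA
    refine (int_count A (q * a i) (b i + q * L) ?_ ?_).trans ?_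
    · intro v hv
      obtain ⟨w, hw, rfl⟩ := hA v hv
      obtain ⟨ν, hν, rfl⟩ := Finset.mem_image.1 hw
      exact (hT ν hν).box hl hq i
    · have := hb i
      have : (0 : ℝ) ≤ q := by exact_mod_cast hq
      positivity
    · have h3 : (q : ℝ) * L ≤ 2 ^ (k + 1) * L := by gcongr
      rw [pow_succ] at h3
      linarith [hb1 i]
  calc (T.card : ℝ) ≤ _ := h1
    _ ≤ (∏ i : Fin D, (7 * (2 ^ k * L))) * ∏ i, (3 * (b i / (2 ^ k * l))) := by
        refine mul_le_mul h2 (Finset.prod_le_prod (fun i _ => ?_) fun i _ => ?_)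
          (Finset.prod_nonneg fun i _ => ?_) (by positivity)
        · have := hb i; positivity
        · gcongr; exact min_le_left _ _
        · have := hb i; positivity
    _ = ∏ i, (21 * b i * (L / l)) := by
        rw [← Finset.prod_mul_distrib]
        refine Finset.prod_congr rfl fun i _ => ?_
        field_simp; ring
    _ = _ := by
        rw [Finset.prod_mul_distrib, Finset.prod_mul_distrib]
        simp only [Finset.prod_const, Finset.card_univ, Fintype.card_fin]

/-- The number of subcubes hit by rational points with `q ≈ 2 ^ k` and `‖q θ‖ ≤ b0`, when
`2 ^ k L ≥ 1`. Now the denominators are counted first, through the two-dimensional lattice of `(q, p)` with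
`|q θ - p| ≤ b0`, and `fixed_type` is applied for each of them. -/
theorem corner_type {D : ℕ} (θ : ℝ) (a : Fin D → ℝ) (L l b0 : ℝ) (b : Fin D → ℝ) (k : ℕ)
    (hl : 0 < l) (hlL : l ≤ L) (hb0 : 0 < b0) (hb : ∀ i, 0 < b i) (hb1 : ∀ i, b i ≤ 1)
    (hkL : 1 ≤ 2 ^ k * L) (h : ℕ) (hh : 0 < h) (X : ℝ) (hX : 2 ^ (k + 1) * b0 ≤ X)
    (hhX : (h : ℝ) + 1 ≤ 49 * X)
    (hempty : ∀ q p : ℤ, |(q : ℝ)| ≤ (4 / h) * 2 ^ (k + 1) →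
      |(q : ℝ) * θ - p| ≤ (4 / h) * b0 → q = 0 ∧ p = 0)
    (T : Finset (Fin D → ℤ)) (z : (Fin D → ℤ) → (Option (Fin (D + 1)) → ℤ))
    (hz1 : ∀ ν ∈ T, (2 : ℝ) ^ k ≤ z ν none) (hz2 : ∀ ν ∈ T, (z ν none : ℝ) ≤ 2 ^ (k + 1))
    (hz0 : ∀ ν ∈ T, |(z ν none : ℝ) * θ - z ν (some 0)| ≤ b0)
    (hT : ∀ ν ∈ T, Hit a L l (z ν none) b (fun i => z ν (some i.succ)) ν) :
    (T.card : ℝ) ≤ 49 * X * (21 ^ D * (∏ i, b i) * (L / l) ^ D) := by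
  classical
  have hL : 0 < L := by linarith
  have hpr : 0 ≤ 21 ^ D * (∏ i, b i) * (L / l) ^ D := by
    have := Finset.prod_nonneg fun i (_ : i ∈ Finset.univ) => (hb i).le
    positivity
  let f : (Fin D → ℤ) → (Option (Fin 1) → ℤ) := fun ν o => match o with
    | none => z ν none
    | some _ => z ν (some 0)
  refine (fiber_count T f (21 ^ D * (∏ i, b i) * (L / l) ^ D) ?_).trans ?_
  · intro w hw
    obtain ⟨ν0, hν0, rfl⟩ := Finset.mem_image.1 hw
    refine fixed_type a L l b k hl hlL hb hb1 hkL (z ν0 none) (hz1 _ hν0) (hz2 _ hν0) _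
      (fun ν i => z ν (some i.succ)) ?_
    intro ν hν
    rw [Finset.mem_filter] at hν
    have e : z ν none = z ν0 none := congrFun hν.2 none
    rw [← e]; exact hT ν hν.1
  · refine mul_le_mul_of_nonneg_right ?_ hpr
    have hX0 : 0 ≤ X := le_trans (by positivity) hX
    rcases box_count (N := 1) (fun _ => θ) (2 ^ (k + 1)) (fun _ => b0)
      (by positivity) (fun _ => hb0) h hh (T.image f) (by
        intro w hw
        obtain ⟨ν, hν, rfl⟩ := Finset.mem_image.1 hw
        have h1 := hz1 ν hν
        have : (0 : ℝ) ≤ z ν none := le_trans (by positivity) h1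
        simp only [f]
        rw [abs_of_nonneg this]
        exact hz2 ν hν) (by
        intro w hw i
        obtain ⟨ν, hν, rfl⟩ := Finset.mem_image.1 hw
        exact hz0 ν hν) with h1 | h1 | ⟨w, hw, w', hw', hne, h1, h2⟩
    · refine h1.trans ?_
      simp only [Finset.univ_unique, Finset.prod_const, Finset.card_singleton, Nat.cast_one]
      norm_num
      linarith
    · refine le_trans ?_ hhX
      rw [pow_one] at h1
      exact_mod_cast h1
    · exfalso
      apply hne
      have e : (2 * ((1 : ℕ) + 1) / h : ℝ) = 4 / h := by norm_num
      rw [e] at h1 h2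
      have := hempty ((w - w') none) ((w - w') (some 0)) (by simpa using h1) (by simpa using h2 0)
      rw [← sub_eq_zero]
      funext o
      cases o with
      | none => simpa using this.1
      | some i => rw [Subsingleton.elim i 0]; simpa using this.2

/-! ### Truncated products and dyadic records -/

theorem distInt_nonneg (x : ℝ) : 0 ≤ distInt x := abs_nonneg _
theorem distInt_le_half (x : ℝ) : distInt x ≤ 1 / 2 := abs_sub_round x
theorem distInt_le (x : ℝ) (p : ℤ) : distInt x ≤ |x - p| := round_le x p

/-- The growth function `(t + 2) ^ D log₂ (t + 2)` (with integer logarithm); at `t = log₂ q` it is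
comparable with `(log q) ^ D log log q`. -/
def phi (D t : ℕ) : ℕ := (t + 2) ^ D * Nat.log 2 (t + 2)

theorem phi_pos (D t : ℕ) : 1 ≤ phi D t := by
  have : 1 ≤ Nat.log 2 (t + 2) := Nat.log_pos (by norm_num) (by omega)
  have h2 : 1 ≤ (t + 2) ^ D := Nat.one_le_pow _ _ (by omega)
  exact Nat.mul_pos h2 this

theorem phi_mono (D : ℕ) : Monotone (phi D) := by
  intro a b h
  exact Nat.mul_le_mul (Nat.pow_le_pow_left (by omega) _) (Nat.log_mono_right (by omega))

/-- The product `q ‖q θ‖ ∏ ‖q α i‖` in which every factor with index `i` is truncated from below at `q l`,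
the variation of `q α i` when `α` moves in a cube of side `l`. -/
noncomputable def val {D : ℕ} (θ : ℝ) (α : Fin D → ℝ) (q : ℕ) (l : ℝ) : ℝ :=
  q * distInt (q * θ) * ∏ i, max (distInt (q * α i)) (q * l)

/-- The Diophantine properties of the first coordinate. `low`: `q ‖q θ‖` is never smaller than
`η / phi`. `spec`: in a window `[2 ^ e, 2 ^ e'')` with `e'' ≤ 2 e` (or `e'' ≤ Bq`), all `q` with
`q ‖q θ‖ < κ1` are multiples `j Q0` of a single denominator, with a lower bound growing like `j ^ 2`. -/
structure GoodTheta (D : ℕ) (κ1 η : ℝ) (Bq : ℕ) (θ : ℝ) : Prop where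
  low : ∀ q : ℕ, 1 ≤ q → η ≤ phi D (Nat.log 2 q) * (q * distInt (q * θ))
  spec : ∀ e e'' : ℕ, (e'' ≤ 2 * e ∨ e'' ≤ Bq) → ∃ Q0 : ℕ, 1 ≤ Q0 ∧ ∀ q : ℕ, 2 ^ e ≤ q → q < 2 ^ e'' →
    q * distInt (q * θ) < κ1 → ∃ j : ℕ, 1 ≤ j ∧ q = j * Q0 ∧
      (j : ℝ) ^ 2 * η ≤ phi D e'' * (q * distInt (q * θ))

theorem GoodTheta.pos {D : ℕ} {κ1 η : ℝ} {Bq : ℕ} {θ : ℝ} (G : GoodTheta D κ1 η Bq θ) (hη : 0 < η)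
    (q : ℕ) (hq : 1 ≤ q) : 0 < distInt (q * θ) := by
  rcases (distInt_nonneg (q * θ)).lt_or_eq with h | h
  · exact h
  · have := G.low q hq
    rw [← h] at this
    simp only [mul_zero] at this
    linarith

/-- A dyadic record of the reason for discarding the subcube `ν` of side `2⁻ᵉ''` of the cube at `a` of
side `2⁻ᵉ`: a point `α` of the subcube and some `q ∈ [2 ^ k, 2 ^ (k + 1))` whose truncated product is below `κ`
at level `e''` although, if `q < 2 ^ e'`, it is at least `κ` at level `e'`. The exponents `s0` and `s i` locate
`‖q θ‖` and the truncated factors up to a factor two. -/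
structure Rec {D : ℕ} (θ : ℝ) (a : Fin D → ℝ) (e e' e'' : ℕ) (κ : ℝ) (ν : Fin D → ℤ)
    (q k s0 : ℕ) (s : Fin D → ℕ) (α : Fin D → ℝ) : Prop where
  hq1 : 1 ≤ q
  hq2 : q < 2 ^ e''
  hk1 : 2 ^ k ≤ q
  hk2 : q < 2 ^ (k + 1)
  a0 : (1 / 2 : ℝ) ^ (s0 + 1) < distInt (q * θ)
  b0 : distInt (q * θ) ≤ (1 / 2 : ℝ) ^ s0
  ai : ∀ i, (1 / 2 : ℝ) ^ (s i + 1) < max (distInt (q * α i)) (q * (1 / 2) ^ e'')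
  bi : ∀ i, max (distInt (q * α i)) (q * (1 / 2) ^ e'') ≤ (1 / 2 : ℝ) ^ s i
  hv : val θ α q ((1 / 2) ^ e'') < κ
  hv' : q < 2 ^ e' → κ ≤ val θ α q ((1 / 2) ^ e')
  nonneg : ∀ i, 0 ≤ ν i
  le : ∀ i, (2 * (ν i : ℝ) + 1) * (1 / 2) ^ e'' ≤ (1 / 2) ^ e
  cube1 : ∀ i, a i + 2 * (1 / 2) ^ e'' * ν i ≤ α i
  cube2 : ∀ i, α i ≤ a i + 2 * (1 / 2) ^ e'' * ν i + (1 / 2) ^ e''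

theorem exists_rec {D : ℕ} {θ κ1 η : ℝ} {Bq : ℕ} (G : GoodTheta D κ1 η Bq θ) (hη : 0 < η)
    (a : Fin D → ℝ) (e e' e'' : ℕ) (κ : ℝ) (ν : Fin D → ℤ)
    (h0 : ∀ i, 0 ≤ ν i) (h1 : ∀ i, (2 * (ν i : ℝ) + 1) * (1 / 2) ^ e'' ≤ (1 / 2) ^ e)
    (h2 : ∃ α : Fin D → ℝ, (∀ i, a i + 2 * (1 / 2) ^ e'' * ν i ≤ α i ∧
      α i ≤ a i + 2 * (1 / 2) ^ e'' * ν i + (1 / 2) ^ e'') ∧ ∃ q : ℕ, 1 ≤ q ∧ q < 2 ^ e'' ∧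
      val θ α q ((1 / 2) ^ e'') < κ ∧ (q < 2 ^ e' → κ ≤ val θ α q ((1 / 2) ^ e'))) :
    ∃ q k s0 s α, Rec θ a e e' e'' κ ν q k s0 s α := by
  obtain ⟨α, hα, q, hq1, hq2, hv, hv'⟩ := h2
  have hq : (q : ℝ) < 2 ^ e'' := by exact_mod_cast hq2
  have hq0 : (0 : ℝ) < q := by exact_mod_cast hq1
  obtain ⟨s0, hs0, hs0'⟩ := exists_nat_pow_near_of_lt_one (G.pos hη q hq1)
    ((distInt_le_half _).trans (by norm_num)) (by norm_num : (0 : ℝ) < 1 / 2) (by norm_num)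
  have : ∀ i, ∃ n : ℕ, (1 / 2 : ℝ) ^ (n + 1) < max (distInt (q * α i)) (q * (1 / 2) ^ e'') ∧
      max (distInt (q * α i)) (q * (1 / 2) ^ e'') ≤ (1 / 2 : ℝ) ^ n := by
    intro i
    refine exists_nat_pow_near_of_lt_one ?_ ?_ (by norm_num : (0 : ℝ) < 1 / 2) (by norm_num)
    · exact lt_max_of_lt_right (by positivity)
    · refine max_le ((distInt_le_half _).trans (by norm_num)) ?_
      rw [one_div, inv_pow, ← div_eq_mul_inv, div_le_one (by positivity)]
      exact hq.le
  choose s hs hs' using this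
  exact ⟨q, Nat.log 2 q, s0, s, α, hq1, hq2, Nat.pow_log_le_self 2 (by omega),
    Nat.lt_pow_succ_log_self (by norm_num) q, hs0, hs0', hs, hs', hv, hv', h0, h1,
    fun i => (hα i).1, fun i => (hα i).2⟩

namespace Rec
variable {D : ℕ} {θ : ℝ} {a : Fin D → ℝ} {e e' e'' : ℕ} {κ : ℝ} {ν : Fin D → ℤ}
    {q k s0 : ℕ} {s : Fin D → ℕ} {α : Fin D → ℝ}

theorem qr1 (R : Rec θ a e e' e'' κ ν q k s0 s α) : (2 : ℝ) ^ k ≤ q := by exact_mod_cast R.hk1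
theorem qr2 (R : Rec θ a e e' e'' κ ν q k s0 s α) : (q : ℝ) ≤ 2 ^ (k + 1) := by
  exact_mod_cast R.hk2.le

/-- `κ` bounds the product with the dyadic sizes in place of the truncated factors. -/
theorem prod2 (R : Rec θ a e e' e'' κ ν q k s0 s α) :
    q * distInt (q * θ) * ∏ i, (1 / 2 : ℝ) ^ s i ≤ 2 ^ D * κ := by
  have h1 : ∏ i, ((1 / 2 : ℝ) ^ s i * (1 / 2)) ≤ ∏ i, max (distInt (q * α i)) (q * (1 / 2) ^ e'') := by
    refine Finset.prod_le_prod (fun i _ => by positivity) fun i _ => ?_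
    rw [← pow_succ]; exact (R.ai i).le
  rw [Finset.prod_mul_distrib] at h1
  simp only [Finset.prod_const, Finset.card_univ, Fintype.card_fin] at h1
  have h2 := R.hv
  unfold val at h2
  have h3 : 0 ≤ (q : ℝ) * distInt (q * θ) := mul_nonneg (by positivity) (distInt_nonneg _)
  have h4 := mul_le_mul_of_nonneg_left h1 h3
  have h5 : (2 : ℝ) ^ D * (1 / 2) ^ D = 1 := by rw [← mul_pow]; norm_num
  calc q * distInt (q * θ) * ∏ i, (1 / 2 : ℝ) ^ s i
      = 2 ^ D * (q * distInt (q * θ) * ((∏ i, (1 / 2 : ℝ) ^ s i) * (1 / 2) ^ D)) := by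
        rw [show 2 ^ D * (q * distInt (q * θ) * ((∏ i, (1 / 2 : ℝ) ^ s i) * (1 / 2) ^ D)) =
          (2 ^ D * (1 / 2) ^ D) * (q * distInt (q * θ) * ((∏ i, (1 / 2 : ℝ) ^ s i))) by ring, h5, one_mul]
    _ ≤ 2 ^ D * κ := by gcongr; linarith

/-- The dyadic boxes have small total size, since the truncated product is below `κ`. -/
theorem prod1 (R : Rec θ a e e' e'' κ ν q k s0 s α) :
    2 ^ k * (1 / 2 : ℝ) ^ s0 * ∏ i, (1 / 2 : ℝ) ^ s i ≤ 2 ^ (D + 1) * κ := by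
  have h1 := R.prod2
  have h2 := R.a0
  have h3 := R.qr1
  have hp : 0 ≤ ∏ i, (1 / 2 : ℝ) ^ s i := by positivity
  have h4 : 2 ^ k * ((1 / 2 : ℝ) ^ s0 * (1 / 2)) ≤ q * distInt (q * θ) := by
    rw [← pow_succ]
    exact mul_le_mul h3 h2.le (by positivity) (by positivity)
  have h5 := mul_le_mul_of_nonneg_right h4 hp
  rw [pow_succ (2 : ℝ) D]
  nlinarith

theorem hit (R : Rec θ a e e' e'' κ ν q k s0 s α) :
    Hit a ((1 / 2) ^ e) ((1 / 2) ^ e'') (q : ℤ) (fun i => (1 / 2) ^ s i)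
      (fun i => round ((q : ℝ) * α i)) ν := by
  refine ⟨R.nonneg, R.le, fun i => ?_, fun i => ⟨α i, R.cube1 i, R.cube2 i, ?_⟩⟩
  · rw [Int.cast_natCast]; exact (le_max_right _ _).trans (R.bi i)
  · rw [Int.cast_natCast]; exact (le_max_left _ _).trans (R.bi i)

theorem k_lt (R : Rec θ a e e' e'' κ ν q k s0 s α) : k < e'' :=
  (Nat.pow_lt_pow_iff_right (by norm_num)).1 (R.hk1.trans_lt R.hq2)

theorem s_le (R : Rec θ a e e' e'' κ ν q k s0 s α) (i : Fin D) : s i + k ≤ e'' := by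
  have h1 : (2 : ℝ) ^ k * (1 / 2) ^ e'' ≤ (1 / 2) ^ s i :=
    (mul_le_mul_of_nonneg_right R.qr1 (by positivity)).trans ((le_max_right _ _).trans (R.bi i))
  rw [one_div, inv_pow, inv_pow, ← div_eq_mul_inv, div_le_iff₀ (by positivity), inv_mul_eq_div,
    le_div_iff₀ (by positivity), ← pow_add] at h1
  rw [add_comm]
  exact (pow_le_pow_iff_right₀ (by norm_num : (1 : ℝ) < 2)).1 h1

end Rec

/-- A sum of distinct powers of `r < 1` is comparable with its largest term. -/
theorem geo_sum (A : Finset ℕ) (r z : ℝ) (hr0 : 0 ≤ r) (hr1 : r < 1) (hz : 0 ≤ z)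
    (h : ∀ s ∈ A, r ^ s ≤ z) : ∑ s ∈ A, r ^ s ≤ (1 - r)⁻¹ * z := by
  have h1r : 0 < 1 - r := by linarith
  rcases A.eq_empty_or_nonempty with rfl | hne
  · simp; positivity
  · set m := A.min' hne
    have hm : ∀ s ∈ A, m ≤ s := fun s hs => A.min'_le s hs
    have h1 : ∑ s ∈ A, r ^ s = r ^ m * ∑ t ∈ A.image (fun s => s - m), r ^ t := by
      rw [Finset.sum_image, Finset.mul_sum]
      · refine Finset.sum_congr rfl fun s hs => ?_
        rw [← pow_add, Nat.add_sub_cancel' (hm s hs)]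
      · intro s hs t ht hst
        have := hm s hs
        have := hm t ht
        simp only at hst
        omega
    have h2 : ∑ t ∈ A.image (fun s => s - m), r ^ t ≤ (1 - r)⁻¹ := by
      rw [← tsum_geometric_of_lt_one hr0 hr1]
      exact (summable_geometric_of_lt_one hr0 hr1).sum_le_tsum _ fun _ _ => by positivity
    rw [h1, mul_comm]
    exact mul_le_mul h2 (h m (A.min'_mem hne)) (by positivity) (by positivity)

/-- Summation over the dyadic exponent `s0`. For a fixed key the counts decay geometrically in `s0`, so
the total is at most the number of keys times twice the largest admissible term, and the parameter `s0` costs no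
logarithm. -/
theorem sum_types {ν σ : Type*} [DecidableEq σ] (T : Finset ν) (key : ν → σ) (s0 : ν → ℕ)
    (keys : ℕ) (hkeys : (T.image key).card ≤ keys) (c : σ → ℝ) (hc : ∀ t, 0 < c t) (M Y : ℝ)
    (hM : 0 ≤ M) (hY : 0 ≤ Y)
    (hcM : ∀ v ∈ T, c (key v) * (1 / 2) ^ s0 v ≤ M)
    (hcnt : ∀ t m, ((T.filter (fun v => key v = t ∧ s0 v = m)).card : ℝ) ≤ Y * (c t * (1 / 2) ^ m)) :
    (T.card : ℝ) ≤ keys * (2 * Y * M) := by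
  have h1 := fiber_count T key (2 * Y * M) (by
    intro t ht
    set T' := T.filter (fun v => key v = t)
    rw [Finset.card_eq_sum_card_image s0 T']
    push_cast
    have h2 : ∀ m ∈ T'.image s0, ((T'.filter (fun v => s0 v = m)).card : ℝ) ≤ (Y * c t) * (1 / 2) ^ m := by
      intro m _
      rw [Finset.filter_filter, mul_assoc]
      exact hcnt t m
    refine (Finset.sum_le_sum h2).trans ?_
    rw [← Finset.mul_sum]
    have h3 := geo_sum (T'.image s0) (1 / 2) (M / c t) (by norm_num) (by norm_num)
      (div_nonneg hM (hc t).le) (by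
        intro m hm
        obtain ⟨v, hv, rfl⟩ := Finset.mem_image.1 hm
        rw [Finset.mem_filter] at hv
        rw [le_div_iff₀ (hc t), ← hv.2, mul_comm]
        exact hcM v hv.1)
    calc Y * c t * ∑ i ∈ T'.image s0, (1 / 2 : ℝ) ^ i ≤ Y * c t * ((1 - 1 / 2)⁻¹ * (M / c t)) :=
          mul_le_mul_of_nonneg_left h3 (mul_nonneg hY (hc t).le)
      _ = 2 * Y * M := by have := (hc t).ne'; field_simp; norm_num)
  refine h1.trans ?_
  have : ((T.image key).card : ℝ) ≤ keys := by exact_mod_cast hkeys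
  exact mul_le_mul_of_nonneg_right this (by positivity)

theorem distInt_natAbs (n : ℤ) (x : ℝ) (p : ℤ) : distInt ((n.natAbs : ℝ) * x) ≤ |n * x - p| := by
  rcases Int.natAbs_eq n with h | h
  · have : (n : ℝ) = (n.natAbs : ℝ) := by
      conv_lhs => rw [h]
      simp
    rw [this]; exact distInt_le _ _
  · have : (n : ℝ) = -(n.natAbs : ℝ) := by
      conv_lhs => rw [h]
      simp
    have h2 := distInt_le ((n.natAbs : ℝ) * x) (-p)
    rw [this]
    refine h2.trans (le_of_eq ?_)
    rw [← abs_neg]; congr 1; push_cast; ring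

/-- The constant in the shrinking factor that excludes nonzero lattice vectors in `noncorner_empty`. -/
noncomputable def CD (D : ℕ) : ℝ := (2 * (D + 2)) ^ (D + 2) * 2 ^ (D + 1)

theorem CD_ge (D : ℕ) : 6 * ((D : ℝ) + 2) ≤ CD D := by
  unfold CD
  have hD : (0 : ℝ) ≤ D := by positivity
  have h1 : (2 * ((D : ℝ) + 2)) ^ 2 ≤ (2 * (D + 2)) ^ (D + 2) :=
    pow_le_pow_right₀ (by linarith) (by omega)
  have h2 : (2 : ℝ) ^ 1 ≤ 2 ^ (D + 1) := pow_le_pow_right₀ (by norm_num) (by omega)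
  have h3 : (0 : ℝ) ≤ (2 * ((D : ℝ) + 2)) ^ 2 := by positivity
  nlinarith

/-- The shrunk box contains no nonzero lattice vector. Such a vector would give a denominator
`q < 2 ^ e` whose truncated product at the centre of the cube is below `κ`, against the lower bound already
secured at level `e`. -/
theorem noncorner_empty {D : ℕ} {θ : ℝ} {a : Fin D → ℝ} {e k : ℕ} {κ b0 : ℝ} {b : Fin D → ℝ} {h : ℕ}
    (hκ1 : κ ≤ 1)
    (halive : ∀ q : ℕ, 1 ≤ q → q < 2 ^ e → κ ≤ val θ a q ((1 / 2) ^ e))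
    (hke : k < e) (hb0 : 0 < b0) (hb01 : b0 ≤ 1) (hb : ∀ i, 0 < b i) (hb1 : ∀ i, b i ≤ 1)
    (hh : 0 < h) (hCD : CD D < h * κ)
    (hW : 2 ^ (k + 1) * b0 * ∏ i, (b i + 2 ^ (k + 1) * (1 / 2) ^ e) < (h + 1) ^ (D + 1))
    (z : Option (Fin (D + 1)) → ℤ) (h0 : |(z none : ℝ)| ≤ (2 * (D + 2) / h) * 2 ^ (k + 1))
    (h1 : |(z none : ℝ) * θ - z (some 0)| ≤ (2 * (D + 2) / h) * b0)
    (h2 : ∀ i : Fin D, |(z none : ℝ) * a i - z (some i.succ)| ≤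
      (2 * (D + 2) / h) * (b i + 2 ^ (k + 1) * (1 / 2) ^ e)) : z = 0 := by
  have hh0 : (0 : ℝ) < h := by exact_mod_cast hh
  have hh1 : (1 : ℝ) ≤ h := by exact_mod_cast hh
  set lam : ℝ := 2 * (D + 2) / h with hlam
  have hlam0 : 0 < lam := by positivity
  have hlam3 : 3 * lam < 1 := by
    have := CD_ge D
    rw [hlam, mul_div_assoc', div_lt_one hh0]
    nlinarith
  have hkL : (2 : ℝ) ^ (k + 1) * (1 / 2) ^ e ≤ 1 := by
    rw [one_div, inv_pow, ← div_eq_mul_inv, div_le_one (by positivity)]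
    exact pow_le_pow_right₀ (by norm_num) hke
  by_cases hq : (z none).natAbs = 0
  · have hz0 : z none = 0 := Int.natAbs_eq_zero.1 hq
    have small : ∀ p : ℤ, |(0 : ℝ) - p| < 1 → p = 0 := by
      intro p hp
      rw [zero_sub, abs_neg] at hp
      have : |p| < 1 := by exact_mod_cast hp
      exact Int.abs_lt_one_iff.1 this
    rw [hz0] at h1
    have e0 := small (z (some 0)) (by
      simp only [Int.cast_zero, zero_mul] at h1
      nlinarith)
    funext o
    cases o with
    | none => exact hz0
    | some i =>
      refine Fin.cases e0 (fun i => ?_) i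
      have h3 := h2 i
      rw [hz0] at h3
      simp only [Int.cast_zero, zero_mul] at h3
      apply small
      have := hb1 i
      nlinarith
  · exfalso
    set Q := (z none).natAbs with hQ
    have hQ1 : 1 ≤ Q := Nat.one_le_iff_ne_zero.2 hq
    have hQr : (Q : ℝ) = |(z none : ℝ)| := by
      rw [hQ, Nat.cast_natAbs]; push_cast; rfl
    rw [← hQr] at h0
    have hQlt : Q < 2 ^ e := by
      have : (Q : ℝ) < 2 ^ (k + 1) := by
        refine h0.trans_lt ?_
        have : (0 : ℝ) < 2 ^ (k + 1) := by positivity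
        nlinarith
      have h3 : Q < 2 ^ (k + 1) := by exact_mod_cast this
      exact h3.trans_le (Nat.pow_le_pow_right (by norm_num) hke)
    have hal := halive Q hQ1 hQlt
    have hval : val θ a Q ((1 / 2) ^ e) ≤ (lam * 2 ^ (k + 1)) * (lam * b0) *
        ∏ i, (lam * (b i + 2 ^ (k + 1) * (1 / 2) ^ e)) := by
      unfold val
      refine mul_le_mul (mul_le_mul h0 ((distInt_natAbs _ _ _).trans h1) (distInt_nonneg _)
        (by positivity)) (Finset.prod_le_prod (fun i _ => ?_) fun i _ => ?_)
        (Finset.prod_nonneg fun i _ => ?_) (by positivity)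
      · exact le_max_of_le_right (by positivity)
      · refine max_le ((distInt_natAbs _ _ _).trans (h2 i)) ?_
        have := (hb i).le
        calc (Q : ℝ) * (1 / 2) ^ e ≤ (lam * 2 ^ (k + 1)) * (1 / 2) ^ e := by gcongr
          _ = lam * (2 ^ (k + 1) * (1 / 2) ^ e) := by ring
          _ ≤ _ := by gcongr; linarith
      · exact le_max_of_le_right (by positivity)
    rw [Finset.prod_mul_distrib] at hval
    simp only [Finset.prod_const, Finset.card_univ, Fintype.card_fin] at hval
    have h3 : val θ a Q ((1 / 2) ^ e) ≤ lam ^ (D + 2) * (h + 1) ^ (D + 1) := by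
      refine hval.trans ?_
      calc _ = lam ^ (D + 2) * (2 ^ (k + 1) * b0 * ∏ i, (b i + 2 ^ (k + 1) * (1 / 2) ^ e)) := by ring
        _ ≤ _ := by gcongr
    have h4 : lam ^ (D + 2) * ((h : ℝ) + 1) ^ (D + 1) ≤ CD D / h := by
      calc lam ^ (D + 2) * ((h : ℝ) + 1) ^ (D + 1) ≤ lam ^ (D + 2) * (2 * h) ^ (D + 1) := by
            gcongr; linarith
        _ = CD D / h := by
            rw [hlam, div_pow, mul_pow _ (h : ℝ), CD]; field_simp; ring
    have h5 : CD D / h < κ := by rw [div_lt_iff₀ hh0]; linarith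
    linarith

/-- Integer part of the `(N + 1)`-st root. -/
theorem exists_root (N : ℕ) (W : ℝ) (hW : 1 ≤ W) :
    ∃ h : ℕ, 0 < h ∧ (h : ℝ) ^ (N + 1) ≤ W ∧ W < (h + 1) ^ (N + 1) := by
  classical
  have hex : ∃ n : ℕ, W < (n : ℝ) ^ (N + 1) := by
    obtain ⟨n, hn⟩ := exists_nat_gt W
    have hn1 : (1 : ℝ) ≤ n := by linarith
    exact ⟨n, hn.trans_le (le_self_pow₀ hn1 (by omega))⟩
  have h1 := Nat.find_spec hex
  have h2 : 1 < Nat.find hex := by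
    by_contra hc
    have : (Nat.find hex : ℝ) ≤ 1 := by exact_mod_cast not_lt.1 hc
    have := pow_le_one₀ (n := N + 1) (Nat.cast_nonneg (Nat.find hex)) this
    linarith
  obtain ⟨h, hh⟩ : ∃ h, Nat.find hex = h + 1 := ⟨Nat.find hex - 1, by omega⟩
  refine ⟨h, by omega, ?_, ?_⟩
  · have := Nat.find_min hex (m := h) (by omega)
    exact not_lt.1 this
  · rw [hh] at h1; exact_mod_cast h1

namespace Rec
variable {D : ℕ} {θ : ℝ} {a : Fin D → ℝ} {e e' e'' : ℕ} {κ : ℝ} {ν : Fin D → ℤ}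
    {q k s0 : ℕ} {s : Fin D → ℕ} {α : Fin D → ℝ}

/-- If `q < 2 ^ e`, some coordinate is truncated already at level `e'`: otherwise the truncated
products at levels `e'` and `e''` would coincide. -/
theorem exists_small (R : Rec θ a e e' e'' κ ν q k s0 s α) (hke : k < e) (hee : e ≤ e')
    (hee' : e' ≤ e'') : ∃ i, distInt (q * α i) < q * (1 / 2) ^ e' := by
  by_contra! hcon
  have hq : q < 2 ^ e' := R.hk2.trans_le (Nat.pow_le_pow_right (by norm_num) (by omega))
  have h1 := R.hv' hq
  have h2 := R.hv
  have : val θ α q ((1 / 2) ^ e') = val θ α q ((1 / 2) ^ e'') := by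
    unfold val
    congr 1
    refine Finset.prod_congr rfl fun i _ => ?_
    have h3 : (q : ℝ) * (1 / 2) ^ e'' ≤ q * (1 / 2) ^ e' :=
      mul_le_mul_of_nonneg_left (pow_le_pow_of_le_one (by norm_num) (by norm_num) hee') (by positivity)
    rw [max_eq_left (hcon i), max_eq_left (h3.trans (hcon i))]
  linarith

/-- The box of lattice points counted for a record with `q < 2 ^ e` has large volume: at level `e'` the
product is at least `κ`, and the coordinate `i0` gains the factor `2 ^ (e' - e)`. -/
theorem W_ge (R : Rec θ a e e' e'' κ ν q k s0 s α) (hke : k < e) (hee : e ≤ e') (i0 : Fin D)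
    (hi0 : distInt (q * α i0) < q * (1 / 2) ^ e') :
    κ * 2 ^ (e' - e) ≤ 2 ^ (k + 1) * (1 / 2) ^ s0 * ∏ i, ((1 / 2) ^ s i + 2 ^ (k + 1) * (1 / 2) ^ e) := by
  have hq : q < 2 ^ e' := R.hk2.trans_le (Nat.pow_le_pow_right (by norm_num) (by omega))
  have h1 := R.hv' hq
  have hl : ((1 : ℝ) / 2) ^ e' * 2 ^ (e' - e) = (1 / 2) ^ e := by
    obtain ⟨f, rfl⟩ := Nat.exists_eq_add_of_le hee
    rw [Nat.add_sub_cancel_left, pow_add, mul_assoc, ← mul_pow]; norm_num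
  have hq0 : (0 : ℝ) ≤ q := by positivity
  have hle : ∀ i, max (distInt (q * α i)) (q * (1 / 2) ^ e') ≤ (1 / 2) ^ s i + 2 ^ (k + 1) * (1 / 2) ^ e := by
    intro i
    have hb := (le_max_left _ _).trans (R.bi i)
    have h2 : (q : ℝ) * (1 / 2) ^ e' ≤ 2 ^ (k + 1) * (1 / 2) ^ e :=
      mul_le_mul R.qr2 (pow_le_pow_of_le_one (by norm_num) (by norm_num) hee) (by positivity) (by positivity)
    have h3 : (0 : ℝ) ≤ 2 ^ (k + 1) * (1 / 2) ^ e := by positivity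
    have h4 : (0 : ℝ) ≤ (1 / 2) ^ s i := by positivity
    exact max_le (by linarith) (by linarith)
  have hle0 : max (distInt (q * α i0)) (q * (1 / 2) ^ e') * 2 ^ (e' - e) ≤
      (1 / 2) ^ s i0 + 2 ^ (k + 1) * (1 / 2) ^ e := by
    rw [max_eq_right hi0.le, mul_assoc, hl]
    have : (q : ℝ) * (1 / 2) ^ e ≤ 2 ^ (k + 1) * (1 / 2) ^ e := by gcongr; exact R.qr2
    have h4 : (0 : ℝ) ≤ (1 / 2) ^ s i0 := by positivity
    linarith
  calc κ * 2 ^ (e' - e) ≤ val θ α q ((1 / 2) ^ e') * 2 ^ (e' - e) := by gcongr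
    _ = q * distInt (q * θ) * ((max (distInt (q * α i0)) (q * (1 / 2) ^ e') * 2 ^ (e' - e)) *
        ∏ i ∈ Finset.univ.erase i0, max (distInt (q * α i)) (q * (1 / 2) ^ e')) := by
        unfold val
        rw [← Finset.mul_prod_erase _ _ (Finset.mem_univ i0)]; ring
    _ ≤ (2 ^ (k + 1) * (1 / 2) ^ s0) * (((1 / 2) ^ s i0 + 2 ^ (k + 1) * (1 / 2) ^ e) *
        ∏ i ∈ Finset.univ.erase i0, ((1 / 2) ^ s i + 2 ^ (k + 1) * (1 / 2) ^ e)) := by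
        refine mul_le_mul (mul_le_mul R.qr2 R.b0 (distInt_nonneg _) (by positivity))
          (mul_le_mul hle0 (Finset.prod_le_prod (fun i _ => ?_) fun i _ => hle i) ?_ (by positivity)) ?_
          (by positivity)
        · exact le_max_of_le_right (by positivity)
        · exact Finset.prod_nonneg fun i _ => le_max_of_le_right (by positivity)
        · refine mul_nonneg (mul_nonneg (le_max_of_le_right (by positivity)) (by positivity)) ?_
          exact Finset.prod_nonneg fun i _ => le_max_of_le_right (by positivity)
    _ = _ := by rw [Finset.mul_prod_erase Finset.univ (fun i => (1 / 2 : ℝ) ^ s i + 2 ^ (k + 1) * (1 / 2) ^ e) (Finset.mem_univ i0)]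

/-- The exponent of a coordinate truncated at level `e'` takes at most `e'' - e' + 2` values once `k` is
fixed. Since `e'' - e'` is only of order `log e`, this replaces one logarithm by an iterated logarithm. -/
theorem s_small (R : Rec θ a e e' e'' κ ν q k s0 s α) (hee' : e' ≤ e'') (i0 : Fin D)
    (hi0 : distInt (q * α i0) < q * (1 / 2) ^ e') : e' ≤ s i0 + k + 1 := by
  have h1 := R.ai i0
  have h2 : max (distInt (q * α i0)) (q * (1 / 2) ^ e'') ≤ 2 ^ (k + 1) * (1 / 2) ^ e' := by
    refine max_le (hi0.le.trans ?_) ?_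
    · gcongr; exact R.qr2
    · exact mul_le_mul R.qr2 (pow_le_pow_of_le_one (by norm_num) (by norm_num) hee') (by positivity)
        (by positivity)
  have h3 := h1.trans_le h2
  rw [one_div, inv_pow, inv_pow, ← div_eq_mul_inv, lt_div_iff₀ (by positivity), inv_mul_eq_div,
    div_lt_iff₀ (by positivity), ← pow_add] at h3
  have := (pow_lt_pow_iff_right₀ (by norm_num : (1 : ℝ) < 2)).1 h3
  omega

end Rec

/-! ### Counting discarded subcubes -/

/-- The lattice point attached to `q`: `none` carries `q`, `some 0` the integer nearest to `q θ`, and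
`some (i + 1)` the integer nearest to `q α i`. -/
noncomputable def zvec {D : ℕ} (θ : ℝ) (α : Fin D → ℝ) (q : ℕ) : Option (Fin (D + 1)) → ℤ
  | none => q
  | some i => round ((q : ℝ) * (Fin.cons θ α : Fin (D + 1) → ℝ) i)

/-- The number of keys `(k, s)` when one of the exponents `s i0` is confined to a short range: one of
the factors `e''` is replaced by `e'' - e' + 2`. -/
theorem keys_card {V : Type*} {D : ℕ} (i0 : Fin D) (T : Finset V) (k : V → ℕ) (s : V → Fin D → ℕ)
    (e e' e'' : ℕ) (hee' : e' ≤ e'') (hk : ∀ v ∈ T, k v < e) (hs : ∀ v ∈ T, ∀ i, s v i + k v ≤ e'')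
    (hs0 : ∀ v ∈ T, e' ≤ s v i0 + k v + 1) :
    (T.image (fun v => (k v, s v))).card ≤ e * (e'' - e' + 2) * (e'' + 1) ^ (D - 1) := by
  classical
  let A : Finset (ℕ × ℕ × (Fin D → ℕ)) := Finset.range e ×ˢ Finset.Icc (e' - 1) e'' ×ˢ
    Fintype.piFinset (Function.update (fun _ => Finset.range (e'' + 1)) i0 {0})
  have hA : A.card ≤ e * (e'' - e' + 2) * (e'' + 1) ^ (D - 1) := by
    simp only [A, Finset.card_product, Finset.card_range, Nat.card_Icc, Fintype.card_piFinset]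
    rw [mul_assoc]
    refine Nat.mul_le_mul_left _ (Nat.mul_le_mul (by omega) ?_)
    rw [← Finset.mul_prod_erase _ _ (Finset.mem_univ i0)]
    simp only [Function.update_self, Finset.card_singleton, one_mul]
    apply le_of_eq
    rw [Finset.prod_congr rfl (g := fun _ => e'' + 1)]
    · simp
    · intro i hi
      rw [Function.update_of_ne (Finset.ne_of_mem_erase hi)]; simp
  refine le_trans ?_ hA
  refine Finset.card_le_card_of_injOn
    (fun ks => (ks.1, ks.2 i0 + ks.1, Function.update ks.2 i0 0)) ?_ ?_
  · intro ks hks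
    rw [Finset.mem_coe] at hks
    obtain ⟨v, hv, rfl⟩ := Finset.mem_image.1 hks
    simp only [A, Finset.coe_product, Set.mem_prod, Finset.mem_coe, Finset.mem_range, Finset.mem_Icc,
      Fintype.mem_piFinset]
    refine ⟨hk v hv, ⟨?_, hs v hv i0⟩, fun i => ?_⟩
    · have := hs0 v hv; omega
    · by_cases hi : i = i0
      · subst hi; simp
      · rw [Function.update_of_ne hi, Function.update_of_ne hi, Finset.mem_range]
        have := hs v hv i; omega
  · rintro ⟨k1, s1⟩ _ ⟨k2, s2⟩ _ h
    simp only [Prod.mk.injEq] at h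
    obtain ⟨h1, h2, h3⟩ := h
    subst h1
    congr 1
    funext i
    by_cases hi : i = i0
    · subst hi; omega
    · have := congrFun h3 i
      rwa [Function.update_of_ne hi, Function.update_of_ne hi] at this

/-- The number of subcubes discarded because of some `q < 2 ^ e`. A truncated coordinate is
singled out first, then the records are summed over their dyadic types. -/
theorem noncorner_count {D : ℕ} (θ : ℝ) (a : Fin D → ℝ) (e e' e'' : ℕ)
    (hee : e ≤ e') (hee' : e' ≤ e'') (κ : ℝ) (hκ0 : 0 < κ) (hκ1 : κ ≤ 1)
    (halive : ∀ q : ℕ, 1 ≤ q → q < 2 ^ e → κ ≤ val θ a q ((1 / 2) ^ e))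
    (hC1 : 0 < e → (CD D / κ + 2) ^ (D + 1) ≤ κ * 2 ^ (e' - e))
    (T : Finset (Fin D → ℤ)) (q k s0 : (Fin D → ℤ) → ℕ) (s : (Fin D → ℤ) → Fin D → ℕ)
    (α : (Fin D → ℤ) → Fin D → ℝ)
    (hR : ∀ ν ∈ T, Rec θ a e e' e'' κ ν (q ν) (k ν) (s0 ν) (s ν) (α ν))
    (hk : ∀ ν ∈ T, k ν < e) :
    (T.card : ℝ) ≤ D * (((e * (e'' - e' + 2) * (e'' + 1) ^ (D - 1) : ℕ) : ℝ) *
      (2 * ((2 * D + 7) ^ (D + 2) * 2 * 9 ^ D * ((1 / 2) ^ e / (1 / 2) ^ e'') ^ D) *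
        (2 ^ (D + 1) * κ))) := by
  classical
  rcases T.eq_empty_or_nonempty with rfl | ⟨ν00, hν00⟩
  · simp only [Finset.card_empty, Nat.cast_zero]; positivity
  have : ∀ ν, ∃ i : Fin D, ν ∈ T → distInt (q ν * α ν i) < q ν * (1 / 2) ^ e' := by
    intro ν
    by_cases hν : ν ∈ T
    · obtain ⟨i, hi⟩ := (hR ν hν).exists_small (hk ν hν) hee hee'
      exact ⟨i, fun _ => hi⟩
    · obtain ⟨i, -⟩ := (hR ν00 hν00).exists_small (hk ν00 hν00) hee hee'
      exact ⟨i, fun h => absurd h hν⟩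
  choose i0 hi0 using this
  set R := ((e * (e'' - e' + 2) * (e'' + 1) ^ (D - 1) : ℕ) : ℝ) *
      (2 * ((2 * D + 7) ^ (D + 2) * 2 * 9 ^ D * ((1 / 2) ^ e / (1 / 2) ^ e'') ^ D) *
        (2 ^ (D + 1) * κ)) with hRdef
  have hR0 : 0 ≤ R := by positivity
  refine (fiber_count T i0 R ?_).trans ?_
  swap
  · refine mul_le_mul_of_nonneg_right ?_ hR0
    have := Finset.card_le_univ (T.image i0)
    rw [Fintype.card_fin] at this
    exact_mod_cast this
  intro j _
  have hT' : ∀ ν ∈ T.filter (fun ν => i0 ν = j), ν ∈ T ∧ i0 ν = j := fun ν hν => Finset.mem_filter.1 hν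
  refine sum_types (T.filter (fun ν => i0 ν = j)) (fun ν => (k ν, s ν)) s0 _
    (keys_card j _ k s e e' e'' hee' (fun ν hν => hk ν (hT' ν hν).1)
      (fun ν hν i => (hR ν (hT' ν hν).1).s_le i) (fun ν hν => ?_))
    (fun t => 2 ^ t.1 * ∏ i, (1 / 2 : ℝ) ^ t.2 i) (fun t => by positivity) _ _ (by positivity)
    (by positivity) (fun ν hν => ?_) (fun t m => ?_)
  · obtain ⟨h1, h2⟩ := hT' ν hν
    have := (hR ν h1).s_small hee' (i0 ν) (hi0 ν h1)
    rwa [h2] at this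
  · have := (hR ν (hT' ν hν).1).prod1
    calc _ = 2 ^ k ν * (1 / 2 : ℝ) ^ s0 ν * ∏ i, (1 / 2 : ℝ) ^ s ν i := by ring
      _ ≤ _ := this
  · rw [Finset.filter_filter]
    set T2 := T.filter (fun ν => i0 ν = j ∧ (k ν, s ν) = t ∧ s0 ν = m) with hT2
    rcases T2.eq_empty_or_nonempty with h0 | ⟨ν1, hν1⟩
    · rw [h0]; simp only [Finset.card_empty, Nat.cast_zero]; positivity
    have hT2' : ∀ ν ∈ T2, ν ∈ T ∧ k ν = t.1 ∧ s ν = t.2 ∧ s0 ν = m := by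
      intro ν hν
      obtain ⟨h1, -, h2, h3⟩ := Finset.mem_filter.1 hν
      exact ⟨h1, by rw [← h2], by rw [← h2], h3⟩
    obtain ⟨hT1, hk1, hs1, hm1⟩ := hT2' ν1 hν1
    have hR1 := hR ν1 hT1
    have hke : t.1 < e := by rw [← hk1]; exact hk ν1 hT1
    have hW1 := hR1.W_ge (hk ν1 hT1) hee (i0 ν1) (hi0 ν1 hT1)
    have hC1' := (hC1 (by omega)).trans hW1
    rw [hk1, hs1, hm1] at hC1'
    have hCDpos : 0 < CD D := by
      have := CD_ge D
      have : (0 : ℝ) ≤ D := by positivity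
      linarith
    have hc2 : 2 < CD D / κ + 2 := by
      have : 0 < CD D / κ := by positivity
      linarith
    -- `h` is the integral part of the root of the volume, so that the volume bound is the larger alternative in `box_count`
    obtain ⟨h, hh, hhW, hWh⟩ := exists_root D _ (le_trans (one_le_pow₀ (by linarith)) hC1')
    have hCDh : CD D < h * κ := by
      have h1 := lt_of_pow_lt_pow_left₀ _ (by positivity) (hC1'.trans_lt hWh)
      have h2 : CD D / κ < h := by linarith
      rwa [div_lt_iff₀ hκ0] at h2
    have := noncorner_type θ a ((1 / 2) ^ e) ((1 / 2) ^ e'') ((1 / 2) ^ m)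
      (fun i => (1 / 2) ^ t.2 i) t.1 (by positivity)
      (pow_le_pow_of_le_one (by norm_num) (by norm_num) (hee.trans hee')) (by positivity)
      (fun i => by positivity) h hh hhW
      (noncorner_empty hκ1 halive hke (by positivity) (pow_le_one₀ (by norm_num) (by norm_num))
        (fun i => by positivity) (fun i => pow_le_one₀ (by norm_num) (by norm_num)) hh hCDh hWh)
      T2 (fun ν => zvec θ (α ν) (q ν))
      (fun ν hν => by
        obtain ⟨h1, h2, h3, h4⟩ := hT2' ν hν
        have := (hR ν h1).qr1
        rw [h2] at this
        simpa [zvec] using this)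
      (fun ν hν => by
        obtain ⟨h1, h2, h3, h4⟩ := hT2' ν hν
        have := (hR ν h1).qr2
        rw [h2] at this
        simpa [zvec] using this)
      (fun ν hν => by
        obtain ⟨h1, h2, h3, h4⟩ := hT2' ν hν
        have := (hR ν h1).b0
        rw [h4] at this
        simpa [zvec, distInt] using this)
      (fun ν hν => by
        obtain ⟨h1, h2, h3, h4⟩ := hT2' ν hν
        have := (hR ν h1).hit
        rw [h3] at this
        simpa only [zvec, Fin.cons_succ] using this)
    refine this.trans (le_of_eq ?_)
    ring

/-- By the lower bound on `q ‖q θ‖`, a sufficiently shrunk two-dimensional box contains no nonzero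
`(q, p)`. -/
theorem corner_empty {D : ℕ} {θ κ1 η : ℝ} {Bq : ℕ} (G : GoodTheta D κ1 η Bq θ)
    (e'' k : ℕ) (hk : k < e'') (b0 : ℝ) (hb0 : 0 < b0) (hb01 : b0 ≤ 1) (h : ℕ) (hh : 5 ≤ h)
    (hX : 16 * (phi D e'' * (2 ^ (k + 1) * b0)) < η * h ^ 2)
    (q p : ℤ) (hq : |(q : ℝ)| ≤ (4 / h) * 2 ^ (k + 1)) (hp : |(q : ℝ) * θ - p| ≤ (4 / h) * b0) :
    q = 0 ∧ p = 0 := by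
  have hh0 : (0 : ℝ) < h := by exact_mod_cast (show 0 < h by omega)
  have hh5 : (5 : ℝ) ≤ h := by exact_mod_cast hh
  have h4 : (4 : ℝ) / h < 1 := by rw [div_lt_one hh0]; linarith
  have h40 : (0 : ℝ) < 4 / h := by positivity
  by_cases hq0 : q = 0
  · refine ⟨hq0, ?_⟩
    subst hq0
    rw [Int.cast_zero, zero_mul, zero_sub, abs_neg] at hp
    have : |(p : ℝ)| < 1 := by nlinarith
    have : |p| < 1 := by exact_mod_cast this
    exact Int.abs_lt_one_iff.1 this
  · exfalso
    set Q := q.natAbs with hQ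
    have hQ1 : 1 ≤ Q := Nat.one_le_iff_ne_zero.2 (by rwa [hQ, Ne, Int.natAbs_eq_zero])
    have hQr : (Q : ℝ) = |(q : ℝ)| := by
      rw [hQ, Nat.cast_natAbs]; push_cast; rfl
    rw [← hQr] at hq
    have hQle : (Q : ℝ) ≤ 2 ^ (k + 1) := by
      have : (0 : ℝ) < 2 ^ (k + 1) := by positivity
      nlinarith
    have hQle' : Q ≤ 2 ^ e'' :=
      (show Q ≤ 2 ^ (k + 1) by exact_mod_cast hQle).trans (Nat.pow_le_pow_right (by norm_num) hk)
    have hlog : Nat.log 2 Q ≤ e'' := by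
      have := Nat.log_mono_right (b := 2) hQle'
      rwa [Nat.log_pow (by norm_num)] at this
    have h1 := G.low Q hQ1
    have hphi : (phi D (Nat.log 2 Q) : ℝ) ≤ phi D e'' := by exact_mod_cast phi_mono D hlog
    have hd := (distInt_natAbs q θ p).trans hp
    have h2 : η ≤ phi D e'' * (((4 / h) * 2 ^ (k + 1)) * ((4 / h) * b0)) :=
      h1.trans (mul_le_mul hphi (mul_le_mul hq hd (distInt_nonneg _) (by positivity))
        (mul_nonneg (by positivity) (distInt_nonneg _)) (by positivity))
    have h3 : phi D e'' * (((4 / h : ℝ) * 2 ^ (k + 1)) * ((4 / h) * b0)) * h ^ 2 =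
      16 * (phi D e'' * (2 ^ (k + 1) * b0)) := by field_simp; norm_num
    have h5 := mul_le_mul_of_nonneg_right h2 (by positivity : (0 : ℝ) ≤ (h : ℝ) ^ 2)
    rw [h3] at h5
    linarith

/-- For `2 ^ e ≤ q < 2 ^ e''` every dyadic exponent ranges over at most `e'' - e + 1` values. -/
theorem corner_keys {V : Type*} {D : ℕ} (T : Finset V) (k : V → ℕ) (s : V → Fin D → ℕ)
    (e e'' : ℕ) (hk : ∀ v ∈ T, e ≤ k v ∧ k v < e'') (hs : ∀ v ∈ T, ∀ i, s v i + k v ≤ e'') :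
    (T.image (fun v => (k v, s v))).card ≤ (e'' - e + 1) ^ (D + 1) := by
  classical
  let A : Finset (ℕ × (Fin D → ℕ)) := Finset.Ico e e'' ×ˢ
    Fintype.piFinset (fun _ => Finset.range (e'' - e + 1))
  have hA : A.card ≤ (e'' - e + 1) ^ (D + 1) := by
    simp only [A, Finset.card_product, Finset.card_range, Nat.card_Ico, Fintype.card_piFinset,
      Finset.prod_const, Finset.card_univ, Fintype.card_fin]
    rw [pow_succ, mul_comm]
    exact Nat.mul_le_mul_left _ (by omega)
  refine (Finset.card_le_card ?_).trans hA
  intro ks hks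
  obtain ⟨v, hv, rfl⟩ := Finset.mem_image.1 hks
  simp only [A, Finset.mem_product, Finset.mem_Ico, Fintype.mem_piFinset, Finset.mem_range]
  refine ⟨hk v hv, fun i => ?_⟩
  have := hs v hv i
  have := hk v hv
  omega

/-- The number of subcubes discarded because of some `q ≥ 2 ^ e` with `q ‖q θ‖ ≥ κ1`. -/
theorem corner_count {D : ℕ} {θ κ1 η : ℝ} {Bq : ℕ} (G : GoodTheta D κ1 η Bq θ)
    (hη : 0 < η) (hηκ : η ≤ κ1) (hκ11 : κ1 ≤ 1) (a : Fin D → ℝ) (e e' e'' : ℕ)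
    (hee : e ≤ e'') (κ : ℝ) (hκ0 : 0 < κ) (Lam : ℝ) (hLam0 : 0 < Lam)
    (hLam : (phi D e'' : ℝ) ≤ Lam ^ 2 * (η * κ1))
    (T : Finset (Fin D → ℤ)) (q k s0 : (Fin D → ℤ) → ℕ) (s : (Fin D → ℤ) → Fin D → ℕ)
    (α : (Fin D → ℤ) → Fin D → ℝ)
    (hR : ∀ ν ∈ T, Rec θ a e e' e'' κ ν (q ν) (k ν) (s0 ν) (s ν) (α ν))
    (hk : ∀ ν ∈ T, e ≤ k ν) (hne : ∀ ν ∈ T, κ1 ≤ q ν * distInt (q ν * θ)) :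
    (T.card : ℝ) ≤ (((e'' - e + 1) ^ (D + 1) : ℕ) : ℝ) *
      (2 * (98 * Lam * (21 ^ D * ((1 / 2) ^ e / (1 / 2) ^ e'') ^ D)) * (2 ^ (D + 1) * κ)) := by
  classical
  refine sum_types T (fun ν => (k ν, s ν)) s0 _
    (corner_keys T k s e e'' (fun ν hν => ⟨hk ν hν, (hR ν hν).k_lt⟩)
      (fun ν hν i => (hR ν hν).s_le i))
    (fun t => 2 ^ t.1 * ∏ i, (1 / 2 : ℝ) ^ t.2 i) (fun t => by positivity) _ _ (by positivity)
    (by positivity) (fun ν hν => ?_) (fun t m => ?_)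
  · have := (hR ν hν).prod1
    calc _ = 2 ^ k ν * (1 / 2 : ℝ) ^ s0 ν * ∏ i, (1 / 2 : ℝ) ^ s ν i := by ring
      _ ≤ _ := this
  · set T2 := T.filter (fun ν => (k ν, s ν) = t ∧ s0 ν = m) with hT2
    rcases T2.eq_empty_or_nonempty with h0 | ⟨ν1, hν1⟩
    · rw [h0]; simp only [Finset.card_empty, Nat.cast_zero]; positivity
    have hT2' : ∀ ν ∈ T2, ν ∈ T ∧ k ν = t.1 ∧ s ν = t.2 ∧ s0 ν = m := by
      intro ν hν
      obtain ⟨h1, h2, h3⟩ := Finset.mem_filter.1 hν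
      exact ⟨h1, by rw [← h2], by rw [← h2], h3⟩
    obtain ⟨hT1, hk1, hs1, hm1⟩ := hT2' ν1 hν1
    have hR1 := hR ν1 hT1
    have hke : t.1 < e'' := by rw [← hk1]; exact hR1.k_lt
    have hke' : e ≤ t.1 := by rw [← hk1]; exact hk ν1 hT1
    have hκ1 : 0 < κ1 := by linarith
    set W1 : ℝ := 2 ^ (t.1 + 1) * (1 / 2) ^ m with hW1
    have hW1κ : κ1 ≤ W1 := by
      refine (hne ν1 hT1).trans ?_
      have e1 := hR1.qr2
      have e2 := hR1.b0
      rw [hk1] at e1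
      rw [hm1] at e2
      exact mul_le_mul e1 e2 (distInt_nonneg _) (by positivity)
    have hW10 : 0 < W1 := by linarith
    have hφ : (1 : ℝ) ≤ phi D e'' := by exact_mod_cast phi_pos D e''
    have hsq : phi D e'' * W1 ≤ η * (W1 * Lam) ^ 2 := by
      calc phi D e'' * W1 ≤ Lam ^ 2 * (η * κ1) * W1 := by gcongr
        _ ≤ Lam ^ 2 * (η * W1) * W1 := by gcongr
        _ = _ := by ring
    have hX1 : 1 ≤ W1 * Lam := by
      have : η * 1 ≤ η * (W1 * Lam) ^ 2 := by
        refine le_trans ?_ hsq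
        nlinarith
      have := le_of_mul_le_mul_left this hη
      by_contra hc
      push Not at hc
      have h0 : 0 ≤ W1 * Lam := by positivity
      nlinarith
    have hpow : (1 : ℝ) ≤ 2 ^ t.1 * (1 / 2) ^ e := by
      rw [one_div, inv_pow, ← div_eq_mul_inv, one_le_div (by positivity)]
      exact pow_le_pow_right₀ (by norm_num) hke'
    -- `h` is large enough for `hsq` to give `16 * phi * W1 < η * h ^ 2`, as `corner_empty` needs
    have hceil := Nat.le_ceil (5 * (W1 * Lam))
    have hceil2 := Nat.ceil_lt_add_one (show 0 ≤ 5 * (W1 * Lam) by positivity)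
    have hh5 : 5 ≤ ⌈5 * (W1 * Lam)⌉₊ := by
      have : (5 : ℝ) ≤ ⌈5 * (W1 * Lam)⌉₊ := by linarith
      exact_mod_cast this
    have := corner_type θ a ((1 / 2) ^ e) ((1 / 2) ^ e'') ((1 / 2) ^ m)
      (fun i => (1 / 2) ^ t.2 i) t.1 (by positivity)
      (pow_le_pow_of_le_one (by norm_num) (by norm_num) hee) (by positivity)
      (fun i => by positivity) (fun i => pow_le_one₀ (by norm_num) (by norm_num)) hpow
      ⌈5 * (W1 * Lam)⌉₊ (by omega) (W1 * Lam) (by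
        have : 0 < Lam := hLam0
        have hL1 : 1 ≤ Lam := by
          by_contra hc
          push Not at hc
          have e1 : η * κ1 ≤ 1 := by nlinarith
          have e2 : Lam ^ 2 < 1 := by nlinarith
          have e3 : 0 < η * κ1 := by positivity
          nlinarith
        nlinarith) (by linarith)
      (corner_empty G e'' t.1 hke ((1 / 2) ^ m) (by positivity)
        (pow_le_one₀ (by norm_num) (by norm_num)) _ hh5 (by
          have h1 : (5 * (W1 * Lam)) ^ 2 ≤ (⌈5 * (W1 * Lam)⌉₊ : ℝ) ^ 2 := by gcongr
          have h2 : η * (5 * (W1 * Lam)) ^ 2 ≤ η * (⌈5 * (W1 * Lam)⌉₊ : ℝ) ^ 2 := by gcongr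
          have h3 : 0 < phi D e'' * W1 := by positivity
          have h4 : η * (5 * (W1 * Lam)) ^ 2 = 25 * (η * (W1 * Lam) ^ 2) := by ring
          linarith))
      T2 (fun ν => zvec θ (α ν) (q ν))
      (fun ν hν => by
        obtain ⟨h1, h2, h3, h4⟩ := hT2' ν hν
        have := (hR ν h1).qr1
        rw [h2] at this
        simpa [zvec] using this)
      (fun ν hν => by
        obtain ⟨h1, h2, h3, h4⟩ := hT2' ν hν
        have := (hR ν h1).qr2
        rw [h2] at this
        simpa [zvec] using this)
      (fun ν hν => by
        obtain ⟨h1, h2, h3, h4⟩ := hT2' ν hν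
        have := (hR ν h1).b0
        rw [h4] at this
        simpa [zvec, distInt] using this)
      (fun ν hν => by
        obtain ⟨h1, h2, h3, h4⟩ := hT2' ν hν
        have := (hR ν h1).hit
        rw [h3] at this
        simpa only [zvec, Fin.cons_succ] using this)
    refine this.trans (le_of_eq ?_)
    rw [hW1]; ring

/-- At most `√y` positive integers have square at most `y`. -/
theorem count_sq (J : Finset ℕ) (y : ℝ) (h1 : ∀ j ∈ J, 1 ≤ j) (h2 : ∀ j ∈ J, (j : ℝ) ^ 2 ≤ y) :
    (J.card : ℝ) ≤ √y := by
  have hsub : J ⊆ Finset.Icc 1 ⌊√y⌋₊ := by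
    intro j hj
    rw [Finset.mem_Icc]
    exact ⟨h1 j hj, Nat.le_floor (Real.le_sqrt_of_sq_le (h2 j hj))⟩
  have := Finset.card_le_card hsub
  rw [Nat.card_Icc, Nat.add_sub_cancel] at this
  exact le_trans (by exact_mod_cast this) (Nat.floor_le (Real.sqrt_nonneg _))

/-- The number of subcubes discarded because of an exceptional `q ≥ 2 ^ e`, that is, with
`q ‖q θ‖ < κ1`. Such `q` are multiples `j Q0`; for given exponents `s`, the lower bound on `q ‖q θ‖` bounds
`j ^ 2 ∏ 2⁻ˢ`, which leaves `√(∏ 2⁻ˢ)` in the count and makes the sum over `s` geometric. -/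
theorem exc_count {D : ℕ} {θ κ1 η : ℝ} {Bq : ℕ} (G : GoodTheta D κ1 η Bq θ)
    (hη : 0 < η) (a : Fin D → ℝ) (e e' e'' : ℕ)
    (hee : e ≤ e'') (hspec : e'' ≤ 2 * e ∨ e'' ≤ Bq) (κ : ℝ)
    (T : Finset (Fin D → ℤ)) (q k s0 : (Fin D → ℤ) → ℕ) (s : (Fin D → ℤ) → Fin D → ℕ)
    (α : (Fin D → ℤ) → Fin D → ℝ)
    (hR : ∀ ν ∈ T, Rec θ a e e' e'' κ ν (q ν) (k ν) (s0 ν) (s ν) (α ν))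
    (hk : ∀ ν ∈ T, e ≤ k ν) (hex : ∀ ν ∈ T, q ν * distInt (q ν * θ) < κ1) :
    (T.card : ℝ) ≤ 4 ^ D * (√(2 ^ D * κ * phi D e'' / η) *
      (21 ^ D * ((1 / 2) ^ e / (1 / 2) ^ e'') ^ D)) := by
  classical
  obtain ⟨Q0, hQ0, hspec⟩ := G.spec e e'' hspec
  have : ∀ ν, ∃ j : ℕ, ν ∈ T → 1 ≤ j ∧ q ν = j * Q0 ∧
      (j : ℝ) ^ 2 * η ≤ phi D e'' * (q ν * distInt (q ν * θ)) := by
    intro ν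
    by_cases hν : ν ∈ T
    · obtain ⟨j, hj⟩ := hspec (q ν) ((Nat.pow_le_pow_right (by norm_num) (hk ν hν)).trans (hR ν hν).hk1)
        (hR ν hν).hq2 (hex ν hν)
      exact ⟨j, fun _ => hj⟩
    · exact ⟨0, fun h => absurd h hν⟩
  choose j hj using this
  set Z := 2 ^ D * κ * phi D e'' / η with hZ
  set Y : ℝ := 21 ^ D * ((1 / 2) ^ e / (1 / 2) ^ e'') ^ D with hY
  have hY0 : 0 ≤ Y := by positivity
  have hfib : ∀ t ∈ T.image s, ((T.filter (fun ν => s ν = t)).card : ℝ) ≤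
      (√Z * Y) * ∏ i, (3 / 4 : ℝ) ^ t i := by
    intro t _
    set T1 := T.filter (fun ν => s ν = t)
    set P : ℝ := ∏ i, (1 / 2 : ℝ) ^ t i with hP
    have hP0 : 0 < P := by positivity
    have h1 := fiber_count T1 j (21 ^ D * P * ((1 / 2) ^ e / (1 / 2) ^ e'') ^ D) (by
      intro m hm
      obtain ⟨ν1, hν1, hjm⟩ := Finset.mem_image.1 hm
      have hν1T := (Finset.mem_filter.1 hν1).1
      have hqq : ∀ ν ∈ T1.filter (fun ν => j ν = m), ν ∈ T ∧ s ν = t ∧ q ν = q ν1 := by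
        intro ν hν
        rw [Finset.mem_filter, Finset.mem_filter] at hν
        refine ⟨hν.1.1, hν.1.2, ?_⟩
        rw [(hj ν hν.1.1).2.1, (hj ν1 hν1T).2.1, hν.2, hjm]
      have hpow : (1 : ℝ) ≤ 2 ^ k ν1 * (1 / 2) ^ e := by
        rw [one_div, inv_pow, ← div_eq_mul_inv, one_le_div (by positivity)]
        exact pow_le_pow_right₀ (by norm_num) (hk ν1 hν1T)
      refine fixed_type a ((1 / 2) ^ e) ((1 / 2) ^ e'') (fun i => (1 / 2) ^ t i) (k ν1) (by positivity)
        (pow_le_pow_of_le_one (by norm_num) (by norm_num) hee) (fun i => by positivity)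
        (fun i => pow_le_one₀ (by norm_num) (by norm_num)) hpow (q ν1)
        (by simpa using (hR ν1 hν1T).qr1) (by simpa using (hR ν1 hν1T).qr2) _
        (fun ν i => round ((q ν1 : ℝ) * α ν i)) ?_
      intro ν hν
      obtain ⟨h1, h2, h3⟩ := hqq ν hν
      have := (hR ν h1).hit
      rw [h2, h3] at this
      exact this)
    have h2 := count_sq (T1.image j) (Z / P) (by
      intro m hm
      obtain ⟨ν, hν, rfl⟩ := Finset.mem_image.1 hm
      exact (hj ν (Finset.mem_filter.1 hν).1).1) (by
      intro m hm
      obtain ⟨ν, hν, rfl⟩ := Finset.mem_image.1 hm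
      obtain ⟨hνT, hst⟩ := Finset.mem_filter.1 hν
      have e1 := (hj ν hνT).2.2
      have e2 := (hR ν hνT).prod2
      rw [hst] at e2
      rw [le_div_iff₀ hP0, hZ, le_div_iff₀ hη]
      calc (j ν : ℝ) ^ 2 * P * η = ((j ν : ℝ) ^ 2 * η) * P := by ring
        _ ≤ (phi D e'' * (q ν * distInt (q ν * θ))) * P := by gcongr
        _ = phi D e'' * (q ν * distInt (q ν * θ) * P) := by ring
        _ ≤ phi D e'' * (2 ^ D * κ) := by gcongr
        _ = _ := by ring)
    -- `√(1/2) ≤ 3/4`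
    have h3 : √P ≤ ∏ i, (3 / 4 : ℝ) ^ t i := by
      apply Real.sqrt_le_iff.2
      refine ⟨by positivity, ?_⟩
      rw [hP, ← Finset.prod_pow]
      refine Finset.prod_le_prod (fun i _ => by positivity) fun i _ => ?_
      rw [← pow_mul, mul_comm, pow_mul]
      gcongr; norm_num
    calc ((T.filter (fun ν => s ν = t)).card : ℝ) ≤ _ := h1
      _ ≤ √(Z / P) * (21 ^ D * P * ((1 / 2) ^ e / (1 / 2) ^ e'') ^ D) := by gcongr
      _ = (√Z * Y) * √P := by
          rw [Real.sqrt_div' _ hP0.le, hY]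
          have : P = √P * √P := (Real.mul_self_sqrt hP0.le).symm
          have h0 : √P ≠ 0 := (Real.sqrt_pos.2 hP0).ne'
          calc √Z / √P * (21 ^ D * P * ((1 / 2) ^ e / (1 / 2) ^ e'') ^ D)
              = √Z / √P * (21 ^ D * (√P * √P) * ((1 / 2) ^ e / (1 / 2) ^ e'') ^ D) := by rw [← this]
            _ = _ := by field_simp
      _ ≤ _ := by gcongr
  rw [Finset.card_eq_sum_card_image s T]
  push_cast
  refine (Finset.sum_le_sum hfib).trans ?_
  rw [← Finset.mul_sum, mul_comm]
  refine mul_le_mul_of_nonneg_right ?_ (by positivity)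
  have hsub : T.image s ⊆ Fintype.piFinset (fun _ : Fin D => Finset.range (e'' + 1)) := by
    intro t ht
    obtain ⟨ν, hν, rfl⟩ := Finset.mem_image.1 ht
    rw [Fintype.mem_piFinset]
    intro i
    have := (hR ν hν).s_le i
    rw [Finset.mem_range]; omega
  refine (Finset.sum_le_sum_of_subset_of_nonneg hsub fun _ _ _ => by positivity).trans ?_
  rw [Finset.sum_prod_piFinset (Finset.range (e'' + 1)) (fun (_ : Fin D) m => (3 / 4 : ℝ) ^ m)]
  have := geo_sum (Finset.range (e'' + 1)) (3 / 4) 1 (by norm_num) (by norm_num) (by norm_num)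
    (fun s _ => pow_le_one₀ (by norm_num) (by norm_num))
  norm_num at this
  calc ∏ i : Fin D, ∑ m ∈ Finset.range (e'' + 1), (3 / 4 : ℝ) ^ m ≤ ∏ i : Fin D, (4 : ℝ) :=
        Finset.prod_le_prod (fun _ _ => by positivity) fun _ _ => this
    _ = 4 ^ D := by simp

/-- One step of the construction discards at most the proportion `δ` of the subcubes of side `2⁻ᵉ''`.
The three conditions `hC2`, `hC3`, `hC4` correspond to the denominators `q < 2 ^ e`, the generic ones
`q ≥ 2 ^ e`, and the exceptional ones. -/
theorem step {D : ℕ} {θ κ1 η : ℝ} {Bq : ℕ} (G : GoodTheta D κ1 η Bq θ)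
    (hη : 0 < η) (hηκ : η ≤ κ1) (hκ11 : κ1 ≤ 1) (a : Fin D → ℝ) (e e' e'' : ℕ)
    (hee : e ≤ e') (hee' : e' ≤ e'') (hspec : e'' ≤ 2 * e ∨ e'' ≤ Bq)
    (κ : ℝ) (hκ0 : 0 < κ) (hκ1 : κ ≤ 1)
    (halive : ∀ q : ℕ, 1 ≤ q → q < 2 ^ e → κ ≤ val θ a q ((1 / 2) ^ e))
    (δ : ℝ)
    (hC1 : 0 < e → (CD D / κ + 2) ^ (D + 1) ≤ κ * 2 ^ (e' - e))
    (hC2 : D * (((e * (e'' - e' + 2) * (e'' + 1) ^ (D - 1) : ℕ) : ℝ) *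
      (2 * ((2 * D + 7) ^ (D + 2) * 2 * 9 ^ D) * (2 ^ (D + 1) * κ))) ≤ δ / 3)
    (Lam : ℝ) (hLam0 : 0 < Lam) (hLam : (phi D e'' : ℝ) ≤ Lam ^ 2 * (η * κ1))
    (hC3 : (((e'' - e + 1) ^ (D + 1) : ℕ) : ℝ) * (2 * (98 * Lam * 21 ^ D) * (2 ^ (D + 1) * κ)) ≤ δ / 3)
    (hC4 : 4 ^ D * (√(2 ^ D * κ * phi D e'' / η) * 21 ^ D) ≤ δ / 3)
    (T : Finset (Fin D → ℤ))
    (hT : ∀ ν ∈ T, (∀ i, 0 ≤ ν i) ∧ (∀ i, (2 * (ν i : ℝ) + 1) * (1 / 2) ^ e'' ≤ (1 / 2) ^ e) ∧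
      ∃ α : Fin D → ℝ, (∀ i, a i + 2 * (1 / 2) ^ e'' * ν i ≤ α i ∧
      α i ≤ a i + 2 * (1 / 2) ^ e'' * ν i + (1 / 2) ^ e'') ∧ ∃ q : ℕ, 1 ≤ q ∧ q < 2 ^ e'' ∧
      val θ α q ((1 / 2) ^ e'') < κ ∧ (q < 2 ^ e' → κ ≤ val θ α q ((1 / 2) ^ e'))) :
    (T.card : ℝ) ≤ δ * ((1 / 2) ^ e / (1 / 2) ^ e'') ^ D := by
  classical
  have : ∀ ν : Fin D → ℤ, ∃ q k s0, ∃ s : Fin D → ℕ, ∃ α : Fin D → ℝ,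
      ν ∈ T → Rec θ a e e' e'' κ ν q k s0 s α := by
    intro ν
    by_cases hν : ν ∈ T
    · obtain ⟨h0, h1, h2⟩ := hT ν hν
      obtain ⟨q, k, s0, s, α, h⟩ := exists_rec G hη a e e' e'' κ ν h0 h1 h2
      exact ⟨q, k, s0, s, α, fun _ => h⟩
    · exact ⟨0, 0, 0, 0, 0, fun h => absurd h hν⟩
  choose q k s0 s α hR using this
  set Y : ℝ := ((1 / 2) ^ e / (1 / 2) ^ e'') ^ D with hY
  have hY0 : 0 ≤ Y := by positivity
  set T1 := T.filter (fun ν => k ν < e)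
  set T2 := (T.filter (fun ν => ¬ k ν < e)).filter (fun ν => κ1 ≤ q ν * distInt (q ν * θ))
  set T3 := (T.filter (fun ν => ¬ k ν < e)).filter (fun ν => ¬ κ1 ≤ q ν * distInt (q ν * θ))
  have hsplit : T.card = T1.card + (T2.card + T3.card) := by
    rw [Finset.card_filter_add_card_filter_not, Finset.card_filter_add_card_filter_not]
  have h1 := noncorner_count θ a e e' e'' hee hee' κ hκ0 hκ1 halive hC1 T1 q k s0 s α
    (fun ν hν => hR ν (Finset.mem_filter.1 hν).1) (fun ν hν => (Finset.mem_filter.1 hν).2)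
  have h2 := corner_count G hη hηκ hκ11 a e e' e'' (hee.trans hee') κ hκ0 Lam hLam0 hLam T2 q k s0 s α
    (fun ν hν => hR ν (Finset.mem_filter.1 (Finset.mem_filter.1 hν).1).1)
    (fun ν hν => not_lt.1 (Finset.mem_filter.1 (Finset.mem_filter.1 hν).1).2)
    (fun ν hν => (Finset.mem_filter.1 hν).2)
  have h3 := exc_count G hη a e e' e'' (hee.trans hee') hspec κ T3 q k s0 s α
    (fun ν hν => hR ν (Finset.mem_filter.1 (Finset.mem_filter.1 hν).1).1)
    (fun ν hν => not_lt.1 (Finset.mem_filter.1 (Finset.mem_filter.1 hν).1).2)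
    (fun ν hν => not_le.1 (Finset.mem_filter.1 hν).2)
  have h1' := mul_le_mul_of_nonneg_right hC2 hY0
  have h2' := mul_le_mul_of_nonneg_right hC3 hY0
  have h3' := mul_le_mul_of_nonneg_right hC4 hY0
  rw [← hY] at h1 h2 h3
  rw [hsplit]
  push_cast at h1 h2 h3 h1' h2' h3' ⊢
  linarith

/-! ### Hausdorff measure by slicing -/

open MeasureTheory Set in
/-- A set containing all `G x y`, where `x` is a Hölder function of the point with exponent `s1` and,
on each fibre, `y` is one with exponent `s2`, has positive `(s1 + s2)`-dimensional Hausdorff measure. Given a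
cover of `E` by sets `t n`, the set of `x` whose fibre meets `t n` has measure `≲ diam ^ s1`, and each fibre
section has measure `≲ diam ^ s2`; integrate over `x`. No measurability of `G` is required. -/
theorem slicing {X : Type*} [MetricSpace X] [MeasurableSpace X] [BorelSpace X] (E : Set X)
    (G : ℝ → ℝ → X) (hG : ∀ x ∈ Ico (0 : ℝ) 1, ∀ y ∈ Ico (0 : ℝ) 1, G x y ∈ E)
    (s1 s2 : ℝ) (hs1 : 0 < s1) (hs2 : 0 < s2) (C1 C2 : NNReal)
    (h1 : ∀ x ∈ Ico (0 : ℝ) 1, ∀ x' ∈ Ico (0 : ℝ) 1, ∀ y ∈ Ico (0 : ℝ) 1, ∀ y' ∈ Ico (0 : ℝ) 1,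
      edist x x' ≤ C1 * edist (G x y) (G x' y') ^ s1)
    (h2 : ∀ x ∈ Ico (0 : ℝ) 1, ∀ y ∈ Ico (0 : ℝ) 1, ∀ y' ∈ Ico (0 : ℝ) 1,
      edist y y' ≤ C2 * edist (G x y) (G x y') ^ s2) :
    μH[s1 + s2] E ≠ 0 := by
  have key : ∀ t : ℕ → Set X, E ⊆ ⋃ n, t n →
      1 ≤ (C1 * C2 : ENNReal) * ∑' n, ⨆ _ : (t n).Nonempty, Metric.ediam (t n) ^ (s1 + s2) := by
    intro t ht
    set I := Ico (0 : ℝ) 1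
    have hI : volume I = 1 := by simp [I]
    set A : ℕ → Set ℝ := fun n => {x | x ∈ I ∧ ∃ y ∈ I, G x y ∈ t n}
    have hA : ∀ n, volume (closure (A n)) ≤ C1 * Metric.ediam (t n) ^ s1 := by
      intro n
      refine (Real.volume_le_diam _).trans ?_
      rw [Metric.ediam_closure]
      refine Metric.ediam_le ?_
      rintro x ⟨hx, y, hy, hxy⟩ x' ⟨hx', y', hy', hxy'⟩
      refine (h1 x hx x' hx' y hy y' hy').trans ?_
      gcongr
      exact Metric.edist_le_ediam_of_mem hxy hxy'
    have hx : ∀ x ∈ I, 1 ≤ ∑' n, (closure (A n)).indicator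
        (fun _ => C2 * Metric.ediam (t n) ^ s2) x := by
      intro x hx
      have hc : I ⊆ ⋃ n, {y | y ∈ I ∧ G x y ∈ t n} := by
        intro y hy
        obtain ⟨n, hn⟩ := mem_iUnion.1 (ht (hG x hx y hy))
        exact mem_iUnion.2 ⟨n, hy, hn⟩
      rw [← hI]
      refine (measure_mono hc).trans ((measure_iUnion_le _).trans (ENNReal.tsum_le_tsum fun n => ?_))
      rcases eq_empty_or_nonempty {y | y ∈ I ∧ G x y ∈ t n} with he | ⟨y, hy, hyt⟩
      · rw [he]; simp
      · have hxA : x ∈ A n := ⟨hx, y, hy, hyt⟩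
        rw [indicator_of_mem (subset_closure hxA)]
        refine (Real.volume_le_diam _).trans (Metric.ediam_le ?_)
        rintro y ⟨hy, hy'⟩ z ⟨hz, hz'⟩
        refine (h2 x hx y hy z hz).trans ?_
        gcongr
        exact Metric.edist_le_ediam_of_mem hy' hz'
    calc (1 : ENNReal) = ∫⁻ x in I, 1 := by rw [setLIntegral_one, hI]
      _ ≤ ∫⁻ x in I, ∑' n, (closure (A n)).indicator (fun _ => C2 * Metric.ediam (t n) ^ s2) x :=
        setLIntegral_mono' measurableSet_Ico hx
      _ ≤ ∫⁻ x, ∑' n, (closure (A n)).indicator (fun _ => C2 * Metric.ediam (t n) ^ s2) x :=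
        setLIntegral_le_lintegral _ _
      _ = ∑' n, ∫⁻ x, (closure (A n)).indicator (fun _ => C2 * Metric.ediam (t n) ^ s2) x :=
        lintegral_tsum fun n => (measurable_const.indicator isClosed_closure.measurableSet).aemeasurable
      _ = ∑' n, (C2 * Metric.ediam (t n) ^ s2) * volume (closure (A n)) := by
        congr 1; ext n
        rw [lintegral_indicator isClosed_closure.measurableSet, setLIntegral_const]
      _ ≤ ∑' n, (C1 * C2 : ENNReal) * ⨆ _ : (t n).Nonempty, Metric.ediam (t n) ^ (s1 + s2) := by
        refine ENNReal.tsum_le_tsum fun n => ?_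
        rcases (t n).eq_empty_or_nonempty with he | hne
        · have : A n = ∅ := by ext x; simp [A, he]
          simp [this]
        · rw [iSup_pos hne, ENNReal.rpow_add_of_nonneg _ _ hs1.le hs2.le]
          calc _ ≤ (C2 * Metric.ediam (t n) ^ s2) * (C1 * Metric.ediam (t n) ^ s1) := by
                gcongr; exact hA n
            _ = _ := by ring
      _ = _ := ENNReal.tsum_mul_left
  intro h0
  rw [Measure.hausdorffMeasure_apply] at h0
  have h3 := le_iSup₂ (f := fun (r : ENNReal) (_ : 0 < r) => ⨅ (t : ℕ → Set X) (_ : E ⊆ ⋃ n, t n) (_ : ∀ n, Metric.ediam (t n) ≤ r),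
          ∑' n, ⨆ _ : (t n).Nonempty, Metric.ediam (t n) ^ (s1 + s2)) 1 one_pos
  rw [h0] at h3
  have h4 : ((C1 * C2 + 1 : NNReal) : ENNReal)⁻¹ ≤ 0 := by
    refine le_trans ?_ h3
    refine le_iInf₂ fun t ht => le_iInf fun _ => ?_
    have := key t ht
    rw [ENNReal.inv_le_iff_inv_le, ← one_div]
    refine ENNReal.div_le_of_le_mul ?_
    refine this.trans ?_
    gcongr
    push_cast
    exact le_self_add
  exact ENNReal.inv_ne_zero.2 ENNReal.coe_ne_top (le_antisymm h4 bot_le)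

/-! ### A Cantor construction -/

/-- A nested construction of cubes: a cube of stage `n` and side `ℓ n` contains `M n` cubes of stage
`n + 1` whose distance is at least their side. The limit set is parametrised by `[0, 1)` through mixed-radix
digits, and the inverse of the parametrisation is Hölder with exponent `s` as soon as `ℓ (n + 1) ^ s P n` is
bounded below, `P n` being the number of cubes of stage `n`. -/
theorem cantor {D : ℕ} (ℓ : ℕ → ℝ) (hℓ : ∀ n, 0 < ℓ n) (M P : ℕ → ℕ) (hM : ∀ n, 1 ≤ M n)
    (hP0 : P 0 = 1) (hP : ∀ n, P (n + 1) = P n * M n)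
    (Inv : ℕ → (Fin D → ℝ) → Prop) (a0 : Fin D → ℝ) (h0 : Inv 0 a0)
    (hstep : ∀ n a, Inv n a → ∃ c : Fin (M n) → (Fin D → ℝ),
      (∀ j, Inv (n + 1) (c j) ∧ ∀ i, a i ≤ c j i ∧ c j i + ℓ (n + 1) ≤ a i + ℓ n) ∧
      ∀ j j', j ≠ j' → ∃ i, 2 * ℓ (n + 1) ≤ |c j i - c j' i|)
    (hlim : Filter.Tendsto ℓ Filter.atTop (nhds 0)) (s C : ℝ) (hs : 0 < s) (hC : 0 ≤ C)
    (hsC : ∀ n, 1 ≤ C * ℓ (n + 1) ^ s * P n) :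
    ∃ g : ℝ → Fin D → ℝ, ∀ x ∈ Set.Ico (0 : ℝ) 1,
      (∀ n, ∃ a, Inv n a ∧ ∀ i, a i ≤ g x i ∧ g x i ≤ a i + ℓ n) ∧
      ∀ x' ∈ Set.Ico (0 : ℝ) 1, |x - x'| ≤ C * dist (g x) (g x') ^ s := by
  choose F hF hsep using hstep
  let dig : ℝ → ∀ n, Fin (M n) := fun x n =>
    ⟨⌊x * P (n + 1)⌋₊ % M n, Nat.mod_lt _ (hM n)⟩
  let node : ℝ → ∀ n, {a // Inv n a} := fun x n =>
    Nat.rec ⟨a0, h0⟩ (fun n a => ⟨F n a.1 a.2 (dig x n), (hF n a.1 a.2 _).1⟩) n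
  have node_succ : ∀ x n, (node x (n + 1)).1 = F n (node x n).1 (node x n).2 (dig x n) :=
    fun x n => rfl
  have mono : ∀ x n i, (node x n).1 i ≤ (node x (n + 1)).1 i := fun x n i => by
    rw [node_succ]; exact ((hF n _ (node x n).2 (dig x n)).2 i).1
  have anti : ∀ x n i, (node x (n + 1)).1 i + ℓ (n + 1) ≤ (node x n).1 i + ℓ n := fun x n i => by
    rw [node_succ]; exact ((hF n _ (node x n).2 (dig x n)).2 i).2
  have mono' : ∀ x i, Monotone fun n => (node x n).1 i := fun x i => monotone_nat_of_le_succ (mono x · i)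
  have anti' : ∀ x i, Antitone fun n => (node x n).1 i + ℓ n :=
    fun x i => antitone_nat_of_succ_le (anti x · i)
  have bd : ∀ x i m n, (node x n).1 i ≤ (node x m).1 i + ℓ m := by
    intro x i m n
    have h1 := mono' x i (le_max_left n m)
    have h2 := anti' x i (le_max_right n m)
    have := hℓ (max n m)
    simp only at h1 h2
    linarith
  let g : ℝ → Fin D → ℝ := fun x i => ⨆ n, (node x n).1 i
  have hg1 : ∀ x n i, (node x n).1 i ≤ g x i := fun x n i =>
    le_ciSup (f := fun n => (node x n).1 i) ⟨_, by rintro _ ⟨m, rfl⟩; exact bd x i 0 m⟩ n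
  have hg2 : ∀ x n i, g x i ≤ (node x n).1 i + ℓ n := fun x n i => ciSup_le fun m => bd x i n m
  have Ppos : ∀ n, 0 < P n := by
    intro n
    induction n with
    | zero => rw [hP0]; norm_num
    | succ n ih => rw [hP]; exact Nat.mul_pos ih (hM n)
  have Fc : ∀ n (u v : {a // Inv n a}) j j', u = v → j = j' → F n u.1 u.2 j = F n v.1 v.2 j' := by
    rintro n u _ j _ rfl rfl; rfl
  have fl : ∀ (x : ℝ) n, ⌊x * P (n + 1)⌋₊ = M n * ⌊x * P n⌋₊ + (dig x n : ℕ) := by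
    intro x n
    have : ⌊x * P n⌋₊ = ⌊x * P (n + 1)⌋₊ / M n := by
      rw [← Nat.floor_div_natCast, hP]
      congr 1
      have : (M n : ℝ) ≠ 0 := by have := hM n; positivity
      push_cast; field_simp
    rw [this]; exact (Nat.div_add_mod _ _).symm
  have same : ∀ x ∈ Set.Ico (0 : ℝ) 1, ∀ x' ∈ Set.Ico (0 : ℝ) 1, ∀ n, (∀ k < n, dig x k = dig x' k) →
      ⌊x * P n⌋₊ = ⌊x' * P n⌋₊ ∧ node x n = node x' n := by
    intro x hx x' hx' n
    induction n with
    | zero =>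
      intro _
      refine ⟨?_, rfl⟩
      rw [hP0, Nat.cast_one, mul_one, mul_one, Nat.floor_eq_zero.2 hx.2, Nat.floor_eq_zero.2 hx'.2]
    | succ n ih =>
      intro h
      obtain ⟨h1, h2⟩ := ih fun k hk => h k (by omega)
      have h3 := h n (by omega)
      refine ⟨by rw [fl, fl, h1, h3], ?_⟩
      exact Subtype.ext (Fc n _ _ _ _ h2 h3)
  have close : ∀ x ∈ Set.Ico (0 : ℝ) 1, ∀ x' ∈ Set.Ico (0 : ℝ) 1, ∀ n, (∀ k < n, dig x k = dig x' k) →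
      |x - x'| ≤ C * ℓ (n + 1) ^ s := by
    intro x hx x' hx' n h
    have h1 := (same x hx x' hx' n h).1
    have hp : (0 : ℝ) < P n := by exact_mod_cast Ppos n
    have e1 := Nat.floor_le (mul_nonneg hx.1 hp.le)
    have e2 := Nat.lt_floor_add_one (x * P n)
    have e3 := Nat.floor_le (mul_nonneg hx'.1 hp.le)
    have e4 := Nat.lt_floor_add_one (x' * P n)
    rw [h1] at e1 e2
    have h2 : |x - x'| * P n ≤ 1 := by
      have : |x - x'| * P n = |(x - x') * P n| := by rw [abs_mul, abs_of_pos hp]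
      rw [this, abs_le]
      constructor <;> nlinarith
    exact le_of_mul_le_mul_right (h2.trans (hsC n)) hp
  refine ⟨g, fun x hx => ⟨fun n => ⟨(node x n).1, (node x n).2, fun i => ⟨hg1 x n i, hg2 x n i⟩⟩, ?_⟩⟩
  intro x' hx'
  -- at the first differing digit the two points lie in separated cubes of the same parent
  by_cases hne : ∃ n, dig x n ≠ dig x' n
  · classical
    have hn := Nat.find_spec hne
    have hm : ∀ k < Nat.find hne, dig x k = dig x' k := fun k hk => not_not.1 (Nat.find_min hne hk)
    set n := Nat.find hne
    refine (close x hx x' hx' n hm).trans ?_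
    have := hℓ (n + 1)
    gcongr
    have h2 := (same x hx x' hx' n hm).2
    obtain ⟨i, hi⟩ := hsep n (node x n).1 (node x n).2 _ _ hn
    have h3 : F n (node x n).1 (node x n).2 (dig x n) = (node x (n + 1)).1 := rfl
    have h4 : F n (node x n).1 (node x n).2 (dig x' n) = (node x' (n + 1)).1 := by
      rw [node_succ]; exact Fc n _ _ _ _ h2 rfl
    rw [h3, h4] at hi
    refine le_trans ?_ (dist_le_pi_dist _ _ i)
    rw [Real.dist_eq]
    have a1 := hg1 x (n + 1) i
    have a2 := hg2 x (n + 1) i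
    have a3 := hg1 x' (n + 1) i
    have a4 := hg2 x' (n + 1) i
    rcases le_abs.1 hi with hi | hi
    · exact le_abs.2 (Or.inl (by linarith))
    · exact le_abs.2 (Or.inr (by linarith))
  -- all digits agree
  · push Not at hne
    have h1 : Filter.Tendsto (fun n => C * ℓ (n + 1) ^ s) Filter.atTop (nhds 0) := by
      have := ((hlim.comp (Filter.tendsto_add_atTop_nat 1)).rpow_const (p := s) (Or.inr hs.le)).const_mul C
      simpa [Real.zero_rpow hs.ne'] using this
    have h2 : |x - x'| ≤ 0 := ge_of_tendsto' h1 fun n => close x hx x' hx' n fun k _ => hne k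
    exact h2.trans (mul_nonneg hC (by positivity))

/-! ### Choice of parameters -/

/-- A level `e` is followed by a level about `e + KD log₂ e`. -/
def KD (D : ℕ) : ℕ := (D + 1) * (D + 2) + 1

/-- The lower bound `c / ((e + E) ^ D log₂ (e + E))` imposed on the truncated product at level `e`. -/
noncomputable def kap (D : ℕ) (c : ℝ) (E e : ℕ) : ℝ :=
  c / ((e + E : ℕ) ^ D * Nat.log 2 (e + E))

/-- Admissible parameters: `c2`, `c3`, `c4` make the three counts of discarded subcubes small, `big3` makes
the lattice box large enough for the counting, and `big4`, `big5` control the dimension of the limit set. -/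
structure Par (D : ℕ) (η s c : ℝ) (E : ℕ) : Prop where
  c0 : 0 < c
  c1 : c ≤ 1
  c2 : (D * (KD D + 3) * (2 * ((2 * D + 7) ^ (D + 2) * 2 * 9 ^ D) * 2 ^ (D + 1))) * c ≤
    (1 / 4) ^ D / 16 / 3
  c3 : ((2 * KD D + 3) ^ (D + 1) * (2 * (98 * 21 ^ D) * 2 ^ (D + 1)) / η) * c ≤
    (1 / 4) ^ D / 16 / 3
  c4 : (2 ^ D / η) * c ≤ ((1 / 4) ^ D / 16 / 3 / (4 ^ D * 21 ^ D)) ^ 2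
  E2 : 2 ≤ E
  big1 : ∀ y, E ≤ y → 4 * (KD D * Nat.log 2 y + 1) ≤ y
  big2 : ∀ y, E ≤ y → Nat.log 2 y ^ (2 * D + 1) ≤ y ^ D
  big3 : ∀ y, E ≤ y → ((CD D + 2) / c) ^ (D + 2) * 4 ^ ((D + 1) * (D + 2)) ≤ (2 : ℝ) ^ Nat.log 2 y
  big4 : ∀ y : ℕ, E ≤ y → s * (KD D * Nat.log 2 y + 1) ≤ (D - s) / 2 * y
  big5 : ∀ y, E ≤ y → ((D : ℝ) + 1) ≤ (D - s) / 2 * (KD D * Nat.log 2 y + 1)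

/-- For consecutive levels `e < e' < e''`, the cubes of level `e''` discarded inside a cube that is
alive at level `e` number at most `4⁻ᴰ / 16` times the ratio of the volumes. The degenerate case `e = e' = 0` starts the construction. -/
theorem step_apply {D : ℕ} (hD : 1 ≤ D) {η s c κ1 θ : ℝ} {E Bq : ℕ} (p : Par D η s c E)
    (G : GoodTheta D κ1 η Bq θ) (hη : 0 < η) (hηκ : η ≤ κ1) (hκ11 : κ1 ≤ 1) (hB : 5 * E ≤ Bq)
    (a : Fin D → ℝ) (e e' e'' : ℕ)
    (he'' : e'' = e' + KD D * Nat.log 2 (e' + E) + 1)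
    (he' : e' = e + KD D * Nat.log 2 (e + E) + 1 ∨ (e = 0 ∧ e' = 0))
    (halive : ∀ q : ℕ, 1 ≤ q → q < 2 ^ e → kap D c E e ≤ val θ a q ((1 / 2) ^ e))
    (T : Finset (Fin D → ℤ))
    (hT : ∀ ν ∈ T, (∀ i, 0 ≤ ν i) ∧ (∀ i, (2 * (ν i : ℝ) + 1) * (1 / 2) ^ e'' ≤ (1 / 2) ^ e) ∧
      ∃ α : Fin D → ℝ, (∀ i, a i + 2 * (1 / 2) ^ e'' * ν i ≤ α i ∧
      α i ≤ a i + 2 * (1 / 2) ^ e'' * ν i + (1 / 2) ^ e'') ∧ ∃ q : ℕ, 1 ≤ q ∧ q < 2 ^ e'' ∧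
      val θ α q ((1 / 2) ^ e'') < kap D c E e'' ∧
        (q < 2 ^ e' → kap D c E e'' ≤ val θ α q ((1 / 2) ^ e'))) :
    (T.card : ℝ) ≤ ((1 / 4) ^ D / 16) * ((1 / 2) ^ e / (1 / 2) ^ e'') ^ D := by
  have hE := p.E2
  have hc := p.c0
  have hee : e ≤ e' := by rcases he' with h | h <;> omega
  have hee' : e' ≤ e'' := by omega
  have b1 := p.big1 (e + E) (by omega)
  have b1' := p.big1 (e' + E) (by omega)
  set y'' := e'' + E with hy''
  set L := Nat.log 2 y'' with hL
  have hL1 : 1 ≤ L := Nat.log_pos (by norm_num) (by omega)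
  have hl : Nat.log 2 (e + E) ≤ L := Nat.log_mono_right (by omega)
  have hl' : Nat.log 2 (e' + E) ≤ L := Nat.log_mono_right (by omega)
  have hKl : KD D * Nat.log 2 (e + E) ≤ KD D * L := Nat.mul_le_mul_left _ hl
  have hKl' : KD D * Nat.log 2 (e' + E) ≤ KD D * L := Nat.mul_le_mul_left _ hl'
  have hd1 : e'' - e' ≤ KD D * L + 1 := by omega
  have hd2 : e'' - e ≤ 2 * (KD D * L) + 2 := by rcases he' with h | h <;> omega
  have hy2 : y'' ≤ 2 * (e + E) := by rcases he' with h | h <;> omega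
  have hLr : (1 : ℝ) ≤ L := by exact_mod_cast hL1
  have hy0 : (2 : ℝ) ≤ y'' := by exact_mod_cast (by omega : 2 ≤ y'')
  have hκdef : kap D c E e'' = c / ((y'' : ℝ) ^ D * L) := rfl
  have hyL1 : 1 ≤ (y'' : ℝ) ^ D * L := by
    have : 1 ≤ (y'' : ℝ) ^ D := one_le_pow₀ (by linarith)
    nlinarith
  have hyL : 0 < (y'' : ℝ) ^ D * L := by linarith
  have hκ0 : 0 < kap D c E e'' := by rw [hκdef]; positivity
  have hκ1 : kap D c E e'' ≤ 1 := by
    rw [hκdef, div_le_one hyL]; linarith [p.c1]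
  have hφ : (phi D e'' : ℝ) ≤ (y'' : ℝ) ^ D * L := by
    have : phi D e'' ≤ y'' ^ D * L :=
      Nat.mul_le_mul (Nat.pow_le_pow_left (by omega) _) (Nat.log_mono_right (by omega))
    exact_mod_cast this
  have hφ1 : (1 : ℝ) ≤ phi D e'' := by exact_mod_cast phi_pos D e''
  have hκy : kap D c E e'' * ((y'' : ℝ) ^ D * L) = c := by
    rw [hκdef]; field_simp
  refine step G hη hηκ hκ11 a e e' e'' hee hee' ?_ (kap D c E e'') hκ0 hκ1 ?_ ((1 / 4) ^ D / 16)
    ?_ ?_ ((y'' : ℝ) ^ D * L / (η * L ^ (D + 1))) (by positivity) ?_ ?_ ?_ T hT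
  · rcases he' with h | h
    · omega
    · right; omega
  · intro q hq1 hq2
    refine le_trans ?_ (halive q hq1 hq2)
    unfold kap
    have h1 : 1 ≤ Nat.log 2 (e + E) := Nat.log_pos (by norm_num) (by omega)
    have h2 : (0 : ℝ) < (e + E : ℕ) := by exact_mod_cast (by omega : 0 < e + E)
    gcongr
    omega
  · intro he
    have h1 : e' = e + KD D * Nat.log 2 (e + E) + 1 := by rcases he' with h | h <;> omega
    set l := Nat.log 2 (e + E)
    have hyl : y'' ≤ 4 * 2 ^ l := by
      have : e + E < 2 ^ (l + 1) := Nat.lt_pow_succ_log_self (b := 2) (by norm_num) (e + E)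
      rw [pow_succ] at this
      omega
    have hyl' : (y'' : ℝ) ≤ 4 * 2 ^ l := by exact_mod_cast hyl
    set A : ℝ := (CD D + 2) / c
    have hCD0 : (0 : ℝ) ≤ CD D := by unfold CD; positivity
    have hA : A ^ (D + 2) * 4 ^ ((D + 1) * (D + 2)) ≤ (2 : ℝ) ^ l := p.big3 (e + E) (by omega)
    have hLy : (L : ℝ) ≤ y'' := by exact_mod_cast (Nat.log_le_self 2 y'')
    have hκinv : 1 / kap D c E e'' ≤ (y'' : ℝ) ^ (D + 1) / c := by
      rw [hκdef, one_div_div, pow_succ]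
      gcongr
    have hy1 : (1 : ℝ) ≤ (y'' : ℝ) ^ (D + 1) := one_le_pow₀ (by linarith)
    have h2 : CD D / kap D c E e'' + 2 ≤ A * (y'' : ℝ) ^ (D + 1) := by
      calc CD D / kap D c E e'' + 2 = CD D * (1 / kap D c E e'') + 2 := by ring
        _ ≤ CD D * ((y'' : ℝ) ^ (D + 1) / c) + 2 * ((y'' : ℝ) ^ (D + 1) / c) := by
          have : 1 ≤ (y'' : ℝ) ^ (D + 1) / c := by
            rw [le_div_iff₀ hc]; linarith [p.c1]
          have := mul_le_mul_of_nonneg_left hκinv hCD0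
          linarith
        _ = _ := by simp only [A]; ring
    have hA1 : 1 / c ≤ A := by
      simp only [A]; gcongr; linarith
    have h3 : 1 / kap D c E e'' ≤ A * (y'' : ℝ) ^ (D + 1) := by
      refine hκinv.trans ?_
      rw [div_eq_mul_one_div, mul_comm]; gcongr
    have h4 : (CD D / kap D c E e'' + 2) ^ (D + 1) * (1 / kap D c E e'') ≤ 2 ^ (e' - e) := by
      calc _ ≤ (A * (y'' : ℝ) ^ (D + 1)) ^ (D + 1) * (A * (y'' : ℝ) ^ (D + 1)) := by
            have : 0 ≤ CD D / kap D c E e'' + 2 := by positivity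
            gcongr
        _ = A ^ (D + 2) * (y'' : ℝ) ^ ((D + 1) * (D + 2)) := by
            rw [← pow_succ, mul_pow, ← pow_mul]
        _ ≤ A ^ (D + 2) * (4 * 2 ^ l) ^ ((D + 1) * (D + 2)) := by gcongr
        _ = (A ^ (D + 2) * 4 ^ ((D + 1) * (D + 2))) * 2 ^ (l * ((D + 1) * (D + 2))) := by
            rw [mul_pow, ← pow_mul]; ring
        _ ≤ 2 ^ l * 2 ^ (l * ((D + 1) * (D + 2))) := by gcongr
        _ = 2 ^ (KD D * l) := by rw [← pow_add]; congr 1; unfold KD; ring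
        _ ≤ 2 ^ (e' - e) := pow_le_pow_right₀ (by norm_num) (by omega)
    rw [← div_eq_mul_one_div, div_le_iff₀ hκ0] at h4
    linarith
  · have h1 : e * (e'' - e' + 2) * (e'' + 1) ^ (D - 1) ≤ (KD D + 3) * (y'' ^ D * L) := by
      calc e * (e'' - e' + 2) * (e'' + 1) ^ (D - 1) ≤ y'' * ((KD D + 3) * L) * y'' ^ (D - 1) := by
            gcongr
            · omega
            · rw [add_mul]; omega
            · omega
        _ = (KD D + 3) * ((y'' ^ (D - 1) * y'') * L) := by ring
        _ = _ := by rw [← pow_succ, Nat.sub_add_cancel hD]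
    have h2 : ((e * (e'' - e' + 2) * (e'' + 1) ^ (D - 1) : ℕ) : ℝ) ≤
        (KD D + 3) * ((y'' : ℝ) ^ D * L) := by exact_mod_cast h1
    calc _ ≤ D * (((KD D + 3) * ((y'' : ℝ) ^ D * L)) *
          (2 * ((2 * D + 7) ^ (D + 2) * 2 * 9 ^ D) * (2 ^ (D + 1) * kap D c E e''))) := by gcongr
      _ = (D * (KD D + 3) * (2 * ((2 * D + 7) ^ (D + 2) * 2 * 9 ^ D) * 2 ^ (D + 1))) *
          (kap D c E e'' * ((y'' : ℝ) ^ D * L)) := by ring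
      _ ≤ _ := by rw [hκy]; exact p.c2
  · have h1 : (L : ℝ) ^ (2 * D + 1) ≤ (y'' : ℝ) ^ D := by exact_mod_cast p.big2 y'' (by omega)
    refine hφ.trans ?_
    have h2 : η * η ≤ η * κ1 := by gcongr
    calc (y'' : ℝ) ^ D * L = (L : ℝ) ^ (2 * D + 1) * ((y'' : ℝ) ^ D * (η * η) / (η * η * L ^ (2 * D))) := by
          field_simp; ring
      _ ≤ (y'' : ℝ) ^ D * ((y'' : ℝ) ^ D * (η * κ1) / (η * η * L ^ (2 * D))) := by gcongr
      _ = _ := by field_simp; ring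
  · have h1 : (e'' - e + 1) ≤ (2 * KD D + 3) * L := by
      calc e'' - e + 1 ≤ 2 * (KD D * L) + 3 := by omega
        _ ≤ 2 * (KD D * L) + 3 * L := by omega
        _ = _ := by ring
    have h2 : (((e'' - e + 1) ^ (D + 1) : ℕ) : ℝ) ≤ ((2 * KD D + 3) * L) ^ (D + 1) := by
      exact_mod_cast Nat.pow_le_pow_left h1 _
    calc _ ≤ ((2 * KD D + 3) * L : ℝ) ^ (D + 1) * (2 * (98 * ((y'' : ℝ) ^ D * L / (η * L ^ (D + 1))) * 21 ^ D) *
          (2 ^ (D + 1) * kap D c E e'')) := by gcongr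
      _ = ((2 * KD D + 3) ^ (D + 1) * (2 * (98 * 21 ^ D) * 2 ^ (D + 1)) / η) *
          (kap D c E e'' * ((y'' : ℝ) ^ D * L)) := by
          rw [mul_pow]; field_simp
      _ ≤ _ := by rw [hκy]; exact p.c3
  · have h1 : √(2 ^ D * kap D c E e'' * phi D e'' / η) ≤ (1 / 4) ^ D / 16 / 3 / (4 ^ D * 21 ^ D) := by
      refine Real.sqrt_le_iff.2 ⟨by positivity, le_trans ?_ p.c4⟩
      calc 2 ^ D * kap D c E e'' * phi D e'' / η ≤
          2 ^ D * kap D c E e'' * ((y'' : ℝ) ^ D * L) / η := by gcongr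
        _ = _ := by rw [mul_assoc, hκy]; ring
    calc _ ≤ 4 ^ D * (((1 / 4) ^ D / 16 / 3 / (4 ^ D * 21 ^ D)) * 21 ^ D) := by gcongr
      _ = (1 / 4 : ℝ) ^ D / 16 / 3 := by field_simp

open Filter in
theorem tendsto_log2 : Tendsto (fun y : ℕ => Nat.log 2 y) atTop atTop := by
  refine tendsto_atTop.2 fun b => ?_
  filter_upwards [eventually_ge_atTop (2 ^ b)] with y hy
  exact Nat.le_log_of_pow_le (by norm_num) hy

open Filter in
theorem log_pow_le (A : ℝ) (k : ℕ) : ∀ᶠ y : ℕ in atTop, A * (Nat.log 2 y : ℝ) ^ k ≤ y := by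
  have h1 := (tendsto_pow_const_div_const_pow_of_one_lt k (by norm_num : (1 : ℝ) < 2)).const_mul A
  rw [mul_zero] at h1
  have h2 := (h1.comp tendsto_log2).eventually (ge_mem_nhds (by norm_num : (0 : ℝ) < 1))
  filter_upwards [h2, eventually_ge_atTop 1] with y hy hy1
  have h3 : (2 : ℝ) ^ Nat.log 2 y ≤ y := by exact_mod_cast Nat.pow_log_le_self 2 (by omega)
  simp only [Function.comp] at hy
  rw [← mul_div_assoc, div_le_one (by positivity)] at hy
  exact hy.trans h3

open Filter in
/-- First `c` is taken small, then `E` large in terms of `c`. -/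
theorem exists_par {D : ℕ} (hD : 1 ≤ D) {η s : ℝ} (hη : 0 < η) (hs0 : 0 < s) (hs : s < D) :
    ∃ c E, Par D η s c E := by
  have hcs : ∀ A b : ℝ, 0 < b → ∀ᶠ c : ℝ in nhdsWithin 0 (Set.Ioi 0), A * c ≤ b := by
    intro A b hb
    have h1 : Tendsto (fun c : ℝ => A * c) (nhdsWithin 0 (Set.Ioi 0)) (nhds 0) := by
      have : Tendsto (fun c : ℝ => A * c) (nhds 0) (nhds (A * 0)) := by
        exact (continuous_const.mul continuous_id).tendsto 0
      rw [mul_zero] at this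
      exact this.mono_left nhdsWithin_le_nhds
    exact h1.eventually (ge_mem_nhds hb)
  obtain ⟨c, c0, c1, c2, c3, c4⟩ := ((eventually_mem_nhdsWithin (a := (0 : ℝ)) (s := Set.Ioi 0)).and
    ((hcs 1 1 (by norm_num)).and
    ((hcs (D * (KD D + 3) * (2 * ((2 * D + 7) ^ (D + 2) * 2 * 9 ^ D) * 2 ^ (D + 1)))
      ((1 / 4) ^ D / 16 / 3) (by positivity)).and
    ((hcs ((2 * KD D + 3) ^ (D + 1) * (2 * (98 * 21 ^ D) * 2 ^ (D + 1)) / η)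
      ((1 / 4) ^ D / 16 / 3) (by positivity)).and
    (hcs (2 ^ D / η) (((1 / 4) ^ D / 16 / 3 / (4 ^ D * 21 ^ D)) ^ 2) (by positivity)))))).exists
  have hds : 0 < (D : ℝ) - s := by linarith
  have hl := tendsto_log2
  have hlr : Tendsto (fun y : ℕ => (Nat.log 2 y : ℝ)) atTop atTop :=
    tendsto_natCast_atTop_atTop.comp hl
  have e1 := log_pow_le (4 * (KD D + 1)) 1
  have e2 := log_pow_le 1 (2 * D + 1)
  have e3 := (tendsto_pow_atTop_atTop_of_one_lt (by norm_num : (1 : ℝ) < 2)).comp hl |>.eventually_ge_atTop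
    (((CD D + 2) / c) ^ (D + 2) * 4 ^ ((D + 1) * (D + 2)))
  have e4 := log_pow_le (s * (KD D + 1) * 2 / (D - s)) 1
  have e5 := hlr.eventually_ge_atTop (((D : ℝ) + 1) / ((D - s) / 2))
  have e6 := hl.eventually_ge_atTop 1
  obtain ⟨E, hE⟩ := eventually_atTop.1 (e1.and (e2.and (e3.and (e4.and (e5.and
    (e6.and (eventually_ge_atTop 2)))))))
  refine ⟨c, E, c0, by simpa using c1, c2, c3, c4, (hE E le_rfl).2.2.2.2.2.2, ?_, ?_, ?_, ?_, ?_⟩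
  · intro y hy
    have h1 := (hE y hy).1
    have h6 := (hE y hy).2.2.2.2.2.1
    have : 4 * (KD D + 1) * Nat.log 2 y ≤ y := by
      rw [pow_one] at h1; exact_mod_cast h1
    nlinarith
  · intro y hy
    have h1 := (hE y hy).2.1
    have h7 := (hE y hy).2.2.2.2.2.2
    have : Nat.log 2 y ^ (2 * D + 1) ≤ y := by rw [one_mul] at h1; exact_mod_cast h1
    exact this.trans (Nat.le_self_pow (by omega) y)
  · intro y hy
    exact (hE y hy).2.2.1
  · intro y hy
    have h1 := (hE y hy).2.2.2.1
    have h6 := (hE y hy).2.2.2.2.2.1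
    have h6' : (1 : ℝ) ≤ Nat.log 2 y := by exact_mod_cast h6
    rw [pow_one, div_mul_eq_mul_div, div_le_iff₀ hds] at h1
    have : 0 ≤ s * ((Nat.log 2 y : ℝ) - 1) := mul_nonneg hs0.le (by linarith)
    nlinarith
  · intro y hy
    have h1 := (hE y hy).2.2.2.2.1
    rw [div_le_iff₀ (by linarith)] at h1
    have hK : 1 ≤ KD D := by unfold KD; omega
    have hK' : (1 : ℝ) ≤ KD D := by exact_mod_cast hK
    have h2 : (Nat.log 2 y : ℝ) ≤ KD D * Nat.log 2 y := le_mul_of_one_le_left (by positivity) hK'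
    rw [mul_comm] at h1
    refine h1.trans ?_
    gcongr
    linarith

/-! ### The fibre over a fixed `θ` -/

/-- The level following `e`. -/
def nxt (D E e : ℕ) : ℕ := e + KD D * Nat.log 2 (e + E) + 1
/-- The number of children of a cube of level `e` in each coordinate direction. -/
def mK (D E e : ℕ) : ℕ := 2 ^ (KD D * Nat.log 2 (e + E))
/-- The child with index `j`, of side `2⁻ᵉ'`. Neighbouring children are separated by a gap equal to their
side. -/
noncomputable def child {D m : ℕ} (e' : ℕ) (a : Fin D → ℝ) (j : Fin D → Fin m) : Fin D → ℝ :=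
  fun i => a i + 2 * (1 / 2) ^ e' * (j i : ℕ)

/-- The cube of level `e''` at `a` has to be discarded: some truncated product falls below `κ` in it, and
did not already do so at level `e'` there. -/
def Hitb {D : ℕ} (θ κ : ℝ) (e' e'' : ℕ) (a : Fin D → ℝ) : Prop :=
  ∃ α : Fin D → ℝ, (∀ i, a i ≤ α i ∧ α i ≤ a i + (1 / 2) ^ e'') ∧
    ∃ q : ℕ, 1 ≤ q ∧ q < 2 ^ e'' ∧ val θ α q ((1 / 2) ^ e'') < κ ∧
      (q < 2 ^ e' → κ ≤ val θ α q ((1 / 2) ^ e'))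

/-- All truncated products with `q < 2 ^ e` are at least `κ` throughout the cube of level `e` at `a`. -/
def Alive {D : ℕ} (θ κ : ℝ) (e : ℕ) (a : Fin D → ℝ) : Prop :=
  ∀ α : Fin D → ℝ, (∀ i, a i ≤ α i ∧ α i ≤ a i + (1 / 2) ^ e) →
    ∀ q : ℕ, 1 ≤ q → q < 2 ^ e → κ ≤ val θ α q ((1 / 2) ^ e)

open Classical in
/-- The children of the cube at `a` that have to be discarded. -/
noncomputable def badKids {D : ℕ} (θ c : ℝ) (E e : ℕ) (a : Fin D → ℝ) :
    Finset (Fin D → Fin (mK D E e)) :=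
  Finset.univ.filter fun j => Hitb θ (kap D c E (nxt D E e)) e (nxt D E e) (child (nxt D E e) a j)

/-- At most a quarter of the children of the cube have to be discarded. -/
def Good {D : ℕ} (θ c : ℝ) (E e : ℕ) (a : Fin D → ℝ) : Prop :=
  4 * (badKids θ c E e a).card ≤ mK D E e ^ D

/-- The children, together with the gaps, fill the parent. -/
theorem half_nxt (D E e : ℕ) : (1 / 2 : ℝ) ^ e = 2 * mK D E e * (1 / 2) ^ nxt D E e := by
  unfold mK nxt
  push_cast
  rw [add_assoc, pow_add, pow_succ]
  have : (2 : ℝ) ^ (KD D * Nat.log 2 (e + E)) * (1 / 2) ^ (KD D * Nat.log 2 (e + E)) = 1 := by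
    rw [← mul_pow]; norm_num
  linear_combination -(1 / 2) ^ e * this

theorem child_mem {D : ℕ} (E e : ℕ) (a : Fin D → ℝ) (j : Fin D → Fin (mK D E e)) (i : Fin D) :
    a i ≤ child (nxt D E e) a j i ∧ child (nxt D E e) a j i + (1 / 2) ^ nxt D E e ≤ a i + (1 / 2) ^ e := by
  unfold child
  have h := half_nxt D E e
  have hj : ((j i : ℕ) : ℝ) + 1 ≤ mK D E e := by exact_mod_cast (j i).2
  have hp : (0 : ℝ) < (1 / 2) ^ nxt D E e := by positivity
  constructor
  · have : (0 : ℝ) ≤ 2 * (1 / 2) ^ nxt D E e * (j i : ℕ) := by positivity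
    linarith
  · nlinarith

/-- A child that is not discarded inherits the lower bounds from its parent. -/
theorem alive_child {D : ℕ} {θ κ κ' : ℝ} {E e : ℕ} {a : Fin D → ℝ} (h : Alive θ κ e a) (hκ : κ' ≤ κ)
    (j : Fin D → Fin (mK D E e)) (hj : ¬ Hitb θ κ' e (nxt D E e) (child (nxt D E e) a j)) :
    Alive θ κ' (nxt D E e) (child (nxt D E e) a j) := by
  intro α hα q hq1 hq2
  by_contra hlt
  push Not at hlt
  refine hj ⟨α, hα, q, hq1, hq2, hlt, fun hqe => hκ.trans (h α (fun i => ?_) q hq1 hqe)⟩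
  have := child_mem E e a j i
  exact ⟨this.1.trans (hα i).1, (hα i).2.trans this.2⟩

section
variable {D : ℕ} (hD : 1 ≤ D) {η s c κ1 θ : ℝ} {E Bq : ℕ} (p : Par D η s c E)
    (G : GoodTheta D κ1 η Bq θ) (hη : 0 < η) (hηκ : η ≤ κ1) (hκ11 : κ1 ≤ 1) (hB : 5 * E ≤ Bq)
include hD p G hη hηκ hκ11 hB

theorem good_root (a : Fin D → ℝ) : Good θ c E 0 a := by
  classical
  set f : (Fin D → Fin (mK D E 0)) → (Fin D → ℤ) := fun j i => ((j i : ℕ) : ℤ)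
  have hf : Function.Injective f := by
    intro j j' h
    ext i
    have := congrFun h i
    simp only [f, Nat.cast_inj] at this
    exact this
  have h1 := step_apply hD p G hη hηκ hκ11 hB a 0 0 (nxt D E 0) (by unfold nxt; simp)
    (Or.inr ⟨rfl, rfl⟩) (fun q h1 h2 => by simp at h2; omega) ((badKids θ c E 0 a).image f) (by
      intro ν hν
      obtain ⟨j, hj, rfl⟩ := Finset.mem_image.1 hν
      have hj' := (Finset.mem_filter.1 hj).2
      refine ⟨fun i => Int.natCast_nonneg _, fun i => ?_, ?_⟩
      · have h := child_mem E 0 (fun _ => 0) j i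
        unfold child at h
        simp only [f, Int.cast_natCast]
        linarith [h.2]
      · obtain ⟨α, hα, h⟩ := hj'
        refine ⟨α, fun i => ?_, h⟩
        simpa [f, child] using hα i)
  rw [Finset.card_image_of_injective _ hf, half_nxt D E 0,
    mul_div_assoc, div_self (by positivity), mul_one, mul_pow] at h1
  unfold Good
  have h2 : (1 / 4 : ℝ) ^ D / 16 * (2 ^ D * mK D E 0 ^ D) = (1 / 2) ^ D * (mK D E 0 ^ D) / 16 := by
    have : (1 / 4 : ℝ) ^ D * 2 ^ D = (1 / 2) ^ D := by rw [← mul_pow]; norm_num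
    rw [← this]; ring
  rw [h2] at h1
  have h3 : (1 / 2 : ℝ) ^ D ≤ 1 := pow_le_one₀ (by norm_num) (by norm_num)
  have h4 : (0 : ℝ) ≤ mK D E 0 ^ D := by positivity
  have h5 : 4 * ((badKids θ c E 0 a).card : ℝ) ≤ mK D E 0 ^ D := by nlinarith
  exact_mod_cast h5

open Classical in
/-- At most a quarter of the children fail to be good. The counting over two generations shows that
at most one sixteenth of the grandchildren are discarded, and each child that is not good contributes more than a
quarter of its own children. -/
theorem notgood_count (a : Fin D → ℝ) (e : ℕ) (hal : Alive θ (kap D c E e) e a) :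
    4 * (Finset.univ.filter fun j : Fin D → Fin (mK D E e) =>
      ¬ Good θ c E (nxt D E e) (child (nxt D E e) a j)).card ≤ mK D E e ^ D := by
  set e' := nxt D E e with he'
  set e'' := nxt D E e' with he''
  set m := mK D E e
  set m' := mK D E e'
  set S := Finset.univ.filter fun j : Fin D → Fin m => ¬ Good θ c E e' (child e' a j)
  set B := S.sigma fun j => badKids θ c E e' (child e' a j)
  set f : (Σ _ : Fin D → Fin m, (Fin D → Fin m')) → (Fin D → ℤ) :=
    fun x i => 2 * m' * ((x.1 i : ℕ) : ℤ) + ((x.2 i : ℕ) : ℤ)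
  have hf : Function.Injective f := by
    rintro ⟨j, k⟩ ⟨j', k'⟩ h
    have h1 : ∀ i, (j i : ℕ) = j' i ∧ (k i : ℕ) = k' i := by
      intro i
      have h2 := congrFun h i
      simp only [f] at h2
      have h3 : 2 * m' * (j i : ℕ) + (k i : ℕ) = 2 * m' * (j' i : ℕ) + (k' i : ℕ) := by exact_mod_cast h2
      have hk := (k i).2
      have hk' := (k' i).2
      have h4 : (j i : ℕ) = j' i := by
        have a1 : (2 * m' * (j i : ℕ) + (k i : ℕ)) / (2 * m') = (2 * m' * (j' i : ℕ) + (k' i : ℕ)) / (2 * m') := by rw [h3]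
        rwa [Nat.mul_add_div (by omega), Nat.mul_add_div (by omega),
          Nat.div_eq_of_lt (by omega), Nat.div_eq_of_lt (by omega), add_zero, add_zero] at a1
      refine ⟨h4, ?_⟩
      rw [h4] at h3; omega
    obtain rfl : j = j' := funext fun i => Fin.ext (h1 i).1
    obtain rfl : k = k' := funext fun i => Fin.ext (h1 i).2
    rfl
  have hh1 : (1 / 2 : ℝ) ^ e = 2 * m * (1 / 2) ^ e' := half_nxt D E e
  have hh2 : (1 / 2 : ℝ) ^ e' = 2 * m' * (1 / 2) ^ e'' := half_nxt D E e'
  have hpos : (0 : ℝ) < (1 / 2) ^ e'' := by positivity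
  have h1 := step_apply hD p G hη hηκ hκ11 hB a e e' e'' rfl
    (Or.inl rfl) (fun q h1 h2 => hal a (fun i => ⟨le_rfl, by simp⟩) q h1 h2) (B.image f) (by
      intro ν hν
      obtain ⟨⟨j, k⟩, hj, rfl⟩ := Finset.mem_image.1 hν
      have hj' := (Finset.mem_filter.1 (Finset.mem_sigma.1 hj).2).2
      have hfi : ∀ i, a i + 2 * (1 / 2) ^ e'' * (f ⟨j, k⟩ i : ℝ) = child e'' (child e' a j) k i := by
        intro i
        simp only [f, child, hh2]; push_cast; ring
      refine ⟨fun i => by simp only [f]; positivity, fun i => ?_, ?_⟩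
      · have h1 := (child_mem E e' (child e' a j) k i).2
        have h2 := (child_mem E e a j i).2
        rw [← he', ← he''] at *
        rw [← hfi] at h1
        linarith
      · obtain ⟨α, hα, h⟩ := hj'
        refine ⟨α, fun i => ?_, h⟩
        rw [hfi]; exact hα i)
  rw [Finset.card_image_of_injective _ hf, hh1, hh2, show (2 * (m : ℝ) * (2 * m' * (1 / 2) ^ e'') / (1 / 2) ^ e'') =
    4 * (m * m') by field_simp; ring, mul_pow, mul_pow] at h1
  have h2 : (1 / 4 : ℝ) ^ D / 16 * (4 ^ D * (m ^ D * m' ^ D)) = (m ^ D * m' ^ D) / 16 := by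
    have : (1 / 4 : ℝ) ^ D * 4 ^ D = 1 := by rw [← mul_pow]; norm_num
    linear_combination (m ^ D * m' ^ D) / 16 * this
  rw [h2] at h1
  -- a child that is not good has more than a quarter of its children discarded
  have h3 : S.card * m' ^ D ≤ 4 * B.card := by
    rw [Finset.card_sigma, Finset.mul_sum, ← smul_eq_mul, ← Finset.sum_const]
    refine Finset.sum_le_sum fun j hj => ?_
    have := (Finset.mem_filter.1 hj).2
    unfold Good at this
    exact (not_le.1 this).le
  have h4 : 16 * B.card ≤ m ^ D * m' ^ D := by
    have : 16 * (B.card : ℝ) ≤ m ^ D * m' ^ D := by linarith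
    exact_mod_cast this
  have h5 : 0 < m' ^ D := by simp only [m', mK]; positivity
  refine Nat.le_of_mul_le_mul_right (?_ : 4 * S.card * m' ^ D ≤ m ^ D * m' ^ D) h5
  nlinarith

open Classical in
/-- At least half of the children are neither discarded nor fail to be good. -/
theorem good_kids (a : Fin D → ℝ) (e : ℕ) (hal : Alive θ (kap D c E e) e a) (hgood : Good θ c E e a) :
    mK D E e ^ D ≤ 2 * (Finset.univ.filter fun j : Fin D → Fin (mK D E e) =>
      ¬ Hitb θ (kap D c E (nxt D E e)) e (nxt D E e) (child (nxt D E e) a j) ∧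
      Good θ c E (nxt D E e) (child (nxt D E e) a j)).card := by
  have h1 := notgood_count hD p G hη hηκ hκ11 hB a e hal
  unfold Good badKids at hgood
  set S1 := Finset.univ.filter fun j : Fin D → Fin (mK D E e) =>
      ¬ Good θ c E (nxt D E e) (child (nxt D E e) a j)
  set S2 := Finset.univ.filter fun j : Fin D → Fin (mK D E e) =>
      Hitb θ (kap D c E (nxt D E e)) e (nxt D E e) (child (nxt D E e) a j)
  set S := Finset.univ.filter fun j : Fin D → Fin (mK D E e) =>
      ¬ Hitb θ (kap D c E (nxt D E e)) e (nxt D E e) (child (nxt D E e) a j) ∧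
      Good θ c E (nxt D E e) (child (nxt D E e) a j)
  have h2 : (Finset.univ : Finset (Fin D → Fin (mK D E e))) ⊆ S1 ∪ S2 ∪ S := by
    intro j _
    simp only [S1, S2, S, Finset.mem_union, Finset.mem_filter, Finset.mem_univ, true_and]
    tauto
  have h3 := (Finset.card_le_card h2).trans ((Finset.card_union_le _ _).trans
    (Nat.add_le_add_right (Finset.card_union_le _ _) _))
  rw [Finset.card_univ, Fintype.card_fun, Fintype.card_fin, Fintype.card_fin] at h3
  omega

end

/-- The sequence of levels of the construction. -/
def ee (D E : ℕ) : ℕ → ℕ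
  | 0 => 0
  | n + 1 => nxt D E (ee D E n)

theorem le_ee (D E n : ℕ) : n ≤ ee D E n := by
  induction n with
  | zero => simp
  | succ n ih => rw [ee, nxt]; omega

/-- The number of cubes retained at stage `n`: exactly half of the children are kept at each stage. -/
def cnt (D E : ℕ) : ℕ → ℕ
  | 0 => 1
  | n + 1 => cnt D E n * 2 ^ (D * (KD D * Nat.log 2 (ee D E n + E)) - 1)

theorem cnt_eq {D E : ℕ} (hD : 1 ≤ D) (hE : 2 ≤ E) (n : ℕ) :
    cnt D E n * 2 ^ ((D + 1) * n) = 2 ^ (D * ee D E n) := by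
  induction n with
  | zero => simp [cnt, ee]
  | succ n ih =>
    have h1 : 1 ≤ Nat.log 2 (ee D E n + E) := Nat.log_pos (by norm_num) (by omega)
    have h2 : 1 ≤ D * (KD D * Nat.log 2 (ee D E n + E)) :=
      Nat.mul_pos hD (Nat.mul_pos (by unfold KD; omega) h1)
    have h3 : (D + 1) * (n + 1) = (D + 1) * n + (D + 1) := by ring
    rw [cnt, ee, nxt, h3, pow_add, show ∀ a b c d : ℕ, a * b * (c * d) = (a * c) * (b * d) by intros; ring,
      ih, ← pow_add, ← pow_add]
    congr 1
    rw [mul_add, mul_add, mul_one]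
    omega

theorem child_sep {D m e' : ℕ} (a : Fin D → ℝ) {u v : Fin D → Fin m} (hne : u ≠ v) :
    ∃ i, 2 * (1 / 2) ^ e' ≤ |child e' a u i - child e' a v i| := by
  obtain ⟨i, hi⟩ := Function.ne_iff.1 hne
  refine ⟨i, ?_⟩
  simp only [child]
  have h1 : (1 : ℝ) ≤ |((u i : ℕ) : ℝ) - (v i : ℕ)| := by
    have : (1 : ℤ) ≤ |((u i : ℕ) : ℤ) - (v i : ℕ)| := by
      apply Int.one_le_abs
      intro h
      exact hi (Fin.ext (by omega))
    exact_mod_cast this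
  have hp : (0 : ℝ) < 2 * (1 / 2) ^ e' := by positivity
  rw [show ∀ x y z w : ℝ, x + y * z - (x + y * w) = y * (z - w) by intros; ring, abs_mul,
    abs_of_pos hp]
  exact le_mul_of_one_le_right hp.le h1

/-- For every good `θ` there is a Hölder-controlled Cantor set of `α` with exponent `s < D` along which all
truncated products stay above `kap`. The parameters `c`, `E`, `C` depend only on `D`, `η` and `s`, not on `θ`. -/
theorem fibre {D : ℕ} (hD : 1 ≤ D) {η s : ℝ} (hη : 0 < η) (hs0 : 0 < s) (hs : s < D) :
    ∃ (c : ℝ) (E : ℕ) (C : ℝ), Par D η s c E ∧ 0 ≤ C ∧ ∀ (κ1 θ : ℝ) (Bq : ℕ), GoodTheta D κ1 η Bq θ →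
      η ≤ κ1 → κ1 ≤ 1 → 5 * E ≤ Bq →
      ∃ g : ℝ → Fin D → ℝ, ∀ x ∈ Set.Ico (0 : ℝ) 1,
        (∀ n q : ℕ, 1 ≤ q → q < 2 ^ ee D E n →
          kap D c E (ee D E n) ≤ val θ (g x) q ((1 / 2) ^ ee D E n)) ∧
        ∀ x' ∈ Set.Ico (0 : ℝ) 1, |x - x'| ≤ C * dist (g x) (g x') ^ s := by
  obtain ⟨c, E, p⟩ := exists_par hD hη hs0 hs
  have hE := p.E2
  refine ⟨c, E, 2 ^ ((D - s) / 2 * E), p, by positivity, fun κ1 θ Bq G hηκ hκ11 hB => ?_⟩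
  have hn : ∀ n, ((D : ℝ) + 1) * n ≤ (D - s) / 2 * ee D E n := by
    intro n
    induction n with
    | zero => simp [ee]
    | succ n ih =>
      have := p.big5 (ee D E n + E) (by omega)
      rw [ee, nxt]; push_cast
      linarith
  obtain ⟨g, hg⟩ := cantor (D := D) (fun n => (1 / 2 : ℝ) ^ ee D E n) (fun n => by positivity)
    (fun n => 2 ^ (D * (KD D * Nat.log 2 (ee D E n + E)) - 1)) (cnt D E)
    (fun n => Nat.one_le_two_pow) rfl (fun n => rfl)
    (fun n a => Alive θ (kap D c E (ee D E n)) (ee D E n) a ∧ Good θ c E (ee D E n) a) (fun _ => 0)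
    ⟨fun α _ q h1 h2 => by simp [ee] at h2; omega, good_root hD p G hη hηκ hκ11 hB _⟩
    (by
      classical
      rintro n a ⟨hal, hgood⟩
      have h1 := good_kids hD p G hη hηκ hκ11 hB a _ hal hgood
      set e := ee D E n
      have he : ee D E (n + 1) = nxt D E e := rfl
      set S := Finset.univ.filter fun j : Fin D → Fin (mK D E e) =>
        ¬ Hitb θ (kap D c E (nxt D E e)) e (nxt D E e) (child (nxt D E e) a j) ∧
        Good θ c E (nxt D E e) (child (nxt D E e) a j)
      have hM : 2 ^ (D * (KD D * Nat.log 2 (e + E)) - 1) ≤ S.card := by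
        have h2 : 1 ≤ D * (KD D * Nat.log 2 (e + E)) :=
          Nat.mul_pos hD (Nat.mul_pos (by unfold KD; omega) (Nat.log_pos (by norm_num) (by omega)))
        have h3 : mK D E e ^ D = 2 * 2 ^ (D * (KD D * Nat.log 2 (e + E)) - 1) := by
          rw [mK, ← pow_mul, ← pow_succ', Nat.sub_add_cancel h2, mul_comm D]
        omega
      refine ⟨fun j => child (nxt D E e) a (S.equivFin.symm (Fin.castLE hM j)).1, fun j => ?_, ?_⟩
      · have hj := (Finset.mem_filter.1 (S.equivFin.symm (Fin.castLE hM j)).2).2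
        refine ⟨⟨alive_child hal ?_ _ hj.1, hj.2⟩, fun i => child_mem E e a _ i⟩
        unfold kap
        have hc := p.c0
        have h1 : 1 ≤ Nat.log 2 (e + E) := Nat.log_pos (by norm_num) (by omega)
        have h2 : (0 : ℝ) < (e + E : ℕ) := by exact_mod_cast (by omega : 0 < e + E)
        have h3 : e ≤ nxt D E e := by unfold nxt; omega
        gcongr <;> exact h3
      · intro j j' hjj
        have hne : (S.equivFin.symm (Fin.castLE hM j)).1 ≠ (S.equivFin.symm (Fin.castLE hM j')).1 := by
          intro h
          exact hjj (Fin.castLE_injective hM (S.equivFin.symm.injective (Subtype.ext h)))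
        exact child_sep a hne)
    (by
      refine squeeze_zero (fun n => by positivity) (fun n => ?_)
        (tendsto_pow_atTop_nhds_zero_of_lt_one (by norm_num : (0 : ℝ) ≤ 1 / 2) (by norm_num))
      exact pow_le_pow_of_le_one (by norm_num) (by norm_num) (le_ee D E n))
    s (2 ^ ((D - s) / 2 * E)) hs0 (by positivity)
    (by
      intro n
      have h1 : (cnt D E n : ℝ) * 2 ^ ((D + 1) * n) = 2 ^ (D * ee D E n) := by
        exact_mod_cast cnt_eq hD hE n
      have h2 : (cnt D E n : ℝ) = (2 : ℝ) ^ ((D : ℝ) * ee D E n - (D + 1) * n) := by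
        rw [Real.rpow_sub (by norm_num), eq_div_iff (by positivity)]
        have := h1
        rw [← Real.rpow_natCast, ← Real.rpow_natCast] at this
        push_cast at this
        exact this
      have h3 : ((1 / 2 : ℝ) ^ ee D E (n + 1)) ^ s = (2 : ℝ) ^ (-(s * ee D E (n + 1))) := by
        rw [one_div, inv_pow, ← Real.rpow_natCast, ← Real.rpow_neg (by norm_num), ← Real.rpow_mul (by norm_num)]
        ring_nf
      simp only [h3, h2]
      rw [← Real.rpow_add (by norm_num), ← Real.rpow_add (by norm_num)]
      refine Real.one_le_rpow (by norm_num) ?_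
      have h4 := hn n
      have h5 := p.big4 (ee D E n + E) (by omega)
      rw [ee, nxt]; push_cast at h5 ⊢
      linarith)
  refine ⟨g, fun x hx => ⟨fun n q h1 h2 => ?_, (hg x hx).2⟩⟩
  obtain ⟨a, ⟨hal, -⟩, ha⟩ := (hg x hx).1 n
  exact hal (g x) ha q h1 h2

/-! ### From truncated products to the original one -/

theorem natlog_le (n : ℕ) (hn : 1 ≤ n) : (Nat.log 2 n : ℝ) ≤ 2 * Real.log n := by
  have h1 : (2 : ℝ) ^ Nat.log 2 n ≤ n := by exact_mod_cast Nat.pow_log_le_self 2 (by omega)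
  have h2 := Real.log_le_log (by positivity) h1
  rw [Real.log_pow] at h2
  have h3 : (1 / 2 : ℝ) ≤ Real.log 2 := by linarith [Real.log_two_gt_d9]
  have h4 : (0 : ℝ) ≤ Nat.log 2 n := by positivity
  nlinarith

/-- The levels are dense enough: between `t` and `2 t + E` there is always one. -/
theorem exists_ee {D : ℕ} {η s c : ℝ} {E : ℕ} (p : Par D η s c E) (t : ℕ) :
    ∃ n, t ≤ ee D E n ∧ ee D E n ≤ 2 * t + E := by
  classical
  have hex : ∃ n, t ≤ ee D E n := ⟨t, le_ee D E t⟩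
  refine ⟨Nat.find hex, Nat.find_spec hex, ?_⟩
  rcases h : Nat.find hex with _ | n
  · simp [ee]
  · have h1 : ¬ t ≤ ee D E n := Nat.find_min hex (by omega)
    have h2 := p.big1 (ee D E n + E) (by omega)
    rw [ee, nxt]; omega

/-- The bounds on truncated products imply the bound on the original product: for given `q` one uses a
level `e` comparable with `log₂ q` and such that `q ^ 4 ≤ 2 ^ e`, at which no factor is truncated. -/
theorem fibre_low {D : ℕ} {η s c : ℝ} {E : ℕ} (p : Par D η s c E) (θ : ℝ) (α : Fin D → ℝ)
    (h : ∀ n q : ℕ, 1 ≤ q → q < 2 ^ ee D E n →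
          kap D c E (ee D E n) ≤ val θ α q ((1 / 2) ^ ee D E n)) :
    ∃ c' : ℝ, 0 < c' ∧ ∀ᶠ q : ℕ in Filter.atTop,
      c' ≤ q * Real.log q ^ D * Real.log (Real.log q) * (distInt (q * θ) * ∏ i, distInt (q * α i)) := by
  have hc := p.c0
  have hE := p.E2
  refine ⟨c / (18 ^ D * 4), by positivity, ?_⟩
  have hlog : Filter.Tendsto (fun q : ℕ => Real.log q) Filter.atTop Filter.atTop :=
    Real.tendsto_log_atTop.comp tendsto_natCast_atTop_atTop
  filter_upwards [tendsto_log2.eventually_ge_atTop (2 * E + 8), hlog.eventually_ge_atTop 18,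
    log_pow_le (9 ^ (D + 1) / c) (D + 1), Filter.eventually_ge_atTop 2] with q h1 h2 h3 hq2
  obtain ⟨n, hn1, hn2⟩ := exists_ee p (4 * (Nat.log 2 q + 1))
  have hqlt : q < 2 ^ (Nat.log 2 q + 1) := Nat.lt_pow_succ_log_self (by norm_num) q
  have hq4 : q ^ 4 ≤ 2 ^ ee D E n := by
    calc q ^ 4 ≤ (2 ^ (Nat.log 2 q + 1)) ^ 4 := Nat.pow_le_pow_left hqlt.le _
      _ = 2 ^ (4 * (Nat.log 2 q + 1)) := by rw [← pow_mul, mul_comm]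
      _ ≤ _ := Nat.pow_le_pow_right (by norm_num) hn1
  have hq : q < 2 ^ ee D E n := hqlt.trans_le (Nat.pow_le_pow_right (by norm_num) (by omega))
  have hv := h n q (by omega) hq
  set Y := ee D E n + E with hY
  have hY9 : Y ≤ 9 * Nat.log 2 q := by omega
  have hY2 : 2 ≤ Y := by omega
  have hkap : kap D c E (ee D E n) = c / ((Y : ℝ) ^ D * Nat.log 2 Y) := rfl
  have hYr : (2 : ℝ) ≤ Y := by exact_mod_cast hY2
  have hlY : (1 : ℝ) ≤ Nat.log 2 Y := by
    exact_mod_cast Nat.log_pos (by norm_num) hY2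
  have hq0 : (2 : ℝ) ≤ q := by exact_mod_cast hq2
  have hkap0 : 0 < kap D c E (ee D E n) := by rw [hkap]; positivity
  set l : ℝ := (1 / 2) ^ ee D E n with hl
  have hl4 : l * q ^ 4 ≤ 1 := by
    rw [hl, one_div, inv_pow, inv_mul_le_iff₀ (by positivity), mul_one]
    exact_mod_cast hq4
  have hl0 : 0 < l := by positivity
  -- a coordinate with `‖q α i‖` below `q l` would make the truncated product at most `q⁻²`
  have hall : ∀ i, q * l ≤ distInt (q * α i) := by
    intro i
    by_contra hlt
    push Not at hlt
    have hql : q * l ≤ 1 := by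
      refine le_trans ?_ hl4
      rw [mul_comm]
      gcongr
      exact le_self_pow₀ (by linarith) (by norm_num)
    have a1 : ∏ j, max (distInt (q * α j)) (q * l) ≤ q * l := by
      rw [← Finset.mul_prod_erase Finset.univ _ (Finset.mem_univ i), max_eq_right hlt.le]
      refine mul_le_of_le_one_right (by positivity) (Finset.prod_le_one (fun j _ => ?_) fun j _ => ?_)
      · exact le_max_of_le_left (distInt_nonneg _)
      · exact max_le ((distInt_le_half _).trans (by norm_num)) hql
    have a2 : val θ α q l ≤ q * 1 * (q * l) := by
      unfold val
      have := distInt_nonneg (q * θ)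
      have := (distInt_le_half (q * θ)).trans (by norm_num : (1 / 2 : ℝ) ≤ 1)
      gcongr
    have a3 := hv.trans a2
    have a4 : (Y : ℝ) ^ D * Nat.log 2 Y ≤ c * q := by
      have b1 : (Nat.log 2 Y : ℝ) ≤ Y := by exact_mod_cast Nat.log_le_self 2 Y
      have b2 : (Y : ℝ) ≤ 9 * Nat.log 2 q := by exact_mod_cast hY9
      calc (Y : ℝ) ^ D * Nat.log 2 Y ≤ Y ^ D * Y := by gcongr
        _ = Y ^ (D + 1) := by ring
        _ ≤ (9 * Nat.log 2 q) ^ (D + 1) := by gcongr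
        _ = c * (9 ^ (D + 1) / c * (Nat.log 2 q) ^ (D + 1)) := by rw [mul_pow]; field_simp
        _ ≤ c * q := by gcongr
    have a5 : 1 ≤ kap D c E (ee D E n) * q := by
      rw [hkap, div_mul_eq_mul_div, le_div_iff₀ (by positivity)]; linarith
    have a6 : kap D c E (ee D E n) * q ≤ q * 1 * (q * l) * q := by gcongr
    have a7 : (q : ℝ) * 1 * (q * l) * q * 2 ≤ l * q ^ 4 := by
      have : (0 : ℝ) ≤ l * q ^ 3 := by positivity
      nlinarith
    linarith
  have hval : val θ α q l = q * (distInt (q * θ) * ∏ i, distInt (q * α i)) := by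
    unfold val
    rw [mul_assoc]
    congr 2
    exact Finset.prod_congr rfl fun i _ => max_eq_left (hall i)
  rw [hval] at hv
  have hLq : (0 : ℝ) < Real.log q := by linarith
  have b1 : (Y : ℝ) ≤ 18 * Real.log q := by
    have b2 : (Y : ℝ) ≤ 9 * Nat.log 2 q := by exact_mod_cast hY9
    have := natlog_le q (by omega)
    linarith
  have hLL : 0 ≤ Real.log (Real.log q) := Real.log_nonneg (by linarith)
  have b3 : (Nat.log 2 Y : ℝ) ≤ 4 * Real.log (Real.log q) := by
    have c1 := natlog_le Y (by omega)
    have c2 := Real.log_le_log (by positivity) b1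
    rw [Real.log_mul (by norm_num) hLq.ne'] at c2
    have c3 := Real.log_le_log (by norm_num) h2
    linarith
  have b4 : (Y : ℝ) ^ D * Nat.log 2 Y ≤ (18 * Real.log q) ^ D * (4 * Real.log (Real.log q)) := by gcongr
  have hYL : 0 < (Y : ℝ) ^ D * Nat.log 2 Y := by positivity
  rw [hkap, div_le_iff₀ hYL] at hv
  rw [div_le_iff₀ (by positivity)]
  have hnn : 0 ≤ (q : ℝ) * (distInt (q * θ) * ∏ i, distInt (q * α i)) :=
    mul_nonneg (by positivity) (mul_nonneg (distInt_nonneg _) (Finset.prod_nonneg fun i _ => distInt_nonneg _))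
  calc c ≤ _ := hv
    _ ≤ q * (distInt (q * θ) * ∏ i, distInt (q * α i)) *
      ((18 * Real.log q) ^ D * (4 * Real.log (Real.log q))) := by gcongr
    _ = _ := by rw [mul_pow]; ring

/-! ### Construction steps for `θ` -/

/-- Rational approximations with `q ‖q θ‖ < k1 r` are avoided in the normal steps of the construction. -/
noncomputable def k1 (r : ℕ) : ℝ := (1 / 2) ^ (2 * r + 7)
/-- The lower bound guaranteed for `phi (log₂ q) q ‖q θ‖`. -/
noncomputable def et (D r : ℕ) : ℝ := k1 r / (3 * 4 ^ D)
/-- The number of binary digits consumed by a special step at level `f`: `2 ^ nu` is comparable with `phi f`. -/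
def nu (D f : ℕ) : ℕ := Nat.log 2 (phi D f) + 1

/-- `p / q` is a reduced fraction with `q |q x - p| < k1 r` that is visible at level `f`, that is, with
`q ^ 2` smaller than about `2 ^ f`. -/
def Near (r f : ℕ) (x : ℝ) (q : ℕ) (p : ℤ) : Prop :=
  1 ≤ q ∧ IsCoprime (q : ℤ) p ∧ q ^ 2 * 2 ^ (r + 3) < 2 ^ f ∧ q * |q * x - p| < k1 r

/-- The invariant of the interval `[a, a + 2⁻ᶠ]`. `one`: every approximation as in `Near` has a denominator
between `Qm` and `2 ^ B`, and is not too good. `two`: the denominators of two such approximations differ at least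
by a fourth power. -/
structure InvA (D r Qm f B : ℕ) (a : ℝ) : Prop where
  one : ∀ x, a ≤ x → x ≤ a + (1 / 2) ^ f → ∀ q p, Near r f x q p →
    Qm ≤ q ∧ q ≤ 2 ^ B ∧ et D r ≤ phi D (Nat.log 2 q) * (q * |q * x - p|) ∧
      3 * 4 ^ D * phi D (Nat.log 2 q) ≤ q ^ 2
  two : ∀ x, a ≤ x → x ≤ a + (1 / 2) ^ f → ∀ q p q' p', Near r f x q p → Near r f x q' p' →
    q < q' → q ^ 4 ≤ q'

/-- Two different fractions are at distance at least `1 / (q q')`, with denominators cleared. -/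
theorem rat_sep {q q' : ℕ} {p p' : ℤ} (hq : 1 ≤ q) (hq' : 1 ≤ q') (h : p * q' ≠ p' * q) (x x' : ℝ) :
    1 ≤ q' * |q * x - p| + q * |q' * x' - p'| + q * q' * |x - x'| := by
  have h1 : (1 : ℝ) ≤ |(p * q' - p' * q : ℝ)| := by
    have : (1 : ℤ) ≤ |p * q' - p' * q| := Int.one_le_abs (sub_ne_zero.2 h)
    exact_mod_cast this
  have hq0 : (0 : ℝ) < q := by exact_mod_cast hq
  have hq0' : (0 : ℝ) < q' := by exact_mod_cast hq'
  calc (1 : ℝ) ≤ |(p * q' - p' * q : ℝ)| := h1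
    _ = |(-(q' * (q * x - p)) + q * (q' * x' - p')) + q * q' * (x - x')| := by congr 1; ring
    _ ≤ |-(q' * (q * x - p)) + q * (q' * x' - p')| + |q * q' * (x - x')| := abs_add_le _ _
    _ ≤ |-(q' * (q * x - p))| + |q * (q' * x' - p')| + |q * q' * (x - x')| := by
        gcongr; exact abs_add_le _ _
    _ = _ := by rw [abs_neg, abs_mul, abs_mul, abs_mul, abs_mul, abs_of_pos hq0, abs_of_pos hq0']

set_option maxHeartbeats 1000000 in
/-- Of `2 ^ r` evenly spaced subintervals, at most one meets a neighbourhood of a fraction that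
becomes visible only now, because such fractions are far apart. Keep `2 ^ (r - 1)` of the others. -/
theorem normal_step {D r Qm f B : ℕ} (hr : 1 ≤ r) {a : ℝ} (h : InvA D r Qm f B a) :
    ∃ c : Fin (2 ^ (r - 1)) → ℝ, (∀ j, InvA D r Qm (f + r + 1) B (c j) ∧
      a ≤ c j ∧ c j + (1 / 2) ^ (f + r + 1) ≤ a + (1 / 2) ^ f) ∧
      ∀ j j', j ≠ j' → 2 * (1 / 2) ^ (f + r + 1) ≤ |c j - c j'| := by
  classical
  set ℓ' : ℝ := (1 / 2) ^ (f + r + 1) with hℓ'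
  have hp : 0 < ℓ' := by positivity
  have hρ : (2 : ℝ) ^ r * (1 / 2) ^ r = 1 := by rw [← mul_pow]; norm_num
  have hF : (2 : ℝ) ^ f * (1 / 2) ^ f = 1 := by rw [← mul_pow]; norm_num
  have hℓ : (1 / 2 : ℝ) ^ f = 2 * 2 ^ r * ℓ' := by
    rw [hℓ', pow_add, pow_add]; linear_combination -(1 / 2) ^ f * hρ
  set ch : Fin (2 ^ r) → ℝ := fun j => a + 2 * ℓ' * (j : ℕ) with hch
  have hin : ∀ j, a ≤ ch j ∧ ch j + ℓ' ≤ a + (1 / 2) ^ f := by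
    intro j
    have hj : ((j : ℕ) : ℝ) + 1 ≤ 2 ^ r := by exact_mod_cast j.2
    rw [hℓ, hch]
    constructor
    · have : (0 : ℝ) ≤ 2 * ℓ' * (j : ℕ) := by positivity
      simp only; linarith
    · simp only; nlinarith
  let bad : Fin (2 ^ r) → Prop := fun j => ∃ x, ch j ≤ x ∧ x ≤ ch j + ℓ' ∧ ∃ q p,
    Near r (f + r + 1) x q p ∧ 2 ^ f ≤ q ^ 2 * 2 ^ (r + 3)
  have hk : k1 r * (8 * 2 ^ r) ≤ ℓ' / 8 * 2 ^ f := by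
    have h2 : (2 : ℝ) ^ f * ℓ' = (1 / 2) ^ r / 2 := by
      rw [hℓ', pow_add, pow_add]; linear_combination (1 / 2) ^ r / 2 * hF
    rw [show ℓ' / 8 * 2 ^ f = (2 ^ f * ℓ') / 8 by ring, h2, k1, pow_add, pow_mul', pow_two]
    have h3 := congrArg (fun z => (1 / 2 : ℝ) ^ r * z) hρ
    simp only [mul_one] at h3
    have : (1 / 2 : ℝ) ^ r * (1 / 2) ^ r * (1 / 2) ^ 7 * (8 * 2 ^ r) =
      (1 / 2) ^ r * (2 ^ r * (1 / 2) ^ r) / 16 := by ring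
    rw [this, hρ]; linarith
  -- at most one subinterval is bad: two different new fractions would be too close to each other
  have hone : ∀ j j', bad j → bad j' → j = j' := by
    rintro j j' ⟨x, hx1, hx2, q, p, ⟨hq, -, hq2, hqx⟩, hqf⟩ ⟨x', hx1', hx2', q', p', ⟨hq', -, hq2', hqx'⟩, hqf'⟩
    have hup : ∀ q : ℕ, q ^ 2 * 2 ^ (r + 3) < 2 ^ (f + r + 1) → (4 : ℝ) * q ^ 2 ≤ 2 ^ f := by
      intro q hq
      have h1 : (4 * q ^ 2) * 2 ^ (r + 1) ≤ 2 ^ f * 2 ^ (r + 1) := by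
        calc _ = q ^ 2 * 2 ^ (r + 3) := by ring
          _ ≤ _ := by rw [← pow_add]; exact hq.le
      exact_mod_cast Nat.le_of_mul_le_mul_right h1 (by positivity)
    have hlo : ∀ q : ℕ, 2 ^ f ≤ q ^ 2 * 2 ^ (r + 3) → (2 : ℝ) ^ f ≤ q ^ 2 * (8 * 2 ^ r) := by
      intro q hq
      have : (2 : ℝ) ^ f ≤ q ^ 2 * 2 ^ (r + 3) := by exact_mod_cast hq
      rw [pow_add] at this; linarith
    have hFp : (0 : ℝ) < 2 ^ f := by positivity
    -- `|x - p/q| ≤ ℓ'/8`, with denominators cleared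
    have hcl : ∀ (q : ℕ) (p : ℤ) (x : ℝ), 1 ≤ q → (2 : ℝ) ^ f ≤ q ^ 2 * (8 * 2 ^ r) →
        q * |q * x - p| < k1 r → |q * x - p| ≤ ℓ' / 8 * q := by
      intro q p x hq h1 h2
      have hq0 : (0 : ℝ) < q := by exact_mod_cast hq
      have h3 : k1 r ≤ ℓ' / 8 * q ^ 2 := by
        refine le_of_mul_le_mul_right (?_ : k1 r * (8 * 2 ^ r) ≤ ℓ' / 8 * q ^ 2 * (8 * 2 ^ r)) (by positivity)
        refine hk.trans ?_
        rw [mul_assoc]; gcongr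
      refine le_of_mul_le_mul_left (?_ : (q : ℝ) * |q * x - p| ≤ q * (ℓ' / 8 * q)) hq0
      nlinarith
    have e1 := hcl q p x hq (hlo q hqf) hqx
    have e2 := hcl q' p' x' hq' (hlo q' hqf') hqx'
    have hq0 : (0 : ℝ) < q := by exact_mod_cast hq
    have hq0' : (0 : ℝ) < q' := by exact_mod_cast hq'
    have hqq : 4 * ((q : ℝ) * q') ≤ 2 ^ f := by
      nlinarith [hup q hq2, hup q' hq2', sq_nonneg ((q : ℝ) - q')]
    by_cases hpq : p * q' = p' * q
    · have hpq' : (p : ℝ) * q' = p' * q := by exact_mod_cast hpq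
      have e3 : q * q' * |x - x'| ≤ q * q' * (ℓ' / 4) := by
        calc q * q' * |x - x'| = |q' * (q * x - p) - q * (q' * x' - p')| := by
              have : (q' : ℝ) * (q * x - p) - q * (q' * x' - p') = q * q' * (x - x') := by
                linear_combination -hpq'
              rw [this, abs_mul, abs_mul, abs_of_pos hq0, abs_of_pos hq0']
          _ ≤ |q' * (q * x - p)| + |q * (q' * x' - p')| := abs_sub _ _
          _ = q' * |q * x - p| + q * |q' * x' - p'| := by
              rw [abs_mul, abs_mul, abs_of_pos hq0, abs_of_pos hq0']
          _ ≤ q' * (ℓ' / 8 * q) + q * (ℓ' / 8 * q') := by gcongr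
          _ = _ := by ring
      have e4 : |x - x'| ≤ ℓ' / 4 := le_of_mul_le_mul_left e3 (by positivity)
      rw [abs_le] at e4
      by_contra hne
      simp only [hch] at hx1 hx2 hx1' hx2'
      rcases Nat.lt_or_gt_of_ne (fun h => hne (Fin.ext h)) with hlt | hlt
      · have : ((j : ℕ) : ℝ) + 1 ≤ (j' : ℕ) := by exact_mod_cast hlt
        nlinarith
      · have : ((j' : ℕ) : ℝ) + 1 ≤ (j : ℕ) := by exact_mod_cast hlt
        nlinarith
    · exfalso
      have e3 := rat_sep hq hq' hpq x x'
      have e4 : |x - x'| ≤ (1 / 2) ^ f := by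
        have := hin j
        have := hin j'
        rw [abs_le]; constructor <;> linarith
      have e5 : (q : ℝ) * q' * |x - x'| ≤ q * q' * (1 / 2) ^ f := by gcongr
      have e6 : q' * |q * x - p| ≤ q' * (ℓ' / 8 * q) := by gcongr
      have e7 : q * |q' * x' - p'| ≤ q * (ℓ' / 8 * q') := by gcongr
      have e8 : ℓ' ≤ (1 / 2) ^ f := by
        have : (1 : ℝ) ≤ 2 ^ r := one_le_pow₀ (by norm_num)
        rw [hℓ]; nlinarith
      have e9 : (q : ℝ) * q' * ℓ' ≤ q * q' * (1 / 2) ^ f := by gcongr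
      have e10 : 4 * ((q : ℝ) * q') * (1 / 2) ^ f ≤ 2 ^ f * (1 / 2) ^ f := by gcongr
      rw [hF] at e10
      have e11 : q' * (ℓ' / 8 * q) = (q : ℝ) * q' * ℓ' / 8 := by ring
      have e12 : q * (ℓ' / 8 * q') = (q : ℝ) * q' * ℓ' / 8 := by ring
      rw [e11] at e6
      rw [e12] at e7
      clear_value ℓ'
      linarith
  set S := Finset.univ.filter fun j => ¬ bad j
  have hS : 2 ^ (r - 1) ≤ S.card := by
    have h1 : (Finset.univ.filter bad).card ≤ 1 := by
      rw [Finset.card_le_one]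
      intro j hj j' hj'
      exact hone j j' (Finset.mem_filter.1 hj).2 (Finset.mem_filter.1 hj').2
    have h2 := Finset.card_filter_add_card_filter_not (s := (Finset.univ : Finset (Fin (2 ^ r)))) bad
    rw [Finset.card_univ, Fintype.card_fin] at h2
    have h3 : 2 ^ r = 2 * 2 ^ (r - 1) := by rw [← pow_succ', Nat.sub_add_cancel hr]
    have h4 : 1 ≤ 2 ^ (r - 1) := Nat.one_le_two_pow
    change _ ≤ (Finset.univ.filter fun j => ¬ bad j).card
    omega
  refine ⟨fun j => ch (S.equivFin.symm (Fin.castLE hS j)).1, fun j => ?_, fun j j' hjj => ?_⟩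
  · have hj := (Finset.mem_filter.1 (S.equivFin.symm (Fin.castLE hS j)).2).2
    beta_reduce
    generalize (S.equivFin.symm (Fin.castLE hS j)).1 = i at hj ⊢
    -- on a retained subinterval no fraction becomes newly visible
    have hold : ∀ x, ch i ≤ x → x ≤ ch i + ℓ' → ∀ q p, Near r (f + r + 1) x q p → Near r f x q p := by
      intro x h1 h2 q p hN
      refine ⟨hN.1, hN.2.1, ?_, hN.2.2.2⟩
      by_contra h3
      exact hj ⟨x, h1, h2, q, p, hN, not_lt.1 h3⟩
    refine ⟨⟨fun x h1 h2 q p hN => ?_, fun x h1 h2 q p q' p' hN hN' => ?_⟩, hin i⟩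
    · exact h.one x ((hin i).1.trans h1) (h2.trans (hin i).2) q p (hold x h1 h2 q p hN)
    · exact h.two x ((hin i).1.trans h1) (h2.trans (hin i).2) q p q' p' (hold x h1 h2 q p hN)
        (hold x h1 h2 q' p' hN')
  · have hne : (S.equivFin.symm (Fin.castLE hS j)).1 ≠ (S.equivFin.symm (Fin.castLE hS j')).1 := by
      intro h
      exact hjj (Fin.castLE_injective hS (S.equivFin.symm.injective (Subtype.ext h)))
    have hsep : ∀ u v : Fin (2 ^ r), u ≠ v → 2 * ℓ' ≤ |ch u - ch v| := by
      intro u v huv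
      simp only [hch]
      rcases Nat.lt_or_gt_of_ne (fun h => huv (Fin.ext h)) with hlt | hlt
      · have : ((u : ℕ) : ℝ) + 1 ≤ (v : ℕ) := by exact_mod_cast hlt
        exact le_abs.2 (Or.inr (by nlinarith))
      · have : ((v : ℕ) : ℝ) + 1 ≤ (u : ℕ) := by exact_mod_cast hlt
        exact le_abs.2 (Or.inl (by nlinarith))
    exact hsep _ _ hne

/-- Size conditions under which a special step is possible at level `f`, the earlier special denominators
being at most `2 ^ B`. -/
structure Spc (D r Qm f B : ℕ) : Prop where
  c1 : Qm ^ 2 * 2 ^ (2 * r + 6) ≤ 2 ^ f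
  c2 : 8 * B + 2 * r + 7 ≤ f
  c3 : 3 * 4 ^ D * 2 ^ (2 * r + 7) * 2 ^ B * phi D B < 2 ^ ((f + 2 * r + 10) / 2)
  c4 : r + 11 ≤ nu D f
  c5 : 3 * 4 ^ D * phi D f * 2 ^ (2 * r + 6) ≤ 2 ^ f
  c6 : 4 * r + 16 ≤ f

theorem log2_le {q B : ℕ} (h : q ≤ 2 ^ B) : Nat.log 2 q ≤ B :=
  (Nat.log_mono_right h).trans (Nat.log_pow one_lt_two B).le

theorem k1_mul (r : ℕ) : k1 r * (128 * (2 ^ r) ^ 2) = 1 := by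
  have : (1 / 2 : ℝ) ^ r * 2 ^ r = 1 := by rw [← mul_pow]; norm_num
  rw [k1, pow_add, pow_mul']
  linear_combination ((1 / 2 : ℝ) ^ r * 2 ^ r + 1) * this

theorem k1_pos (r : ℕ) : 0 < k1 r := by unfold k1; positivity

theorem et_mul (D r : ℕ) : et D r * (3 * 4 ^ D * (128 * (2 ^ r) ^ 2)) = 1 := by
  have h := k1_mul r
  have h4 : (4 : ℝ) ^ D ≠ 0 := by positivity
  rw [et]; field_simp; linarith

theorem et_pos (D r : ℕ) : 0 < et D r := by
  unfold et; exact div_pos (k1_pos r) (by positivity)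

/-- Near the midpoint of the interval there is a fraction with `Q ^ 2` comparable with `2 ^ f`. It is
the one supplied by the Dirichlet approximation theorem; if its denominator were much smaller, it would be an
approximation too good for the invariant. -/
theorem special_approx {D r Qm f B : ℕ} {a : ℝ} (h : InvA D r Qm f B a) (S : Spc D r Qm f B) :
    ∃ (Q : ℕ) (P : ℤ), 1 ≤ Q ∧ IsCoprime (Q : ℤ) P ∧
      |a + (1 / 2) ^ f / 2 - P / Q| ≤ (1 / 2) ^ f / 4 ∧
      (2 : ℝ) ^ f ≤ Q ^ 2 * (64 * (2 ^ r) ^ 2) ∧ (Q : ℝ) ^ 2 ≤ 1024 * (2 ^ r) ^ 2 * 2 ^ f := by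
  set t := (f + 2 * r + 10) / 2 with ht
  have hT1 : 1 ≤ t := by omega
  have hT2 : 2 ≤ 2 ^ t := by calc 2 = 2 ^ 1 := rfl
                              _ ≤ _ := Nat.pow_le_pow_right (by norm_num) hT1
  obtain ⟨u, hu1, hu2⟩ := Real.exists_rat_abs_sub_le_and_den_le (a + (1 / 2) ^ f / 2)
    (n := 2 ^ t - 1) (by omega)
  rw [Nat.cast_sub (by omega)] at hu1
  push_cast at hu1
  rw [sub_add_cancel] at hu1
  have hl0 : (0 : ℝ) < (1 / 2) ^ f := by positivity
  have hF : (2 : ℝ) ^ f * (1 / 2) ^ f = 1 := by rw [← mul_pow]; norm_num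
  have hQ1 : 1 ≤ u.den := u.den_pos
  have hQ0 : (0 : ℝ) < u.den := by exact_mod_cast hQ1
  have hQ1' : (1 : ℝ) ≤ u.den := by exact_mod_cast hQ1
  have hQT : (u.den : ℝ) ≤ 2 ^ t := by
    have : u.den ≤ 2 ^ t := hu2.trans (Nat.sub_le _ _)
    exact_mod_cast this
  have hu : (u : ℝ) = (u.num : ℝ) / (u.den : ℝ) := Rat.cast_def u
  rw [hu] at hu1
  have hcop : IsCoprime (u.den : ℤ) u.num := by
    rw [Int.isCoprime_iff_gcd_eq_one, Int.gcd_comm]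
    simpa [Int.gcd] using u.reduced
  have hTlo : (512 : ℝ) * (2 ^ r) ^ 2 * 2 ^ f ≤ (2 ^ t) ^ 2 := by
    rw [← pow_mul, ← pow_mul, show (512 : ℝ) = 2 ^ 9 by norm_num, ← pow_add, ← pow_add]
    exact pow_le_pow_right₀ (by norm_num) (by omega)
  have hThi : ((2 : ℝ) ^ t) ^ 2 ≤ 1024 * (2 ^ r) ^ 2 * 2 ^ f := by
    rw [← pow_mul, ← pow_mul, show (1024 : ℝ) = 2 ^ 10 by norm_num, ← pow_add, ← pow_add]
    exact pow_le_pow_right₀ (by norm_num) (by omega)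
  have c3 : (3 : ℝ) * 4 ^ D * (2 ^ (2 * r + 7)) * 2 ^ B * phi D B < 2 ^ t := by exact_mod_cast S.c3
  have hk := k1_mul r
  have he := et_mul D r
  have hep := et_pos D r
  -- a visible denominator far below `2 ^ t` would contradict the invariant
  have hN : (128 * (2 ^ r) ^ 2 * (u.den : ℝ) < 2 ^ t) → ¬ u.den ^ 2 * 2 ^ (r + 3) < 2 ^ f := by
    intro h1 h2
    have hd : |u.den * (a + (1 / 2) ^ f / 2) - u.num| * 2 ^ t ≤ 1 := by
      have : u.den * (a + (1 / 2) ^ f / 2) - u.num = u.den * (a + (1 / 2) ^ f / 2 - u.num / u.den) := by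
        field_simp
      rw [this, abs_mul, abs_of_pos hQ0]
      rw [le_div_iff₀ (by positivity)] at hu1
      linarith
    set z := |u.den * (a + (1 / 2) ^ f / 2) - (u.num : ℝ)| with hz
    have hz0 : 0 ≤ z := abs_nonneg _
    have hT0 : (0 : ℝ) < 2 ^ t := by positivity
    have hNear : Near r f (a + (1 / 2) ^ f / 2) u.den u.num := by
      refine ⟨hQ1, hcop, h2, ?_⟩
      rw [← hz]
      by_contra hc
      push Not at hc
      have e1 : k1 r * 2 ^ t ≤ u.den * (z * 2 ^ t) := by
        rw [← mul_assoc]; gcongr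
      have e2 : u.den * (z * 2 ^ t) ≤ u.den * 1 := by gcongr
      have e3 : k1 r * (128 * (2 ^ r) ^ 2 * (u.den : ℝ)) < k1 r * 2 ^ t := by
        have := k1_pos r
        gcongr
      rw [← mul_assoc, hk] at e3
      linarith
    obtain ⟨-, g1, g2, -⟩ := h.one _ (by linarith) (by linarith) _ _ hNear
    rw [← hz] at g2
    have g3 : (phi D (Nat.log 2 u.den) : ℝ) ≤ phi D B := by
      exact_mod_cast phi_mono D (log2_le g1)
    have g4 : (u.den : ℝ) ≤ 2 ^ B := by exact_mod_cast g1
    have g5 : et D r * 2 ^ t ≤ phi D B * 2 ^ B := by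
      calc et D r * 2 ^ t ≤ phi D (Nat.log 2 u.den) * (u.den * z) * 2 ^ t := by gcongr
        _ = phi D (Nat.log 2 u.den) * (u.den * (z * 2 ^ t)) := by ring
        _ ≤ phi D B * (2 ^ B * 1) := by gcongr
        _ = _ := by ring
    have g6 : et D r * (3 * 4 ^ D * (2 ^ (2 * r + 7)) * 2 ^ B * phi D B) < et D r * 2 ^ t := by gcongr
    have g7 : et D r * (3 * 4 ^ D * (2 ^ (2 * r + 7)) * 2 ^ B * phi D B) = phi D B * 2 ^ B := by
      have : (2 : ℝ) ^ (2 * r + 7) = 128 * (2 ^ r) ^ 2 := by rw [pow_add, pow_mul']; ring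
      rw [this]; linear_combination (phi D B * 2 ^ B : ℝ) * he
    linarith
  set ρ : ℝ := 2 ^ r with hρ
  have hρ1 : 1 ≤ ρ := one_le_pow₀ (by norm_num)
  have hF0 : (0 : ℝ) < 2 ^ f := by positivity
  -- it suffices to have `4 * 2 ^ f ≤ 2 ^ t * Q`
  have hsuff : 4 * 2 ^ f ≤ 2 ^ t * (u.den : ℝ) →
      |a + (1 / 2) ^ f / 2 - u.num / u.den| ≤ (1 / 2) ^ f / 4 := by
    intro h1
    refine hu1.trans ?_
    rw [div_le_iff₀ (by positivity)]
    have : (1 / 2) ^ f / 4 * (4 * 2 ^ f) ≤ (1 / 2) ^ f / 4 * (2 ^ t * (u.den : ℝ)) := by gcongr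
    linarith
  refine ⟨u.den, u.num, hQ1, hcop, ?_⟩
  have hlast : (u.den : ℝ) ^ 2 ≤ 1024 * ρ ^ 2 * 2 ^ f := by
    refine le_trans ?_ hThi
    gcongr
  by_cases hc : u.den ^ 2 * 2 ^ (r + 3) < 2 ^ f
  · have h1 : 2 ^ t ≤ 128 * ρ ^ 2 * (u.den : ℝ) := not_lt.1 fun h => hN h hc
    refine ⟨hsuff ?_, ?_, hlast⟩
    · have e1 : (2 : ℝ) ^ t * 2 ^ t ≤ 2 ^ t * (128 * ρ ^ 2 * (u.den : ℝ)) := by gcongr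
      refine le_of_mul_le_mul_left (?_ : 128 * ρ ^ 2 * (4 * 2 ^ f) ≤ 128 * ρ ^ 2 * (2 ^ t * (u.den : ℝ)))
        (by positivity)
      nlinarith
    · have e1 : ((2 : ℝ) ^ t) ^ 2 ≤ (128 * ρ ^ 2 * (u.den : ℝ)) ^ 2 := by gcongr
      refine le_of_mul_le_mul_left (?_ : 512 * ρ ^ 2 * 2 ^ f ≤ 512 * ρ ^ 2 * (u.den ^ 2 * (64 * ρ ^ 2)))
        (by positivity)
      have : (0 : ℝ) ≤ ρ ^ 4 * u.den ^ 2 := by positivity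
      nlinarith
  · have h1 : (2 : ℝ) ^ f ≤ u.den ^ 2 * (8 * ρ) := by
      have : (2 : ℝ) ^ f ≤ u.den ^ 2 * 2 ^ (r + 3) := by exact_mod_cast not_lt.1 hc
      rw [pow_add] at this; linarith
    refine ⟨hsuff ?_, ?_, hlast⟩
    · refine le_of_sq_le_sq ?_ (by positivity)
      have e1 : (2 : ℝ) ^ f * 2 ^ f ≤ 2 ^ f * (u.den ^ 2 * (8 * ρ)) := by gcongr
      have e2 : 512 * ρ ^ 2 * 2 ^ f * (u.den : ℝ) ^ 2 ≤ (2 ^ t) ^ 2 * (u.den : ℝ) ^ 2 := by gcongr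
      have e3 : (16 * 1 : ℝ) * (2 ^ f * 2 ^ f) ≤ (64 * ρ) * (2 ^ f * (u.den ^ 2 * (8 * ρ))) := by
        gcongr
        norm_num
      linarith
    · refine h1.trans ?_
      gcongr ?_ * ?_
      nlinarith

/-- Dividing the argument by four changes `phi` by a bounded factor. -/
theorem phi_quarter {D f g : ℕ} (h : f + 2 ≤ 4 * (g + 2)) : phi D f ≤ 3 * 4 ^ D * phi D g := by
  have h1 : Nat.log 2 (f + 2) ≤ 3 * Nat.log 2 (g + 2) := by
    have e1 : Nat.log 2 (f + 2) ≤ Nat.log 2 ((g + 2) * 2 * 2) :=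
      Nat.log_mono_right (by omega)
    rw [Nat.log_mul_base one_lt_two (by omega), Nat.log_mul_base one_lt_two (by omega)] at e1
    have e2 : 1 ≤ Nat.log 2 (g + 2) := Nat.log_pos one_lt_two (by omega)
    omega
  calc phi D f ≤ (4 * (g + 2)) ^ D * (3 * Nat.log 2 (g + 2)) := by unfold phi; gcongr
    _ = _ := by unfold phi; rw [mul_pow]; ring

/-- On an interval at distance about `2⁻⁽ᶠ⁺ⱽ⁾` from `P / Q`, the only fraction that becomes newly
visible is `P / Q` itself. -/
theorem special_class {r f V : ℕ} {Q q : ℕ} {P p : ℤ} {x : ℝ} (hr : 1 ≤ r) (hV : r + 11 ≤ V)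
    (hQ : 1 ≤ Q) (hcop : IsCoprime (Q : ℤ) P) (hQ2 : (Q : ℝ) ^ 2 ≤ 1024 * (2 ^ r) ^ 2 * 2 ^ f)
    (hx : |Q * x - P| ≤ Q * (2 * (1 / 2) ^ (f + V))) (hN : Near r (f + V) x q p) :
    (q = Q ∧ p = P) ∨ Near r f x q p := by
  obtain ⟨hq, hqc, hq2, hqx⟩ := hN
  by_cases hold : q ^ 2 * 2 ^ (r + 3) < 2 ^ f
  · exact Or.inr ⟨hq, hqc, hold, hqx⟩
  left
  by_contra hne
  have hpq : p * Q ≠ P * q := by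
    intro he
    apply hne
    have d1 : (q : ℤ) ∣ Q := hqc.dvd_of_dvd_mul_left ⟨P, by linarith⟩
    have d2 : (Q : ℤ) ∣ q := hcop.dvd_of_dvd_mul_left ⟨p, by linarith⟩
    have hqQ : q = Q := Nat.dvd_antisymm (Int.natCast_dvd_natCast.1 d1) (Int.natCast_dvd_natCast.1 d2)
    refine ⟨hqQ, ?_⟩
    subst hqQ
    exact mul_right_cancel₀ (by exact_mod_cast (by omega : q ≠ 0)) he
  have h1 := rat_sep hq hQ hpq x x
  rw [sub_self, abs_zero, mul_zero, add_zero] at h1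
  have hq0 : (0 : ℝ) < q := by exact_mod_cast hq
  have hQ0 : (0 : ℝ) < Q := by exact_mod_cast hQ
  have hρ1 : (2 : ℝ) ≤ 2 ^ r := by
    calc (2 : ℝ) = 2 ^ 1 := by norm_num
      _ ≤ _ := pow_le_pow_right₀ (by norm_num) hr
  have hV1 : 2048 * 2 ^ r ≤ (2 : ℝ) ^ V := by
    calc (2048 : ℝ) * 2 ^ r = 2 ^ (r + 11) := by rw [pow_add]; ring
      _ ≤ _ := pow_le_pow_right₀ (by norm_num) hV
  have hlo : (2 : ℝ) ^ f ≤ q ^ 2 * (8 * 2 ^ r) := by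
    have : (2 : ℝ) ^ f ≤ q ^ 2 * 2 ^ (r + 3) := by exact_mod_cast not_lt.1 hold
    rw [pow_add] at this; linarith
  have hhi : (q : ℝ) ^ 2 * (8 * 2 ^ r) ≤ 2 ^ f * 2 ^ V := by
    have : (q : ℝ) ^ 2 * 2 ^ (r + 3) < 2 ^ (f + V) := by exact_mod_cast hq2
    rw [pow_add, pow_add] at this; linarith
  have hFV : (2 : ℝ) ^ f * 2 ^ V * (1 / 2) ^ (f + V) = 1 := by
    rw [← pow_add, ← mul_pow]; norm_num
  have hk := k1_mul r
  set ρ : ℝ := 2 ^ r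
  set F : ℝ := 2 ^ f
  set W : ℝ := 2 ^ V
  set l : ℝ := (1 / 2) ^ (f + V)
  have hl : 0 < l := by positivity
  have hF : 0 < F := by positivity
  have hW : 0 < W := by positivity
  have h2 : 4 * (q * Q) ≤ F * W := by
    refine le_of_sq_le_sq ?_ (by positivity)
    refine le_of_mul_le_mul_left (?_ : (8 * ρ) * (4 * (q * Q)) ^ 2 ≤ (8 * ρ) * (F * W) ^ 2) (by positivity)
    calc (8 * ρ) * (4 * (q * Q)) ^ 2 = 16 * (q ^ 2 * (8 * ρ)) * Q ^ 2 := by ring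
      _ ≤ 16 * (F * W) * (1024 * ρ ^ 2 * F) := by gcongr
      _ = (8 * ρ) * (F * W) * F * (2048 * ρ) := by ring
      _ ≤ (8 * ρ) * (F * W) * F * W := by gcongr
      _ = _ := by ring
  have h3 : q * |Q * x - P| ≤ 1 / 2 := by
    calc q * |Q * x - P| ≤ q * (Q * (2 * l)) := by gcongr
      _ = 4 * (q * Q) * l / 2 := by ring
      _ ≤ (F * W) * l / 2 := by gcongr
      _ = 1 / 2 := by rw [hFV]
  have h4 : 1 / 2 ≤ Q * |q * x - p| := by linarith
  have h5 : q * (64 * ρ ^ 2) < Q := by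
    have e1 : q * (1 / 2) ≤ q * (Q * |q * x - p|) := by gcongr
    have e2 : Q * (q * |q * x - p|) < Q * k1 r := by gcongr
    have e3 : q * (1 / 2) < Q * k1 r := by linarith
    have e4 : q * (1 / 2) * (128 * ρ ^ 2) < Q * k1 r * (128 * ρ ^ 2) := by gcongr
    rw [mul_assoc (Q : ℝ), hk] at e4
    linarith
  have h6 : (q * (64 * ρ ^ 2)) ^ 2 < (Q : ℝ) ^ 2 := by gcongr
  have h7 : 4 * ρ ^ 2 * q ^ 2 < F := by
    refine lt_of_mul_lt_mul_left (?_ : (1024 * ρ ^ 2) * (4 * ρ ^ 2 * q ^ 2) < (1024 * ρ ^ 2) * F) (by positivity)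
    calc _ = (q * (64 * ρ ^ 2)) ^ 2 := by ring
      _ < _ := h6.trans_le hQ2
  have h9 : 4 * ρ < 8 := by
    refine lt_of_mul_lt_mul_left (?_ : ρ * (q : ℝ) ^ 2 * (4 * ρ) < ρ * q ^ 2 * 8) (by positivity)
    linarith
  linarith

set_option maxHeartbeats 1000000 in
/-- The interval is replaced by a much shorter one next to a fraction `P / Q`, on which
`phi (log₂ Q) Q ‖Q x‖` is bounded above and below. -/
theorem special_step {D r Qm f B : ℕ} (hr : 1 ≤ r) {a : ℝ} (h : InvA D r Qm f B a)
    (S : Spc D r Qm f B) :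
    ∃ a', a ≤ a' ∧ a' + (1 / 2) ^ (f + nu D f) ≤ a + (1 / 2) ^ f ∧
      InvA D r Qm (f + nu D f) f a' ∧ ∃ (Q : ℕ) (P : ℤ), 2 ^ f ≤ Q ^ 2 * 2 ^ (2 * r + 6) ∧
        ∀ x, a' ≤ x → x ≤ a' + (1 / 2) ^ (f + nu D f) →
          phi D (Nat.log 2 Q) * (Q * |Q * x - P|) ≤ (2 : ℝ) ^ (2 * r + 11) := by
  obtain ⟨Q, P, hQ, hcop, hx0, hQlo, hQhi⟩ := special_approx h S
  have hQ0 : (0 : ℝ) < Q := by exact_mod_cast hQ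
  have hV := S.c4
  set V := nu D f with hVdef
  have hφ1 : (phi D f : ℝ) ≤ 2 ^ V := by
    have : phi D f < 2 ^ V := Nat.lt_pow_succ_log_self one_lt_two _
    exact_mod_cast this.le
  have hφ2 : (2 : ℝ) ^ V ≤ 2 * phi D f := by
    have h1 := phi_pos D f
    have : 2 ^ (Nat.log 2 (phi D f)) ≤ phi D f := Nat.pow_log_le_self 2 (by omega)
    have h2 : 2 ^ V ≤ 2 * phi D f := by
      rw [hVdef, nu, pow_succ]; omega
    exact_mod_cast h2
  have hnat : 2 ^ f ≤ Q ^ 2 * 2 ^ (2 * r + 6) := by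
    have : (2 : ℝ) ^ f ≤ Q ^ 2 * 2 ^ (2 * r + 6) := by
      rw [pow_add, pow_mul']; linarith
    exact_mod_cast this
  have hQf : Q ≤ 2 ^ f := by
    have : (Q : ℝ) ≤ 2 ^ f := by
      refine le_of_sq_le_sq (hQhi.trans ?_) (by positivity)
      rw [← pow_mul, ← pow_mul, show (1024 : ℝ) = 2 ^ 10 by norm_num, ← pow_add, ← pow_add]
      exact pow_le_pow_right₀ (by norm_num) (by have := S.c6; omega)
    exact_mod_cast this
  have hφQ : phi D f ≤ 3 * 4 ^ D * phi D (Nat.log 2 Q) := by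
    apply phi_quarter
    have h1 : Q < 2 ^ (Nat.log 2 Q + 1) := Nat.lt_pow_succ_log_self one_lt_two _
    have h2 : 2 ^ f < 2 ^ (2 * (Nat.log 2 Q + 1) + (2 * r + 6)) := by
      refine hnat.trans_lt ?_
      rw [pow_add _ (2 * (Nat.log 2 Q + 1)), mul_comm 2 (Nat.log 2 Q + 1), pow_mul _ (Nat.log 2 Q + 1)]
      have hp : 0 < 2 ^ (2 * r + 6) := by positivity
      exact Nat.mul_lt_mul_of_pos_right (Nat.pow_lt_pow_left h1 two_ne_zero) hp
    have h3 := (Nat.pow_lt_pow_iff_right one_lt_two).1 h2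
    have := S.c6
    omega
  have hφQ' : phi D (Nat.log 2 Q) ≤ phi D f := phi_mono D (log2_le hQf)
  have hF : (2 : ℝ) ^ f * (1 / 2) ^ f = 1 := by rw [← mul_pow]; norm_num
  have hW : (2 : ℝ) ^ V * (1 / 2) ^ V = 1 := by rw [← mul_pow]; norm_num
  have hFV : (2 : ℝ) ^ f * 2 ^ V * (1 / 2) ^ (f + V) = 1 := by
    rw [← pow_add, ← mul_pow]; norm_num
  have hsmall : (1 / 2 : ℝ) ^ (f + V) ≤ (1 / 2) ^ f / 2048 := by
    have h1 : (1 / 2 : ℝ) ^ V ≤ (1 / 2) ^ 11 :=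
      pow_le_pow_of_le_one (by norm_num) (by norm_num) (by omega)
    calc (1 / 2 : ℝ) ^ (f + V) = (1 / 2) ^ f * (1 / 2) ^ V := pow_add _ _ _
      _ ≤ (1 / 2) ^ f * (1 / 2) ^ 11 := by gcongr
      _ = _ := by ring
  have hl : (0 : ℝ) < (1 / 2) ^ (f + V) := by positivity
  set l : ℝ := (1 / 2) ^ (f + V) with hldef
  have hl2 : (0 : ℝ) < (1 / 2) ^ f := by positivity
  rw [abs_le] at hx0
  have hup : (P : ℝ) / Q + l + l ≤ a + (1 / 2) ^ f := by linarith [hx0.1]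
  have hdn : a ≤ (P : ℝ) / Q + l := by linarith [hx0.2]
  have hdiff : ∀ x : ℝ, Q * x - P = Q * (x - P / Q) := fun x => by field_simp
  have hxl : ∀ x : ℝ, P / Q + l ≤ x → Q * l ≤ |Q * x - P| := fun x hx => by
    rw [hdiff, abs_mul, abs_of_pos hQ0]
    gcongr
    exact (by linarith : l ≤ x - P / Q).trans (le_abs_self _)
  have hxu : ∀ x : ℝ, P / Q + l ≤ x → x ≤ P / Q + l + l → |Q * x - P| ≤ Q * (2 * l) := fun x hx hx' => by
    rw [hdiff, abs_mul, abs_of_pos hQ0]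
    gcongr
    rw [abs_le]; constructor <;> linarith
  have hclass : ∀ x : ℝ, P / Q + l ≤ x → x ≤ P / Q + l + l → ∀ q p, Near r (f + V) x q p →
      (q = Q ∧ p = P) ∨ Near r f x q p := fun x hx hx' q p hN =>
    special_class hr hV hQ hcop hQhi (hxu x hx hx') hN
  have hB8 : 2 ^ (4 * B) ≤ Q := by
    have h1 : 2 ^ (8 * B + (2 * r + 6)) ≤ Q ^ 2 * 2 ^ (2 * r + 6) :=
      (Nat.pow_le_pow_right (by norm_num) (by have := S.c2; omega)).trans hnat
    rw [pow_add] at h1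
    have h2 := Nat.le_of_mul_le_mul_right h1 (by positivity)
    rw [show 8 * B = 4 * B * 2 by ring, pow_mul] at h2
    exact (Nat.pow_le_pow_iff_left (by norm_num)).1 h2
  have hBQ : 2 ^ B ≤ Q := (Nat.pow_le_pow_right (by norm_num) (by omega)).trans hB8
  refine ⟨P / Q + l, hdn, hup, ⟨?_, ?_⟩, Q, P, hnat, ?_⟩
  · intro x hx hx' q p hN
    rcases hclass x hx hx' q p hN with ⟨rfl, rfl⟩ | hN
    · refine ⟨?_, hQf, ?_, ?_⟩
      · have := Nat.le_of_mul_le_mul_right (S.c1.trans hnat) (by positivity)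
        exact (Nat.pow_le_pow_iff_left (by norm_num)).1 this
      · have e1 : q * (q * l) ≤ q * |q * x - p| := by gcongr; exact hxl x hx
        have e2 : (phi D f : ℝ) ≤ 3 * 4 ^ D * phi D (Nat.log 2 q) := by exact_mod_cast hφQ
        have he := et_mul D r
        have e3 : 2 ^ f * l ≤ q ^ 2 * (64 * (2 ^ r) ^ 2) * l := by gcongr
        have e4 : (1 : ℝ) ≤ 2 * phi D f * (2 ^ f * l) := by
          calc (1 : ℝ) = 2 ^ V * (2 ^ f * l) := by linarith
            _ ≤ _ := by gcongr
        have e5 : (1 : ℝ) ≤ 2 * (3 * 4 ^ D * phi D (Nat.log 2 q)) * (q ^ 2 * (64 * (2 ^ r) ^ 2) * l) :=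
          e4.trans (by gcongr)
        have e6 : et D r * 1 ≤ et D r * (2 * (3 * 4 ^ D * phi D (Nat.log 2 q)) * (q ^ 2 * (64 * (2 ^ r) ^ 2) * l)) := by
          have := et_pos D r
          gcongr
        calc et D r ≤ et D r * (2 * (3 * 4 ^ D * phi D (Nat.log 2 q)) * (q ^ 2 * (64 * (2 ^ r) ^ 2) * l)) := by
              linarith
          _ = phi D (Nat.log 2 q) * (q * (q * l)) := by
              linear_combination (phi D (Nat.log 2 q) * (q * (q * l)) : ℝ) * he
          _ ≤ _ := by gcongr
      · have h1 : 3 * 4 ^ D * phi D (Nat.log 2 q) * 2 ^ (2 * r + 6) ≤ q ^ 2 * 2 ^ (2 * r + 6) :=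
          calc _ ≤ 3 * 4 ^ D * phi D f * 2 ^ (2 * r + 6) := by gcongr
            _ ≤ _ := S.c5.trans hnat
        exact Nat.le_of_mul_le_mul_right h1 (by positivity)
    · obtain ⟨i1, i2, i3, i4⟩ := h.one x (hdn.trans hx) (hx'.trans hup) q p hN
      refine ⟨i1, i2.trans (Nat.pow_le_pow_right (by norm_num) (by have := S.c2; omega)), i3, i4⟩
  · intro x hx hx' q p q' p' hN hN' hqq
    rcases hclass x hx hx' q p hN with ⟨rfl, rfl⟩ | hN <;>
    rcases hclass x hx hx' q' p' hN' with ⟨rfl, rfl⟩ | hN'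
    · exact absurd hqq (lt_irrefl _)
    · have := (h.one x (hdn.trans hx) (hx'.trans hup) q' p' hN').2.1
      omega
    · have i2 := (h.one x (hdn.trans hx) (hx'.trans hup) q p hN).2.1
      calc q ^ 4 ≤ (2 ^ B) ^ 4 := by gcongr
        _ = 2 ^ (4 * B) := by rw [← pow_mul, mul_comm]
        _ ≤ _ := hB8
    · exact h.two x (hdn.trans hx) (hx'.trans hup) q p q' p' hN hN' hqq
  · intro x hx hx'
    have e1 : (phi D (Nat.log 2 Q) : ℝ) ≤ 2 ^ V := by
      refine le_trans ?_ hφ1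
      exact_mod_cast hφQ'
    calc phi D (Nat.log 2 Q) * (Q * |Q * x - P|) ≤ 2 ^ V * (Q * (Q * (2 * l))) := by
          gcongr; exact hxu x hx hx'
      _ = 2 ^ V * Q ^ 2 * (2 * l) := by ring
      _ ≤ 2 ^ V * (1024 * (2 ^ r) ^ 2 * 2 ^ f) * (2 * l) := by gcongr
      _ = 2048 * (2 ^ r) ^ 2 * (2 ^ f * 2 ^ V * l) := by ring
      _ = 2048 * (2 ^ r) ^ 2 := by rw [hFV, mul_one]
      _ = _ := by rw [pow_add, pow_mul']; ring

/-! ### The Cantor set of `θ` -/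

open Filter

/-- Bookkeeping for the construction of `θ`: the level `f` (intervals have length `2⁻ᶠ`), a bound `2 ^ B` for
the special denominators used so far, the total number `w` of digits consumed by special steps, and the binary
logarithm `k` of the number of intervals. -/
structure ThSt where
  f : ℕ
  B : ℕ
  w : ℕ
  k : ℕ

/-- Stage `n` is special: a special step is possible, and special steps so far have consumed at most `n / r`
digits, so that they do not affect the dimension by more than `O(1 / r)`. -/
def Sp (D r Qm n : ℕ) (S : ThSt) : Prop := Spc D r Qm S.f S.B ∧ r * (nu D S.f + S.w) ≤ n

open Classical in
/-- Bookkeeping after one step, special or normal. -/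
noncomputable def nextSt (D r Qm n : ℕ) (S : ThSt) : ThSt :=
  if Sp D r Qm n S then ⟨S.f + nu D S.f, S.f, S.w + nu D S.f, S.k⟩
  else ⟨S.f + r + 1, S.B, S.w, S.k + (r - 1)⟩

/-- The sequence of states of the construction, starting from the unit interval. -/
noncomputable def st (D r Qm : ℕ) : ℕ → ThSt
  | 0 => ⟨0, 0, 0, 0⟩
  | n + 1 => nextSt D r Qm n (st D r Qm n)

theorem st_special {D r Qm n : ℕ} (h : Sp D r Qm n (st D r Qm n)) : st D r Qm (n + 1) =
    ⟨(st D r Qm n).f + nu D (st D r Qm n).f, (st D r Qm n).f,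
      (st D r Qm n).w + nu D (st D r Qm n).f, (st D r Qm n).k⟩ := by
  rw [st, nextSt, if_pos h]

theorem st_normal {D r Qm n : ℕ} (h : ¬ Sp D r Qm n (st D r Qm n)) : st D r Qm (n + 1) =
    ⟨(st D r Qm n).f + r + 1, (st D r Qm n).B, (st D r Qm n).w, (st D r Qm n).k + (r - 1)⟩ := by
  rw [st, nextSt, if_neg h]

theorem st_bounds (D r Qm n : ℕ) : r * (st D r Qm n).w ≤ n ∧
    (st D r Qm n).f ≤ (r + 1) * n + (st D r Qm n).w ∧ n ≤ (st D r Qm n).f ∧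
    (r - 1) * n ≤ (st D r Qm n).k + (r - 1) * (st D r Qm n).w := by
  induction n with
  | zero => simp [st]
  | succ n ih =>
    obtain ⟨h1, h2, h3, h4⟩ := ih
    have hν : 1 ≤ nu D (st D r Qm n).f := Nat.le_add_left _ _
    by_cases h : Sp D r Qm n (st D r Qm n)
    · rw [st_special h]
      have := h.2
      refine ⟨by simp only; rw [add_comm (st D r Qm n).w]; omega, by simp only; nlinarith, by simp only; omega, ?_⟩
      have := Nat.mul_le_mul_left (r - 1) hν
      simp only
      rw [mul_add, mul_add]; omega
    · rw [st_normal h]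
      refine ⟨by simp only; omega, by simp only; nlinarith, by simp only; omega, ?_⟩
      simp only
      rw [mul_add]; omega

theorem ev_nu (D A : ℕ) : ∀ᶠ f : ℕ in atTop, A * (nu D f + A) ≤ f := by
  have h1 := (tendsto_add_atTop_nat 2).eventually
    (log_pow_le (2 * (A * (D + 1))) 1)
  filter_upwards [h1, eventually_ge_atTop (2 * (A * (D + 2 + A)) + 2)] with f h1 h2
  have h3 : (2 * (A * (D + 1))) * Nat.log 2 (f + 2) ≤ f + 2 := by
    simp only [pow_one] at h1
    exact_mod_cast h1
  have h4 : nu D f ≤ (D + 1) * (Nat.log 2 (f + 2) + 1) + 1 := by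
    unfold nu
    gcongr
    apply log2_le
    have h5 : f + 2 ≤ 2 ^ (Nat.log 2 (f + 2) + 1) := (Nat.lt_pow_succ_log_self one_lt_two _).le
    calc phi D f ≤ (f + 2) ^ D * (f + 2) := by
          unfold phi; gcongr; exact Nat.log_le_self _ _
      _ = (f + 2) ^ (D + 1) := (pow_succ _ _).symm
      _ ≤ (2 ^ (Nat.log 2 (f + 2) + 1)) ^ (D + 1) := by gcongr
      _ = _ := by rw [← pow_mul, mul_comm]
  calc A * (nu D f + A) ≤ A * ((D + 1) * (Nat.log 2 (f + 2) + 1) + 1 + A) := by gcongr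
    _ = A * (D + 1) * Nat.log 2 (f + 2) + A * (D + 2 + A) := by ring
    _ ≤ f := by
      have : 2 * (A * (D + 1)) * Nat.log 2 (f + 2) = 2 * (A * (D + 1) * Nat.log 2 (f + 2)) := by ring
      omega

theorem ev_spc {D : ℕ} (hD : 1 ≤ D) (r Qm B : ℕ) : ∀ᶠ f in atTop, Spc D r Qm f B := by
  filter_upwards [ev_nu D (2 * D + 2 * r + 8), eventually_ge_atTop (2 * Qm + 2 * r + 6),
    eventually_ge_atTop (8 * B + 2 * r + 7),
    eventually_ge_atTop (2 * (3 * 4 ^ D * 2 ^ (2 * r + 7) * 2 ^ B * phi D B)),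
    eventually_ge_atTop (2 ^ (r + 11)), eventually_ge_atTop (4 * r + 16)] with f h1 h2 h3 h4 h5 h6
  refine ⟨?_, h3, ?_, ?_, ?_, h6⟩
  · calc Qm ^ 2 * 2 ^ (2 * r + 6) ≤ (2 ^ Qm) ^ 2 * 2 ^ (2 * r + 6) := by
          gcongr; exact Nat.lt_two_pow_self.le
      _ = 2 ^ (2 * Qm + (2 * r + 6)) := by rw [pow_add 2 (2 * Qm), mul_comm 2 Qm, pow_mul 2 Qm]
      _ ≤ _ := Nat.pow_le_pow_right (by norm_num) (by omega)
  · refine Nat.lt_two_pow_self.trans_le (Nat.pow_le_pow_right (by norm_num) ?_)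
    omega
  · unfold nu
    have h7 : 2 ^ (r + 11) ≤ phi D f := by
      calc 2 ^ (r + 11) ≤ (f + 2) ^ 1 * 1 := by rw [pow_one]; omega
        _ ≤ _ := by
          unfold phi
          gcongr
          · omega
          · exact Nat.log_pos one_lt_two (by omega)
    have := Nat.log_mono_right (b := 2) h7
    rw [Nat.log_pow one_lt_two] at this
    omega
  · have h7 : phi D f ≤ 2 ^ nu D f := (Nat.lt_pow_succ_log_self one_lt_two _).le
    calc 3 * 4 ^ D * phi D f * 2 ^ (2 * r + 6) ≤ 4 * 4 ^ D * 2 ^ nu D f * 2 ^ (2 * r + 6) := by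
          gcongr; norm_num
      _ = 2 ^ (2 + 2 * D + nu D f + (2 * r + 6)) := by
          rw [pow_add 2 (2 + 2 * D + nu D f), pow_add 2 (2 + 2 * D), pow_add 2 2, pow_mul 2 2]
          norm_num
      _ ≤ _ := by
          apply Nat.pow_le_pow_right (by norm_num)
          nlinarith

/-- Special stages occur infinitely often: otherwise `f` grows linearly while `B` and `w` stay
constant, and since `nu f` is only logarithmic in `f`, all conditions are eventually met. -/
theorem inf_special {D : ℕ} (hD : 1 ≤ D) (r Qm : ℕ) (N : ℕ) : ∃ n ≥ N, Sp D r Qm n (st D r Qm n) := by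
  by_contra hc
  push Not at hc
  -- without further special stages `B` and `w` are constant
  have hconst : ∀ n ≥ N, (st D r Qm n).B = (st D r Qm N).B ∧ (st D r Qm n).w = (st D r Qm N).w := by
    intro n hn
    induction n, hn using Nat.le_induction with
    | base => exact ⟨rfl, rfl⟩
    | succ n hn ih => rw [st_normal (hc n hn)]; exact ih
  set B := (st D r Qm N).B
  set w := (st D r Qm N).w
  have hf : Tendsto (fun n => (st D r Qm n).f) atTop atTop :=
    tendsto_atTop_mono (fun n => (st_bounds D r Qm n).2.2.1) tendsto_id
  obtain ⟨n, hn, e1, e2⟩ := ((eventually_ge_atTop N).and ((hf.eventually (ev_spc hD r Qm B)).and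
    (hf.eventually (ev_nu D (r * (r + 1) + w))))).exists
  refine hc n hn ⟨by rw [(hconst n hn).1]; exact e1, ?_⟩
  have hb := (st_bounds D r Qm n).2.1
  rw [(hconst n hn).2] at hb ⊢
  have h1 : (r * (r + 1) + w) * (nu D (st D r Qm n).f + (r * (r + 1) + w)) ≤ (r + 1) * n + w :=
    e2.trans hb
  have hν : 1 ≤ nu D (st D r Qm n).f := Nat.le_add_left _ _
  have h2 : r * (r + 1) * (nu D (st D r Qm n).f + w) + w ≤ (r + 1) * n + w := by
    refine le_trans ?_ h1
    generalize r * (r + 1) = c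
    generalize nu D (st D r Qm n).f = v at hν
    have := Nat.mul_le_mul_left w hν
    calc c * (v + w) + w ≤ c * (v + w) + w * v + (c * c + w * c + w * w) := by omega
      _ = _ := by ring
  refine Nat.le_of_mul_le_mul_left (?_ : (r + 1) * _ ≤ (r + 1) * n) (by omega)
  linarith

/-- The Cantor set of `θ`, with a Hölder parametrisation whose exponent tends to one as `r` grows. -/
theorem theta_cantor {D : ℕ} (r Qm : ℕ) (hr : 2 ≤ r) {s : ℝ} (hs : 0 < s)
    (hs1 : s * (r ^ 2 + r + 1) ≤ (r - 1) ^ 2) :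
    ∃ g : ℝ → ℝ, ∀ x ∈ Set.Ico (0 : ℝ) 1,
      (∀ n, ∃ a, InvA D r Qm (st D r Qm n).f (st D r Qm n).B a ∧
        a ≤ g x ∧ g x ≤ a + (1 / 2) ^ (st D r Qm n).f) ∧
      (∀ n, Sp D r Qm n (st D r Qm n) → ∃ (Q : ℕ) (P : ℤ),
        2 ^ (st D r Qm n).f ≤ Q ^ 2 * 2 ^ (2 * r + 6) ∧
          phi D (Nat.log 2 Q) * (Q * |Q * g x - P|) ≤ (2 : ℝ) ^ (2 * r + 11)) ∧
      ∀ x' ∈ Set.Ico (0 : ℝ) 1, |x - x'| ≤ 2 ^ r * dist (g x) (g x') ^ s := by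
  classical
  let Inv : ℕ → (Fin 1 → ℝ) → Prop := fun n a =>
    InvA D r Qm (st D r Qm n).f (st D r Qm n).B (a 0) ∧ ∀ m, n = m + 1 → Sp D r Qm m (st D r Qm m) →
      ∃ (Q : ℕ) (P : ℤ), 2 ^ (st D r Qm m).f ≤ Q ^ 2 * 2 ^ (2 * r + 6) ∧
        ∀ x, a 0 ≤ x → x ≤ a 0 + (1 / 2) ^ (st D r Qm n).f →
          phi D (Nat.log 2 Q) * (Q * |Q * x - P|) ≤ (2 : ℝ) ^ (2 * r + 11)
  let M : ℕ → ℕ := fun n => if Sp D r Qm n (st D r Qm n) then 1 else 2 ^ (r - 1)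
  obtain ⟨g, hg⟩ := cantor (D := 1) (fun n => (1 / 2 : ℝ) ^ (st D r Qm n).f) (fun n => by positivity) M
    (fun n => 2 ^ (st D r Qm n).k)
    (fun n => by
      simp only [M]; split_ifs
      · exact le_rfl
      · exact Nat.one_le_two_pow)
    (by simp [st])
    (fun n => by
      by_cases h : Sp D r Qm n (st D r Qm n)
      · simp only [M, if_pos h, st_special h, mul_one]
      · simp only [M, if_neg h, st_normal h, pow_add])
    Inv (fun _ => 0)
    (by
      refine ⟨⟨?_, ?_⟩, fun m hm => by omega⟩
      · rintro x - - q p ⟨hq, -, h, -⟩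
        exfalso
        have : 0 < q ^ 2 * 2 ^ (r + 3) := by positivity
        simp only [st, pow_zero] at h
        omega
      · rintro x - - q p q' p' ⟨hq, -, h, -⟩
        exfalso
        have : 0 < q ^ 2 * 2 ^ (r + 3) := by positivity
        simp only [st, pow_zero] at h
        omega)
    (by
      rintro n a ⟨ha, -⟩
      by_cases h : Sp D r Qm n (st D r Qm n)
      · obtain ⟨a', h1, h2, h3, Q, P, h4, h5⟩ := special_step (by omega) ha h.1
        have hM : M n = 1 := if_pos h
        rw [hM]
        refine ⟨fun _ _ => a', fun j => ⟨⟨?_, ?_⟩, ?_⟩, fun j j' hj => absurd (Subsingleton.elim j j') hj⟩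
        · rw [st_special h]; exact h3
        · rintro m hm -
          obtain rfl : n = m := by omega
          rw [st_special h]
          exact ⟨Q, P, h4, h5⟩
        · intro i
          rw [st_special h, Subsingleton.elim i 0]
          exact ⟨h1, h2⟩
      · obtain ⟨c, h1, h2⟩ := normal_step (by omega) ha
        have hM : M n = 2 ^ (r - 1) := if_neg h
        rw [hM]
        refine ⟨fun j _ => c j, fun j => ⟨⟨?_, ?_⟩, ?_⟩, fun j j' hj => ⟨0, ?_⟩⟩
        · rw [st_normal h]; exact (h1 j).1
        · intro m hm h'
          obtain rfl : n = m := by omega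
          exact absurd h' h
        · intro i
          rw [st_normal h, Subsingleton.elim i 0]
          exact (h1 j).2
        · rw [st_normal h]; exact h2 j j' hj)
    ((tendsto_pow_atTop_nhds_zero_of_lt_one (by norm_num) (by norm_num)).comp
      (tendsto_atTop_mono (fun n => (st_bounds D r Qm n).2.2.1) tendsto_id))
    s (2 ^ r) hs (by positivity)
    (by
      intro n
      obtain ⟨a1, -, -, a4⟩ := st_bounds D r Qm n
      obtain ⟨b1, b2, -, -⟩ := st_bounds D r Qm (n + 1)
      set k := (st D r Qm n).k
      set f := (st D r Qm (n + 1)).f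
      set w := (st D r Qm n).w
      set w' := (st D r Qm (n + 1)).w
      have hr1 : ((r - 1 : ℕ) : ℝ) = (r : ℝ) - 1 := by rw [Nat.cast_sub (by omega)]; simp
      have hr2 : (2 : ℝ) ≤ r := by exact_mod_cast hr
      have A1 : (r : ℝ) * w ≤ n := by exact_mod_cast a1
      have A4 : ((r : ℝ) - 1) * n ≤ k + (r - 1) * w := by rw [← hr1]; exact_mod_cast a4
      have B1 : (r : ℝ) * w' ≤ n + 1 := by exact_mod_cast b1
      have B2 : (f : ℝ) ≤ (r + 1) * (n + 1) + w' := by exact_mod_cast b2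
      have key : s * f ≤ r + k := by
        refine le_of_mul_le_mul_left (?_ : (r : ℝ) * (s * f) ≤ r * (r + k)) (by linarith)
        have e1 : (r : ℝ) * f ≤ (r ^ 2 + r + 1) * (n + 1) := by nlinarith
        have e2 : s * (r * f) ≤ s * ((r ^ 2 + r + 1) * (n + 1)) := by gcongr
        have e3 : s * (r ^ 2 + r + 1) * (n + 1) ≤ (r - 1) ^ 2 * ((n : ℝ) + 1) := by gcongr
        have e4 : ((r : ℝ) - 1) * (r * w) ≤ (r - 1) * n := by
          have : (0 : ℝ) ≤ r - 1 := by linarith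
          gcongr
        have e5 : (r : ℝ) * ((r - 1) * n) ≤ r * (k + (r - 1) * w) := by gcongr
        nlinarith
      push_cast
      rw [← Real.rpow_natCast (1 / 2) f, ← Real.rpow_mul (by norm_num), one_div,
        Real.inv_rpow (by norm_num), ← Real.rpow_neg (by norm_num), ← Real.rpow_natCast 2 r,
        ← Real.rpow_natCast 2 k, ← Real.rpow_add (by norm_num), ← Real.rpow_add (by norm_num)]
      apply Real.one_le_rpow (by norm_num)
      linarith)
  refine ⟨fun x => g x 0, fun x hx => ⟨fun n => ?_, fun n hn => ?_, fun x' hx' => ?_⟩⟩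
  · obtain ⟨a, ⟨ha, -⟩, hi⟩ := (hg x hx).1 n
    exact ⟨a 0, ha, hi 0⟩
  · obtain ⟨a, ⟨-, ha⟩, hi⟩ := (hg x hx).1 (n + 1)
    obtain ⟨Q, P, h1, h2⟩ := ha n rfl hn
    exact ⟨Q, P, h1, h2 _ (hi 0).1 (hi 0).2⟩
  · have := (hg x hx).2 x' hx'
    have hd : dist (g x) (g x') = dist (g x 0) (g x' 0) := by
      refine le_antisymm ((dist_pi_le_iff dist_nonneg).2 fun i => ?_) (dist_le_pi_dist _ _ 0)
      rw [Subsingleton.elim i 0]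
    rwa [hd] at this

/-! ### Diophantine properties of `θ` -/

open Filter

/-- The bound `phi (log₂ Q) Q ‖Q θ‖ ≤ C` holds for infinitely many `Q`. It makes the sequence in the
theorem bounded along a subsequence; otherwise the real-valued `liminf` would have the junk value `0`. -/
def Tight (D : ℕ) (θ C : ℝ) : Prop :=
  ∀ N : ℕ, ∃ Q : ℕ, N ≤ Q ∧ phi D (Nat.log 2 Q) * (Q * distInt (Q * θ)) ≤ C

theorem reduce_frac {q : ℕ} (hq : 1 ≤ q) (p : ℤ) : ∃ (j Q : ℕ) (P : ℤ), 1 ≤ j ∧ 1 ≤ Q ∧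
    IsCoprime (Q : ℤ) P ∧ q = j * Q ∧ p = j * P := by
  obtain ⟨Q, hQ⟩ : ((Int.gcd q p : ℕ) : ℤ) ∣ q := Int.gcd_dvd_left _ _
  have hg : 0 < Int.gcd q p := Int.gcd_pos_of_ne_zero_left _ (by exact_mod_cast (by omega : q ≠ 0))
  have hc := Int.isCoprime_iff_gcd_eq_one.2 (Int.gcd_ediv_gcd_ediv_gcd hg)
  refine ⟨Int.gcd q p, q / Int.gcd q p, p / Int.gcd q p, hg, ?_, ?_, ?_, ?_⟩
  · have : Int.gcd q p ∣ q := by exact_mod_cast Int.gcd_dvd_left (q : ℤ) p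
    exact Nat.div_pos (Nat.le_of_dvd hq this) hg
  · push_cast; exact hc
  · rw [Nat.mul_div_cancel']
    exact_mod_cast Int.gcd_dvd_left (q : ℤ) p
  · rw [Int.mul_ediv_cancel']
    exact Int.gcd_dvd_right _ _

/-- The invariants of all stages, passed to the limit point `θ`: every reduced fraction with
`q |q θ - p| < k1 r` has `q ≥ Qm` and is not too good an approximation, and the denominators of two of them differ
at least by a fourth power. -/
structure ThetaInfo (D r Qm : ℕ) (θ : ℝ) : Prop where
  one : ∀ (q : ℕ) (p : ℤ), 1 ≤ q → IsCoprime (q : ℤ) p → q * |q * θ - p| < k1 r →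
    Qm ≤ q ∧ et D r ≤ phi D (Nat.log 2 q) * (q * |q * θ - p|) ∧
      3 * 4 ^ D * phi D (Nat.log 2 q) ≤ q ^ 2
  two : ∀ (q q' : ℕ) (p p' : ℤ), 1 ≤ q → IsCoprime (q : ℤ) p → q * |q * θ - p| < k1 r →
    1 ≤ q' → IsCoprime (q' : ℤ) p' → q' * |q' * θ - p'| < k1 r → q < q' → q ^ 4 ≤ q'

theorem thetaInfo_of {D r Qm : ℕ} {θ : ℝ} (h : ∀ n, ∃ a, InvA D r Qm (st D r Qm n).f (st D r Qm n).B a ∧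
        a ≤ θ ∧ θ ≤ a + (1 / 2) ^ (st D r Qm n).f) : ThetaInfo D r Qm θ := by
  have hn : ∀ q n : ℕ, q ^ 2 * 2 ^ (r + 3) ≤ n → q ^ 2 * 2 ^ (r + 3) < 2 ^ (st D r Qm n).f := fun q n hn =>
    (hn.trans (st_bounds D r Qm n).2.2.1).trans_lt Nat.lt_two_pow_self
  constructor
  · intro q p h1 h2 h3
    obtain ⟨a, ha, ha1, ha2⟩ := h (q ^ 2 * 2 ^ (r + 3))
    obtain ⟨i1, -, i2⟩ := ha.one θ ha1 ha2 q p ⟨h1, h2, hn _ _ le_rfl, h3⟩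
    exact ⟨i1, i2⟩
  · intro q q' p p' h1 h2 h3 h1' h2' h3' hlt
    obtain ⟨a, ha, ha1, ha2⟩ := h (q' ^ 2 * 2 ^ (r + 3))
    refine ha.two θ ha1 ha2 q p q' p' ⟨h1, h2, hn _ _ ?_, h3⟩ ⟨h1', h2', hn _ _ le_rfl, h3'⟩ hlt
    gcongr

theorem scale_frac {j Q : ℕ} {P : ℤ} (θ : ℝ) :
    ((j * Q : ℕ) : ℝ) * |((j * Q : ℕ) : ℝ) * θ - ((j * P : ℤ) : ℝ)| = (j : ℝ) ^ 2 * (Q * |Q * θ - P|) := by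
  push_cast
  rw [show (j : ℝ) * Q * θ - j * P = j * (Q * θ - P) by ring, abs_mul, abs_of_nonneg (Nat.cast_nonneg j)]
  ring

/-- The invariants give `GoodTheta`: a fraction that approximates well is a multiple `(j Q, j P)` of a
reduced one, and because of `Q' ≥ Q ^ 4` two different reduced denominators cannot contribute to one window
`[2 ^ e, 2 ^ (2 e))`. -/
theorem ThetaInfo.good {D r Bq : ℕ} {θ : ℝ} (h : ThetaInfo D r (2 ^ Bq) θ) :
    GoodTheta D (k1 r) (et D r) Bq θ := by
  have hk : k1 r = 3 * 4 ^ D * et D r := by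
    rw [et]; field_simp
  have hep := et_pos D r
  -- write a fraction with `q * distInt (q * θ) < k1` in lowest terms
  have hred : ∀ q : ℕ, 1 ≤ q → q * distInt (q * θ) < k1 r → ∃ (j Q : ℕ) (P : ℤ), 1 ≤ j ∧ 1 ≤ Q ∧
      IsCoprime (Q : ℤ) P ∧ q = j * Q ∧ q * distInt (q * θ) = (j : ℝ) ^ 2 * (Q * |Q * θ - P|) ∧
      Q * |Q * θ - P| < k1 r := by
    intro q hq hd
    obtain ⟨j, Q, P, hj, hQ, hc, e1, e2⟩ := reduce_frac hq (round (q * θ))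
    have e3 : q * distInt (q * θ) = (j : ℝ) ^ 2 * (Q * |Q * θ - P|) := by
      rw [← scale_frac, ← e1, ← e2]; rfl
    refine ⟨j, Q, P, hj, hQ, hc, e1, e3, ?_⟩
    have hj' : (1 : ℝ) ≤ (j : ℝ) ^ 2 := one_le_pow₀ (by exact_mod_cast hj)
    rw [e3] at hd
    refine lt_of_le_of_lt ?_ hd
    exact le_mul_of_one_le_left (by positivity) hj'
  have hjet : ∀ (j Q : ℕ) (P : ℤ), 1 ≤ Q → IsCoprime (Q : ℤ) P → Q * |Q * θ - P| < k1 r →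
      (j : ℝ) ^ 2 * et D r ≤ phi D (Nat.log 2 Q) * ((j : ℝ) ^ 2 * (Q * |Q * θ - P|)) := by
    intro j Q P hQ hc hlt
    have h1 := (h.one Q P hQ hc hlt).2.1
    calc (j : ℝ) ^ 2 * et D r ≤ (j : ℝ) ^ 2 * (phi D (Nat.log 2 Q) * (Q * |Q * θ - P|)) := by gcongr
      _ = _ := by ring
  constructor
  · intro q hq
    have hφ : (1 : ℝ) ≤ phi D (Nat.log 2 q) := by exact_mod_cast phi_pos _ _
    rcases lt_or_ge (q * distInt (q * θ)) (k1 r) with hd | hd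
    · obtain ⟨j, Q, P, hj, hQ, hc, e1, e2, e3⟩ := hred q hq hd
      have h1 := hjet j Q P hQ hc e3
      rw [e2]
      have hj' : (1 : ℝ) ≤ (j : ℝ) ^ 2 := one_le_pow₀ (by exact_mod_cast hj)
      have hφ' : (phi D (Nat.log 2 Q) : ℝ) ≤ phi D (Nat.log 2 q) := by
        have : Q ≤ q := by rw [e1]; exact Nat.le_mul_of_pos_left _ hj
        exact_mod_cast phi_mono D (Nat.log_mono_right this)
      calc et D r ≤ (j : ℝ) ^ 2 * et D r := le_mul_of_one_le_left hep.le hj'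
        _ ≤ _ := h1
        _ ≤ _ := by gcongr
    · have h1 : et D r ≤ k1 r := by
        rw [hk]
        refine le_mul_of_one_le_left hep.le ?_
        have : (1 : ℝ) ≤ 4 ^ D := one_le_pow₀ (by norm_num)
        linarith
      refine (h1.trans hd).trans (le_mul_of_one_le_left ?_ hφ)
      exact mul_nonneg (Nat.cast_nonneg _) (distInt_nonneg _)
  · intro e e'' he
    -- two different denominators cannot occur in the window
    have huniq : ∀ q : ℕ, 2 ^ e ≤ q → q < 2 ^ e'' → ∀ q' : ℕ, q' < 2 ^ e'' →
        ∀ (j Q : ℕ) (P : ℤ) (j' Q' : ℕ) (P' : ℤ), 1 ≤ j → 1 ≤ Q → IsCoprime (Q : ℤ) P → q = j * Q →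
        (j : ℝ) ^ 2 * (Q * |Q * θ - P|) < k1 r → Q * |Q * θ - P| < k1 r →
        1 ≤ j' → 1 ≤ Q' → IsCoprime (Q' : ℤ) P' → q' = j' * Q' → Q' * |Q' * θ - P'| < k1 r →
        ¬ Q < Q' := by
      intro q hq1 hq2 q' hq2' j Q P j' Q' P' hj hQ hc e1 e2 e3 hj' hQ' hc' e1' e3' hlt
      have h4 := h.two Q Q' P P' hQ hc e3 hQ' hc' e3' hlt
      have h1 := h.one Q P hQ hc e3
      have hQq : Q ≤ q := by rw [e1]; exact Nat.le_mul_of_pos_left _ hj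
      have hQq' : Q' ≤ q' := by rw [e1']; exact Nat.le_mul_of_pos_left _ hj'
      have hjQ : j < Q := by
        have g1 := hjet j Q P hQ hc e3
        have hφ : (0 : ℝ) < phi D (Nat.log 2 Q) := by exact_mod_cast phi_pos _ _
        have g2 : phi D (Nat.log 2 Q) * ((j : ℝ) ^ 2 * (Q * |Q * θ - P|)) < phi D (Nat.log 2 Q) * k1 r := by
          gcongr
        have g3 : (3 : ℝ) * 4 ^ D * phi D (Nat.log 2 Q) ≤ Q ^ 2 := by exact_mod_cast h1.2.2
        have g4 : (j : ℝ) ^ 2 * et D r < Q ^ 2 * et D r := by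
          calc _ < _ := g1.trans_lt g2
            _ = 3 * 4 ^ D * phi D (Nat.log 2 Q) * et D r := by rw [hk]; ring
            _ ≤ _ := by gcongr
        have g5 := lt_of_mul_lt_mul_right g4 hep.le
        have g6 : j ^ 2 < Q ^ 2 := by exact_mod_cast g5
        exact lt_of_pow_lt_pow_left₀ 2 (Nat.zero_le _) g6
      rcases he with he | he
      · have g1 : 2 ^ e < Q * Q := by
          refine lt_of_le_of_lt hq1 ?_
          rw [e1]
          exact Nat.mul_lt_mul_of_pos_right hjQ hQ
        have g2 : 2 ^ (2 * e) < Q ^ 4 := by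
          calc 2 ^ (2 * e) = 2 ^ e * 2 ^ e := by rw [two_mul, pow_add]
            _ < (Q * Q) * (Q * Q) := Nat.mul_lt_mul'' g1 g1
            _ = _ := by ring
        have g3 : 2 ^ e'' ≤ 2 ^ (2 * e) := Nat.pow_le_pow_right (by norm_num) he
        omega
      · have g1 : 2 ^ e'' ≤ 2 ^ Bq := Nat.pow_le_pow_right (by norm_num) he
        have := h1.1
        omega
    have hpos : ∀ q : ℕ, 2 ^ e ≤ q → 1 ≤ q := fun q hq => Nat.one_le_two_pow.trans hq
    by_cases hex : ∃ q : ℕ, 2 ^ e ≤ q ∧ q < 2 ^ e'' ∧ q * distInt (q * θ) < k1 r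
    · obtain ⟨q', hq1', hq2', hd'⟩ := hex
      obtain ⟨j', Q', P', hj', hQ', hc', e1', e2', e3'⟩ := hred q' (hpos _ hq1') hd'
      refine ⟨Q', hQ', fun q hq1 hq2 hd => ?_⟩
      obtain ⟨j, Q, P, hj, hQ, hc, e1, e2, e3⟩ := hred q (hpos _ hq1) hd
      have hQQ : Q = Q' := by
        refine le_antisymm (not_lt.1 ?_) (not_lt.1 ?_)
        · exact huniq q' hq1' hq2' q hq2 j' Q' P' j Q P hj' hQ' hc' e1' (e2' ▸ hd') e3' hj hQ hc e1 e3
        · exact huniq q hq1 hq2 q' hq2' j Q P j' Q' P' hj hQ hc e1 (e2 ▸ hd) e3 hj' hQ' hc' e1' e3'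
      refine ⟨j, hj, hQQ ▸ e1, ?_⟩
      rw [e2]
      refine (hjet j Q P hQ hc e3).trans ?_
      have hQq : Q ≤ q := by rw [e1]; exact Nat.le_mul_of_pos_left _ hj
      have : (phi D (Nat.log 2 Q) : ℝ) ≤ phi D e'' := by
        exact_mod_cast phi_mono D (log2_le (hQq.trans hq2.le))
      gcongr
    · exact ⟨1, le_rfl, fun q hq1 hq2 hd => absurd ⟨q, hq1, hq2, hd⟩ hex⟩

/-- The Cantor set of first coordinates, of dimension at least any prescribed `s < 1`. -/
theorem theta_main {D : ℕ} (hD : 1 ≤ D) {s : ℝ} (hs : 0 < s) (hs1 : s < 1) : ∃ r : ℕ, ∀ Bq : ℕ,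
    ∃ g : ℝ → ℝ, ∀ x ∈ Set.Ico (0 : ℝ) 1, GoodTheta D (k1 r) (et D r) Bq (g x) ∧
      Tight D (g x) (2 ^ (2 * r + 11)) ∧
      ∀ x' ∈ Set.Ico (0 : ℝ) 1, |x - x'| ≤ 2 ^ r * dist (g x) (g x') ^ s := by
  obtain ⟨r, hr⟩ := exists_nat_ge (2 + 4 / (1 - s))
  have hs2 : 0 < 1 - s := by linarith
  have hr2 : (2 : ℝ) ≤ r := le_trans (by have : 0 < 4 / (1 - s) := by positivity
                                         linarith) hr
  have hr3 : 4 ≤ (r : ℝ) * (1 - s) := by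
    rw [← div_le_iff₀ hs2]; linarith
  refine ⟨r, fun Bq => ?_⟩
  obtain ⟨g, hg⟩ := theta_cantor (D := D) r (2 ^ Bq) (by exact_mod_cast hr2) hs (by nlinarith)
  refine ⟨g, fun x hx => ⟨(thetaInfo_of (hg x hx).1).good, fun N => ?_, (hg x hx).2.2⟩⟩
  obtain ⟨n, hn, hsp⟩ := inf_special hD r (2 ^ Bq) (2 * N + (2 * r + 6))
  obtain ⟨Q, P, h1, h2⟩ := (hg x hx).2.1 n hsp
  refine ⟨Q, ?_, le_trans ?_ h2⟩
  · have h3 : 2 ^ (2 * N + (2 * r + 6)) ≤ Q ^ 2 * 2 ^ (2 * r + 6) :=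
      (Nat.pow_le_pow_right (by norm_num) (hn.trans (st_bounds D r _ n).2.2.1)).trans h1
    rw [pow_add 2 (2 * N)] at h3
    have h4 := Nat.le_of_mul_le_mul_right h3 (by positivity)
    rw [mul_comm 2 N, pow_mul] at h4
    exact Nat.lt_two_pow_self.le.trans ((Nat.pow_le_pow_iff_left two_ne_zero).1 h4)
  · gcongr
    exact distInt_le _ _

/-! ### Assembly -/

open Filter

theorem edist_of_holder {X : Type*} [MetricSpace X] {x x' C s : ℝ} {a b : X} (hC : 0 ≤ C) (hs : 0 ≤ s)
    (h : |x - x'| ≤ C * dist a b ^ s) : edist x x' ≤ (C.toNNReal : NNReal) * edist a b ^ s := by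
  rw [edist_dist, edist_dist, ENNReal.ofReal_rpow_of_nonneg dist_nonneg hs, Real.dist_eq]
  refine (ENNReal.ofReal_le_ofReal h).trans ?_
  rw [ENNReal.ofReal_mul hC]
  rfl

/-- Membership in the set of the theorem. The eventual lower bound gives the positivity of the `liminf`
once the sequence is known to be bounded along a subsequence, which follows from `Tight`. -/
theorem mem_target {D : ℕ} {θ C c' : ℝ} {α : Fin D → ℝ} (hT : Tight D θ C) (hc' : 0 < c')
    (h : ∀ᶠ q : ℕ in atTop,
      c' ≤ q * Real.log q ^ D * Real.log (Real.log q) * (distInt (q * θ) * ∏ i, distInt (q * α i))) :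
    0 < atTop.liminf (fun q : ℕ => (q : ℝ) * Real.log q ^ D * Real.log (Real.log q) *
        ∏ i, distInt ((q : ℝ) * (Fin.cons θ α : Fin (D + 1) → ℝ) i)) := by
  simp only [Fin.prod_univ_succ, Fin.cons_zero, Fin.cons_succ]
  refine hc'.trans_le (le_liminf_of_le ?_ h)
  -- the real `liminf` is meaningful only because the sequence is frequently bounded
  refine IsCoboundedUnder.of_frequently_le (a := 2 * C) ?_
  rw [frequently_atTop]
  intro N
  obtain ⟨Q, hQ, hQC⟩ := hT (N + 1)
  refine ⟨Q, by omega, ?_⟩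
  have hQ1 : (1 : ℝ) ≤ Q := by exact_mod_cast (by omega : 1 ≤ Q)
  have hle : ∀ m : ℕ, 1 ≤ m → ∀ y : ℝ, 0 ≤ y → y ≤ m → Real.log y ≤ Nat.log 2 m + 1 := by
    intro m hm y hy0 hy
    have h1 : (m : ℝ) ≤ 2 ^ (Nat.log 2 m + 1) := by
      exact_mod_cast (Nat.lt_pow_succ_log_self one_lt_two m).le
    rcases hy0.eq_or_lt with rfl | hy0
    · rw [Real.log_zero]; positivity
    calc Real.log y ≤ Real.log (2 ^ (Nat.log 2 m + 1)) := Real.log_le_log hy0 (hy.trans h1)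
      _ = (Nat.log 2 m + 1) * Real.log 2 := by rw [Real.log_pow]; push_cast; rfl
      _ ≤ (Nat.log 2 m + 1) * 1 := by
          gcongr
          exact (Real.log_two_lt_d9.trans (by norm_num)).le
      _ = _ := mul_one _
  have hlog0 : 0 ≤ Real.log Q := Real.log_nonneg hQ1
  have hl1 : Real.log Q ≤ (Nat.log 2 Q : ℝ) + 2 := by
    have := hle Q (by omega) Q (by positivity) le_rfl; linarith
  have hl2 : Real.log (Real.log Q) ≤ 2 * (Nat.log 2 (Nat.log 2 Q + 2) : ℝ) := by
    have h1 := hle (Nat.log 2 Q + 2) (by omega) (Real.log Q) hlog0 (by push_cast; exact hl1)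
    have h2 : (1 : ℝ) ≤ Nat.log 2 (Nat.log 2 Q + 2) := by
      exact_mod_cast Nat.log_pos one_lt_two (by omega)
    linarith
  have hprod0 : 0 ≤ ∏ i, distInt ((Q : ℝ) * α i) := Finset.prod_nonneg fun i _ => distInt_nonneg _
  have hprod1 : ∏ i, distInt ((Q : ℝ) * α i) ≤ 1 :=
    Finset.prod_le_one (fun i _ => distInt_nonneg _) fun i _ => (distInt_le_half _).trans (by norm_num)
  have hd0 := distInt_nonneg (Q * θ)
  calc (Q : ℝ) * Real.log Q ^ D * Real.log (Real.log Q) * (distInt (Q * θ) * ∏ i, distInt (Q * α i))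
      = Real.log Q ^ D * Real.log (Real.log Q) * (Q * distInt (Q * θ) * ∏ i, distInt (Q * α i)) := by ring
    _ ≤ Real.log Q ^ D * (2 * (Nat.log 2 (Nat.log 2 Q + 2) : ℝ)) *
          (Q * distInt (Q * θ) * ∏ i, distInt (Q * α i)) := by gcongr
    _ ≤ ((Nat.log 2 Q : ℝ) + 2) ^ D * (2 * (Nat.log 2 (Nat.log 2 Q + 2) : ℝ)) *
          (Q * distInt (Q * θ) * 1) := by gcongr
    _ = 2 * (phi D (Nat.log 2 Q) * (Q * distInt (Q * θ))) := by unfold phi; push_cast; ring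
    _ ≤ 2 * C := by gcongr

/-- Lower bound `s1 + s2` for the dimension, by slicing over the first coordinate. -/
theorem lower_dim {D : ℕ} (hD : 1 ≤ D) {s1 s2 : ℝ} (hs1 : 0 < s1) (hs1' : s1 < 1) (hs2 : 0 < s2)
    (hs2' : s2 < D) : ENNReal.ofReal (s1 + s2) ≤ dimH {α : Fin (D + 1) → ℝ | 0 < atTop.liminf (fun q : ℕ =>
      (q : ℝ) * Real.log q ^ D * Real.log (Real.log q) * ∏ i, distInt ((q : ℝ) * α i))} := by
  obtain ⟨r, hr⟩ := theta_main hD hs1 hs1'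
  obtain ⟨c, E, C, p, hC, hfib⟩ := fibre hD (et_pos D r) hs2 hs2'
  obtain ⟨g1, hg1⟩ := hr (5 * E)
  have hk1 : k1 r ≤ 1 := pow_le_one₀ (by norm_num) (by norm_num)
  have hek : et D r ≤ k1 r := by
    refine div_le_self (k1_pos r).le ?_
    have : (1 : ℝ) ≤ 4 ^ D := one_le_pow₀ (by norm_num)
    linarith
  have hg2 : ∀ x : ℝ, ∃ g : ℝ → Fin D → ℝ, x ∈ Set.Ico (0 : ℝ) 1 → ∀ y ∈ Set.Ico (0 : ℝ) 1,
        (∀ n q : ℕ, 1 ≤ q → q < 2 ^ ee D E n →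
          kap D c E (ee D E n) ≤ val (g1 x) (g y) q ((1 / 2) ^ ee D E n)) ∧
        ∀ y' ∈ Set.Ico (0 : ℝ) 1, |y - y'| ≤ C * dist (g y) (g y') ^ s2 := by
    intro x
    by_cases hx : x ∈ Set.Ico (0 : ℝ) 1
    · obtain ⟨g, hg⟩ := hfib (k1 r) (g1 x) (5 * E) (hg1 x hx).1 hek hk1 le_rfl
      exact ⟨g, fun _ => hg⟩
    · exact ⟨fun _ _ => 0, fun h => absurd h hx⟩
  choose g2 hg2 using hg2
  have hne := slicing {α : Fin (D + 1) → ℝ | 0 < atTop.liminf (fun q : ℕ =>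
      (q : ℝ) * Real.log q ^ D * Real.log (Real.log q) * ∏ i, distInt ((q : ℝ) * α i))}
    (fun x y => Fin.cons (g1 x) (g2 x y)) (fun x hx y hy => by
      obtain ⟨c', hc', h⟩ := fibre_low p (g1 x) (g2 x y) (hg2 x hx y hy).1
      exact mem_target (hg1 x hx).2.1 hc' h)
    s1 s2 hs1 hs2 (2 ^ r : ℝ).toNNReal C.toNNReal
    (fun x hx x' hx' y hy y' hy' => by
      refine edist_of_holder (by positivity) hs1.le (((hg1 x hx).2.2 x' hx').trans ?_)
      gcongr
      exact dist_le_pi_dist (Fin.cons (g1 x) (g2 x y) : Fin (D + 1) → ℝ) (Fin.cons (g1 x') (g2 x' y')) 0)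
    (fun x hx y hy y' hy' => by
      refine edist_of_holder hC hs2.le (((hg2 x hx y hy).2 y' hy').trans ?_)
      gcongr
      refine (dist_pi_le_iff dist_nonneg).2 fun i => ?_
      exact dist_le_pi_dist (Fin.cons (g1 x) (g2 x y) : Fin (D + 1) → ℝ) (Fin.cons (g1 x) (g2 x y')) i.succ)
  rw [ENNReal.ofReal]
  apply le_dimH_of_hausdorffMeasure_ne_zero
  rwa [Real.coe_toNNReal _ (by linarith)]

theorem stmt16 (d : ℕ) (hd : 2 ≤ d) :
    dimH {α : Fin d → ℝ | 0 < Filter.atTop.liminf (fun q : ℕ =>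
      (q : ℝ) * Real.log q ^ (d - 1) * Real.log (Real.log q) *
        ∏ i, distInt ((q : ℝ) * α i))} = d := by
  obtain ⟨D, rfl⟩ : ∃ D, d = D + 1 := ⟨d - 1, by omega⟩
  rw [Nat.add_sub_cancel]
  refine le_antisymm ((dimH_mono (Set.subset_univ _)).trans (Real.dimH_univ_pi_fin (D + 1)).le) ?_
  refine ENNReal.le_of_forall_nnreal_lt fun t ht => ?_
  have ht' : (t : ℝ) < D + 1 := by
    have : t < ((D + 1 : ℕ) : NNReal) := by exact_mod_cast ht
    exact_mod_cast this
  have hD : 1 ≤ D := by omega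
  have hD' : (1 : ℝ) ≤ D := by exact_mod_cast hD
  obtain ⟨δ, h1, h2⟩ := exists_between (lt_min (by linarith : 0 < ((D : ℝ) + 1 - t) / 2)
    (by norm_num : (0 : ℝ) < 1 / 2))
  have h3 := h2.trans_le (min_le_left _ _)
  have h4 := h2.trans_le (min_le_right _ _)
  -- the two exponents are chosen with `t ≤ (1 - δ) + (D - δ)`
  refine le_trans ?_ (lower_dim hD (s1 := 1 - δ) (s2 := D - δ) (by linarith) (by linarith)
    (by linarith) (by linarith))
  rw [← ENNReal.ofReal_coe_nnreal]
  apply ENNReal.ofReal_le_ofReal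
  linarith
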